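/- arXiv:1612.04008 — 6 statements merged into one kernel-verified Lean document; each statement's English description precedes it below -/
import Mathlib

section
/- Let n be a positive integer and s ∈ (0,1) with n > 2s. For every real σ > 0 with σ ≠ n−2s there exists a constant C > 0 such that for all y ∈ ℝ^n: ∫_{ℝ^n} |y−z|^{−(n−2s)} (1+|z|)^{−(2s+σ)} dz ≤ C (1+|y|)^{−min(σ, n−2s)}. -/
open MeasureTheory Metric Set

lemma aux_scale (n : ℕ) (F : EuclideanSpace ℝ (Fin n) → ℝ) (hF : Integrable F)
    (T : ℝ) (hT : 0 < T) :
    Integrable (fun z => F (T⁻¹ • z)) ∧ ∫ z, F (T⁻¹ • z) = T ^ (n : ℝ) * ∫ z, F z := by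
  refine ⟨(integrable_comp_smul_iff volume F (inv_ne_zero hT.ne')).2 hF, ?_⟩
  rw [Measure.integral_comp_inv_smul_of_nonneg volume F hT.le]
  simp

lemma aux_ball (n : ℕ) (hn0 : 0 < n) (p : ℝ) (hp : p < n) :
    Integrable ((ball (0 : EuclideanSpace ℝ (Fin n)) 2).indicator (fun w => ‖w‖ ^ (-p))) := by
  rw [integrable_indicator_iff measurableSet_ball]
  refine integrableOn_ball_of_norm_le_rpow (C := 1) (α := p) ?_ ?_ ?_ ?_
  · simpa using Nat.succ_le_of_lt hn0
  · simpa using hp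
  · refine Filter.Eventually.of_forall fun x => ?_
    rw [Real.norm_of_nonneg (by positivity), one_mul]
  · exact Measurable.aestronglyMeasurable (by fun_prop)

/-- Value of the truncated power after rescaling. -/
lemma aux_ind (n : ℕ) (p T : ℝ) (hT : 0 < T) (w : EuclideanSpace ℝ (Fin n)) (hw : ‖w‖ < 2 * T) :
    (ball (0 : EuclideanSpace ℝ (Fin n)) 2).indicator (fun w => ‖w‖ ^ (-p)) (T⁻¹ • w)
      = T ^ p * ‖w‖ ^ (-p) := by
  have h1 : ‖T⁻¹ • w‖ = T⁻¹ * ‖w‖ := by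
    rw [norm_smul, Real.norm_of_nonneg (by positivity)]
  rw [indicator_of_mem, h1, Real.mul_rpow (by positivity) (by positivity),
    Real.inv_rpow hT.le, Real.rpow_neg hT.le, inv_inv]
  rw [mem_ball_zero_iff, h1, inv_mul_lt_iff₀ hT]
  linarith

lemma aux_core (n : ℕ) (hn0 : 0 < n) (s σ m : ℝ) (hs0 : 0 < s)
    (hns : 2 * s < (n : ℝ)) (hσ : 0 < σ) (hm : m ≤ σ)
    (B : EuclideanSpace ℝ (Fin n) → EuclideanSpace ℝ (Fin n) → ℝ) (CB : ℝ) (hCB : 0 ≤ CB)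
    (hB0 : ∀ y z, 0 ≤ B y z) (hBi : ∀ y, Integrable (B y))
    (hBb : ∀ y, ∫ z, B y z ≤ CB * (1 + ‖y‖) ^ (-m))
    (hB : ∀ y, ∀ᵐ z, (1 + ‖y‖) / 4 ≤ ‖y - z‖ → 1 + ‖z‖ ≤ 2 * (1 + ‖y‖) →
      ‖y - z‖ ^ (-((n : ℝ) - 2 * s)) * (1 + ‖z‖) ^ (-(2 * s + σ)) ≤ B y z) :
    ∃ C > (0 : ℝ), ∀ y : EuclideanSpace ℝ (Fin n),
      (∫ z : EuclideanSpace ℝ (Fin n),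
          ‖y - z‖ ^ (-((n : ℝ) - 2 * s)) * (1 + ‖z‖) ^ (-(2 * s + σ))) ≤
        C * (1 + ‖y‖) ^ (-m) := by
  obtain ⟨a, ha⟩ : ∃ a : ℝ, a = n - 2 * s := ⟨_, rfl⟩
  obtain ⟨b, hb⟩ : ∃ b : ℝ, b = 2 * s + σ := ⟨_, rfl⟩
  simp only [← ha, ← hb] at hB ⊢
  have ha0 : 0 < a := by linarith
  have hb0 : 0 < b := by linarith
  have hab : a + b = n + σ := by linarith
  have hA := aux_ball n hn0 a (by linarith)
  set φ := (ball (0 : EuclideanSpace ℝ (Fin n)) 2).indicator (fun w => ‖w‖ ^ (-a)) with hφ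
  have hφ0 : ∀ w, 0 ≤ φ w := fun w => indicator_nonneg (fun _ _ => by positivity) _
  obtain ⟨ψ, hψ⟩ : ∃ ψ : EuclideanSpace ℝ (Fin n) → ℝ, ψ = fun w => (1 + ‖w‖) ^ (-(n + σ)) :=
    ⟨_, rfl⟩
  have hψ0 : ∀ w, 0 ≤ ψ w := fun w => by rw [hψ]; positivity
  have hC : Integrable ψ := by
    rw [hψ]
    exact integrable_one_add_norm (by simpa using hσ)
  have hIφ : 0 ≤ ∫ w, φ w := integral_nonneg hφ0
  have hIψ : 0 ≤ ∫ w, ψ w := integral_nonneg hψ0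
  obtain ⟨c1, hc1⟩ : ∃ c : ℝ, c = (3 / 4 : ℝ) ^ (-b) := ⟨_, rfl⟩
  obtain ⟨c2, hc2⟩ : ∃ c : ℝ, c = (1 / 2 : ℝ) ^ (-a) * (1 / 2 : ℝ) ^ (-(n + σ)) := ⟨_, rfl⟩
  have hc1p : 0 < c1 := by rw [hc1]; positivity
  have hc2p : 0 < c2 := by rw [hc2]; positivity
  refine ⟨1 + c1 * (∫ w, φ w) + c2 * (∫ w, ψ w) + CB, by positivity, fun y => ?_⟩
  obtain ⟨T, hT⟩ : ∃ T, T = 1 + ‖y‖ := ⟨_, rfl⟩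
  have hT1 : 1 ≤ T := by rw [hT]; linarith [norm_nonneg y]
  have hT0 : 0 < T := by linarith
  obtain ⟨hi1, he1⟩ := aux_scale n φ hA T hT0
  obtain ⟨hi2, he2⟩ := aux_scale n ψ hC T hT0
  have hi1' : Integrable (fun z => φ (T⁻¹ • (y - z))) := hi1.comp_sub_left y
  have he1' : ∫ z, φ (T⁻¹ • (y - z)) = T ^ (n : ℝ) * ∫ z, φ z := by
    rw [← he1]
    exact integral_sub_left_eq_self (fun z => φ (T⁻¹ • z)) volume y
  have hG : Integrable (fun z => T ^ (-(n + σ)) * c1 * φ (T⁻¹ • (y - z))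
      + T ^ (-(n + σ)) * c2 * ψ (T⁻¹ • z) + B y z) :=
    ((hi1'.const_mul _).add (hi2.const_mul _)).add (hBi y)
  have key : ∀ᵐ z, ‖y - z‖ ^ (-a) * (1 + ‖z‖) ^ (-b) ≤ T ^ (-(n + σ)) * c1 * φ (T⁻¹ • (y - z))
      + T ^ (-(n + σ)) * c2 * ψ (T⁻¹ • z) + B y z := by
    filter_upwards [hB y] with z hz
    rw [← hT] at hz
    have n1 : 0 ≤ T ^ (-(n + σ)) * c1 * φ (T⁻¹ • (y - z)) :=
      mul_nonneg (by positivity) (hφ0 _)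
    have n2 : 0 ≤ T ^ (-(n + σ)) * c2 * ψ (T⁻¹ • z) := mul_nonneg (by positivity) (hψ0 _)
    have n3 := hB0 y z
    have hv := norm_nonneg z
    have hu := norm_nonneg (y - z)
    have t1 : ‖y‖ ≤ ‖y - z‖ + ‖z‖ := by
      simpa using norm_add_le (y - z) z
    have t2 : ‖z‖ ≤ ‖y‖ + ‖y - z‖ := by
      simpa using norm_sub_le y (y - z)
    rcases lt_or_ge ‖y - z‖ (T / 4) with h | h
    · have e1 : φ (T⁻¹ • (y - z)) = T ^ a * ‖y - z‖ ^ (-a) :=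
        aux_ind n a T hT0 (y - z) (by linarith)
      have e2 : (1 + ‖z‖) ^ (-b) ≤ (3 / 4 * T) ^ (-b) :=
        Real.rpow_le_rpow_of_nonpos (by positivity) (by linarith) (by linarith)
      rw [Real.mul_rpow (by norm_num) hT0.le, ← hc1] at e2
      have e3 : T ^ (-(n + σ)) * c1 * φ (T⁻¹ • (y - z)) = ‖y - z‖ ^ (-a) * (c1 * T ^ (-b)) := by
        have : T ^ (-b) = T ^ (-(n + σ)) * T ^ a := by
          rw [← Real.rpow_add hT0]; congr 1; linarith
        rw [e1, this]; ring
      have := mul_le_mul_of_nonneg_left e2 (Real.rpow_nonneg hu (-a))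
      linarith
    · rcases le_or_gt (1 + ‖z‖) (2 * T) with h' | h'
      · have := hz h h'
        linarith
      · have e1 : ‖y - z‖ ^ (-a) ≤ (1 / 2 * (1 + ‖z‖)) ^ (-a) :=
          Real.rpow_le_rpow_of_nonpos (by positivity) (by linarith) (by linarith)
        rw [Real.mul_rpow (by norm_num) (by positivity)] at e1
        have e2 : (1 + ‖z‖) ^ (-(n + σ)) ≤ (1 / 2 * (T * (1 + T⁻¹ * ‖z‖))) ^ (-(n + σ)) := by
          refine Real.rpow_le_rpow_of_nonpos (by positivity) ?_ (by rw [← hab]; linarith)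
          have : T * (1 + T⁻¹ * ‖z‖) = T + ‖z‖ := by field_simp
          rw [this]; linarith
        rw [Real.mul_rpow (by norm_num) (by positivity),
          Real.mul_rpow (by positivity) (by positivity)] at e2
        have e3 : ψ (T⁻¹ • z) = (1 + T⁻¹ * ‖z‖) ^ (-(n + σ)) := by
          rw [hψ]
          simp only [norm_smul, Real.norm_of_nonneg (inv_nonneg.2 hT0.le)]
        have e4 : (1 + ‖z‖) ^ (-(n + σ)) = (1 + ‖z‖) ^ (-a) * (1 + ‖z‖) ^ (-b) := by
          rw [← Real.rpow_add (by positivity)]; congr 1; linarith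
        have : ‖y - z‖ ^ (-a) * (1 + ‖z‖) ^ (-b) ≤ T ^ (-(n + σ)) * c2 * ψ (T⁻¹ • z) := by
          calc _ ≤ ((1 / 2) ^ (-a) * (1 + ‖z‖) ^ (-a)) * (1 + ‖z‖) ^ (-b) :=
                mul_le_mul_of_nonneg_right e1 (by positivity)
            _ = (1 / 2) ^ (-a) * (1 + ‖z‖) ^ (-(n + σ)) := by rw [e4]; ring
            _ ≤ (1 / 2) ^ (-a) * _ := mul_le_mul_of_nonneg_left e2 (by positivity)
            _ = _ := by rw [e3, hc2]; ring
        linarith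
  have hle := integral_mono_of_nonneg
    (Filter.Eventually.of_forall fun z => by positivity) hG key
  refine hle.trans ?_
  have hG2 : Integrable (fun z => T ^ (-(n + σ)) * c1 * φ (T⁻¹ • (y - z))
      + T ^ (-(n + σ)) * c2 * ψ (T⁻¹ • z)) := (hi1'.const_mul _).add (hi2.const_mul _)
  rw [integral_add hG2 (hBi y),
    integral_add (hi1'.const_mul _) (hi2.const_mul _), integral_const_mul, integral_const_mul,
    he1', he2]
  have hb' := hBb y
  rw [← hT] at hb' ⊢
  have hTT : T ^ (-(n + σ)) * T ^ (n : ℝ) = T ^ (-σ) := by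
    rw [← Real.rpow_add hT0]; congr 1; ring
  have hTm : T ^ (-σ) ≤ T ^ (-m) := Real.rpow_le_rpow_of_exponent_le hT1 (by linarith)
  have hTp : 0 ≤ T ^ (-m) := by positivity
  have q1 : T ^ (-(n + σ)) * c1 * (T ^ (n : ℝ) * ∫ z, φ z) = c1 * (∫ z, φ z) * T ^ (-σ) := by
    rw [← hTT]; ring
  have q2 : T ^ (-(n + σ)) * c2 * (T ^ (n : ℝ) * ∫ z, ψ z) = c2 * (∫ z, ψ z) * T ^ (-σ) := by
    rw [← hTT]; ring
  rw [q1, q2]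
  have q3 := mul_le_mul_of_nonneg_left hTm (mul_nonneg hc1p.le hIφ)
  have q4 := mul_le_mul_of_nonneg_left hTm (mul_nonneg hc2p.le hIψ)
  linarith

theorem stmt_1 (n : ℕ) (hn0 : 0 < n) (s σ : ℝ) (hs0 : 0 < s) (hs1 : s < 1)
    (hns : 2 * s < (n : ℝ)) (hσ : 0 < σ) (hσne : σ ≠ (n : ℝ) - 2 * s) :
    ∃ C > (0 : ℝ), ∀ y : EuclideanSpace ℝ (Fin n),
      (∫ z : EuclideanSpace ℝ (Fin n),
          ‖y - z‖ ^ (-((n : ℝ) - 2 * s)) * (1 + ‖z‖) ^ (-(2 * s + σ))) ≤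
        C * (1 + ‖y‖) ^ (-(min σ ((n : ℝ) - 2 * s))) := by
  have hu : ∀ y z : EuclideanSpace ℝ (Fin n), (1 + ‖y‖) / 4 ≤ ‖y - z‖ →
      ‖y - z‖ ^ (-((n : ℝ) - 2 * s)) ≤
        (1 / 4) ^ (-((n : ℝ) - 2 * s)) * (1 + ‖y‖) ^ (-((n : ℝ) - 2 * s)) := by
    intro y z h
    rw [← Real.mul_rpow (by norm_num) (by positivity)]
    exact Real.rpow_le_rpow_of_nonpos (by positivity) (by linarith) (by linarith)
  rcases lt_or_gt_of_ne hσne with h | h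
  · rw [min_eq_left h.le]
    have hA := aux_ball n hn0 (2 * s + σ) (by linarith)
    set φ := (ball (0 : EuclideanSpace ℝ (Fin n)) 2).indicator
      (fun w => ‖w‖ ^ (-(2 * s + σ))) with hφ
    have hφ0 : ∀ w, 0 ≤ φ w := fun w => indicator_nonneg (fun _ _ => by positivity) _
    have hIφ : 0 ≤ ∫ w, φ w := integral_nonneg hφ0
    refine aux_core n hn0 s σ σ hs0 hns hσ le_rfl
      (fun y z => (1 / 4) ^ (-((n : ℝ) - 2 * s)) * (1 + ‖y‖) ^ (-(n + σ)) *
        φ ((1 + ‖y‖)⁻¹ • z)) ((1 / 4) ^ (-((n : ℝ) - 2 * s)) * ∫ w, φ w) (by positivity)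
      (fun y z => mul_nonneg (by positivity) (hφ0 _)) ?_ ?_ ?_
    · intro y
      exact (aux_scale n φ hA (1 + ‖y‖) (by positivity)).1.const_mul _
    · intro y
      rw [integral_const_mul, (aux_scale n φ hA (1 + ‖y‖) (by positivity)).2]
      have : (1 + ‖y‖) ^ (-σ) = (1 + ‖y‖) ^ (-(n + σ)) * (1 + ‖y‖) ^ (n : ℝ) := by
        rw [← Real.rpow_add (by positivity)]; congr 1; ring
      rw [this]
      exact le_of_eq (by ring)
    · intro y
      have : Nonempty (Fin n) := ⟨⟨0, hn0⟩⟩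
      have hne : ∀ᵐ z : EuclideanSpace ℝ (Fin n), z ≠ 0 :=
        compl_mem_ae_iff.2 (measure_singleton 0)
      filter_upwards [hne] with z hz h1 h2
      have hzp : 0 < ‖z‖ := norm_pos_iff.2 hz
      have hTp : 0 < 1 + ‖y‖ := by positivity
      have e1 : φ ((1 + ‖y‖)⁻¹ • z) = (1 + ‖y‖) ^ (2 * s + σ) * ‖z‖ ^ (-(2 * s + σ)) :=
        aux_ind n _ _ hTp z (by linarith)
      have e2 : (1 + ‖z‖) ^ (-(2 * s + σ)) ≤ ‖z‖ ^ (-(2 * s + σ)) :=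
        Real.rpow_le_rpow_of_nonpos hzp (by linarith) (by linarith)
      have e3 : (1 + ‖y‖) ^ (-((n : ℝ) - 2 * s)) =
          (1 + ‖y‖) ^ (-(n + σ)) * (1 + ‖y‖) ^ (2 * s + σ) := by
        rw [← Real.rpow_add hTp]; congr 1; ring
      have e4 := mul_le_mul (hu y z h1) e2 (by positivity) (by positivity)
      refine e4.trans (le_of_eq ?_)
      rw [e1, e3]; ring
  · rw [min_eq_right h.le]
    have hI : Integrable (fun z : EuclideanSpace ℝ (Fin n) => (1 + ‖z‖) ^ (-(2 * s + σ))) :=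
      integrable_one_add_norm (by simp; linarith)
    refine aux_core n hn0 s σ _ hs0 hns hσ h.le
      (fun y z => (1 / 4) ^ (-((n : ℝ) - 2 * s)) * (1 + ‖y‖) ^ (-((n : ℝ) - 2 * s)) *
        (1 + ‖z‖) ^ (-(2 * s + σ)))
      ((1 / 4) ^ (-((n : ℝ) - 2 * s)) *
        ∫ z : EuclideanSpace ℝ (Fin n), (1 + ‖z‖) ^ (-(2 * s + σ))) ?_
      (fun y z => by positivity) (fun y => hI.const_mul _) ?_ ?_
    · exact mul_nonneg (by positivity) (integral_nonneg fun z => by positivity)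
    · intro y
      rw [integral_const_mul]
      exact le_of_eq (by ring)
    · intro y
      refine Filter.Eventually.of_forall fun z h1 _ => ?_
      exact mul_le_mul_of_nonneg_right (hu y z h1) (by positivity)
end

section
/- Let n be a positive integer and s ∈ (0,1) with n > 2s. There exists a constant C > 0 such that for all y ∈ ℝ^n: ∫_{ℝ^n} |y−z|^{−(n−2s)} (1+|z|)^{−n} dz ≤ C max(1, log|y|) · (1+|y|)^{−(n−2s)}. -/
open MeasureTheory Set Filter in
lemma aux_near (n : ℕ) (hn0 : 0 < n) (a : ℝ) (han : a < n) (r : ℝ) (hr : 0 < r) :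
    IntegrableOn (fun t : ℝ => t ^ (n - 1) • (Iic r).indicator (fun t => t ^ (-a)) t) (Ioi 0) ∧
    ∫ t in Ioi (0 : ℝ), t ^ (n - 1) • (Iic r).indicator (fun t => t ^ (-a)) t
      = r ^ ((n : ℝ) - a) / ((n : ℝ) - a) := by
  have hcast : ((n - 1 : ℕ) : ℝ) = (n : ℝ) - 1 := by
    rw [Nat.cast_sub hn0]; simp
  have key : EqOn (fun t : ℝ => t ^ (n - 1) • (Iic r).indicator (fun t => t ^ (-a)) t)
      ((Iic r).indicator (fun t : ℝ => t ^ ((n : ℝ) - 1 - a))) (Ioi 0) := by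
    intro t ht
    have ht : 0 < t := ht
    by_cases h : t ≤ r
    · simp only [smul_eq_mul, indicator, mem_Iic, h, if_true]
      rw [← Real.rpow_natCast, ← Real.rpow_add ht, hcast]; congr 1
    · simp [h]
  have hexp : -1 < (n : ℝ) - 1 - a := by linarith
  have hI : IntegrableOn (fun t : ℝ => t ^ ((n : ℝ) - 1 - a)) (Ioc 0 r) := by
    rw [← intervalIntegrable_iff_integrableOn_Ioc_of_le hr.le]
    exact intervalIntegral.intervalIntegrable_rpow' hexp
  constructor
  · rw [integrableOn_congr_fun key measurableSet_Ioi, IntegrableOn,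
      integrable_indicator_iff measurableSet_Iic, IntegrableOn,
      Measure.restrict_restrict measurableSet_Iic, inter_comm, Ioi_inter_Iic]
    exact hI
  · rw [setIntegral_congr_fun measurableSet_Ioi key, setIntegral_indicator measurableSet_Iic,
      Ioi_inter_Iic, ← intervalIntegral.integral_of_le hr.le, integral_rpow (Or.inl hexp)]
    have : (n : ℝ) - 1 - a + 1 = n - a := by ring
    rw [this, Real.zero_rpow (by linarith)]; simp

open MeasureTheory Set Filter in
lemma aux_far (n : ℕ) (hn0 : 0 < n) (a : ℝ) (ha : 0 < a) (R : ℝ) (hR : 0 ≤ R) :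
    IntegrableOn (fun t : ℝ => t ^ (n - 1) •
      ((max (1 + R) (1 + t)) ^ (-a) * (1 + t) ^ (-(n : ℝ)))) (Ioi 0) ∧
    ∫ t in Ioi (0 : ℝ), t ^ (n - 1) • ((max (1 + R) (1 + t)) ^ (-a) * (1 + t) ^ (-(n : ℝ)))
      ≤ (1 + R) ^ (-a) * (Real.log (1 + R) + 1 / a) := by
  have hcast : ((n - 1 : ℕ) : ℝ) = (n : ℝ) - 1 := by
    rw [Nat.cast_sub hn0]; simp
  set F : ℝ → ℝ := fun t : ℝ => t ^ (n - 1) •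
      ((max (1 + R) (1 + t)) ^ (-a) * (1 + t) ^ (-(n : ℝ))) with hF
  have hmeas : Measurable F := by
    simp only [hF, smul_eq_mul]
    fun_prop
  have hnn : ∀ t, 0 < t → 0 ≤ F t := by
    intro t ht
    simp only [hF, smul_eq_mul]
    positivity
  have hbase : ∀ t : ℝ, 0 < t → t ^ (n - 1) * (1 + t) ^ (-(n : ℝ)) ≤ (t + 1) ^ (-1 : ℝ) := by
    intro t ht
    have h1 : t ^ (n - 1) ≤ (1 + t) ^ (n - 1) := by gcongr; linarith
    calc t ^ (n - 1) * (1 + t) ^ (-(n : ℝ)) ≤ (1 + t) ^ (n - 1) * (1 + t) ^ (-(n : ℝ)) := by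
          gcongr
      _ = (t + 1) ^ (-1 : ℝ) := by
          rw [← Real.rpow_natCast, ← Real.rpow_add (by linarith), hcast, add_comm 1 t]
          congr 1; ring
  have hF1 : ∀ t ∈ Ioc 0 R, F t ≤ (1 + R) ^ (-a) * (t + 1)⁻¹ := by
    intro t ht
    have hmax : max (1 + R) (1 + t) = 1 + R := max_eq_left (by linarith [ht.2])
    have := hbase t ht.1
    rw [Real.rpow_neg_one] at this
    simp only [hF, smul_eq_mul, hmax]
    calc _ = (1 + R) ^ (-a) * (t ^ (n - 1) * (1 + t) ^ (-(n : ℝ))) := by ring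
      _ ≤ _ := by gcongr
  have hF2 : ∀ t ∈ Ioi R, F t ≤ (t + 1) ^ (-a - 1) := by
    intro t ht
    have ht : R < t := ht
    have hmax : max (1 + R) (1 + t) = 1 + t := max_eq_right (by linarith)
    have := hbase t (by linarith)
    simp only [hF, smul_eq_mul, hmax]
    have h0 : 0 < t + 1 := by linarith
    calc _ = (t + 1) ^ (-a) * (t ^ (n - 1) * (1 + t) ^ (-(n : ℝ))) := by rw [add_comm 1 t]; ring
      _ ≤ (t + 1) ^ (-a) * (t + 1) ^ (-1 : ℝ) := by gcongr
      _ = _ := by rw [← Real.rpow_add h0]; rfl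
  have hG1 : IntegrableOn (fun t : ℝ => (1 + R) ^ (-a) * (t + 1)⁻¹) (Ioc 0 R) := by
    have : ContinuousOn (fun t : ℝ => (1 + R) ^ (-a) * (t + 1)⁻¹) (Icc 0 R) := by
      refine continuousOn_const.mul (ContinuousOn.inv₀ (by fun_prop) ?_)
      intro t ht
      have := ht.1
      positivity
    exact this.integrableOn_Icc.mono_set Ioc_subset_Icc_self
  have hG2 : IntegrableOn (fun t : ℝ => (t + 1) ^ (-a - 1)) (Ioi R) :=
    integrableOn_add_rpow_Ioi_of_lt (by linarith) (by linarith)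
  have hI1 : IntegrableOn F (Ioc 0 R) := by
    refine Integrable.mono' hG1 hmeas.aestronglyMeasurable ?_
    refine (ae_restrict_iff' measurableSet_Ioc).2 (Eventually.of_forall fun t ht => ?_)
    rw [Real.norm_of_nonneg (hnn t ht.1)]
    exact hF1 t ht
  have hI2 : IntegrableOn F (Ioi R) := by
    refine Integrable.mono' hG2 hmeas.aestronglyMeasurable ?_
    refine (ae_restrict_iff' measurableSet_Ioi).2 (Eventually.of_forall fun t ht => ?_)
    rw [Real.norm_of_nonneg (hnn t (lt_of_le_of_lt hR ht))]
    exact hF2 t ht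
  have hU : Ioi (0 : ℝ) = Ioc 0 R ∪ Ioi R := (Ioc_union_Ioi_eq_Ioi hR).symm
  refine ⟨by rw [hU]; exact hI1.union hI2, ?_⟩
  rw [hU, setIntegral_union (Ioc_disjoint_Ioi le_rfl) measurableSet_Ioi hI1 hI2]
  have e1 : ∫ t in Ioc 0 R, F t ≤ (1 + R) ^ (-a) * Real.log (1 + R) := by
    refine (setIntegral_mono_on hI1 hG1 measurableSet_Ioc hF1).trans_eq ?_
    rw [integral_const_mul, ← intervalIntegral.integral_of_le hR,
      intervalIntegral.integral_comp_add_right (fun x => x⁻¹),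
      integral_inv_of_pos (by norm_num) (by linarith)]
    simp [add_comm]
  have e2 : ∫ t in Ioi R, F t ≤ (1 + R) ^ (-a) * (1 / a) := by
    refine (setIntegral_mono_on hI2 hG2 measurableSet_Ioi hF2).trans_eq ?_
    have hd : ∀ x ∈ Ici R, HasDerivAt (fun t : ℝ => (t + 1) ^ (-a) / (-a))
        ((x + 1) ^ (-a - 1)) x := by
      intro x hx
      have hx : R ≤ x := hx
      have := (((hasDerivAt_id x).add_const 1).rpow_const (p := -a)
        (Or.inl (by simp; linarith))).div_const (-a)
      convert! this using 1
      simp; field_simp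
    have ht : Tendsto (fun t : ℝ => (t + 1) ^ (-a) / (-a)) atTop (nhds (0 / (-a))) := by
      refine Tendsto.div_const ?_ _
      exact (tendsto_rpow_neg_atTop ha).comp (tendsto_atTop_add_const_right _ _ tendsto_id)
    rw [integral_Ioi_of_hasDerivAt_of_tendsto' hd hG2 ht, add_comm R 1]
    field_simp; simp
  linarith [mul_add ((1 + R) ^ (-a)) (Real.log (1 + R)) (1 / a)]

lemma aux_log (R : ℝ) (hR : 0 ≤ R) : Real.log (1 + R) ≤ 2 * max 1 (Real.log R) := by
  have h2 : Real.log 2 ≤ 1 := by linarith [Real.log_two_lt_d9]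
  rcases le_total R 1 with h | h
  · have : Real.log (1 + R) ≤ Real.log 2 := Real.log_le_log (by linarith) (by linarith)
    linarith [le_max_left 1 (Real.log R)]
  · have : Real.log (1 + R) ≤ Real.log (2 * R) := Real.log_le_log (by linarith) (by linarith)
    rw [Real.log_mul (by norm_num) (by linarith)] at this
    linarith [le_max_left 1 (Real.log R), le_max_right 1 (Real.log R)]

open MeasureTheory Set in
theorem stmt_2 (n : ℕ) (hn0 : 0 < n) (s : ℝ) (hs0 : 0 < s) (hs1 : s < 1)
    (hns : 2 * s < (n : ℝ)) :
    ∃ C > (0 : ℝ), ∀ y : EuclideanSpace ℝ (Fin n),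
      (∫ z : EuclideanSpace ℝ (Fin n),
          ‖y - z‖ ^ (-((n : ℝ) - 2 * s)) * (1 + ‖z‖) ^ (-(n : ℝ))) ≤
        C * max 1 (Real.log ‖y‖) * (1 + ‖y‖) ^ (-((n : ℝ) - 2 * s)) := by
  obtain ⟨a, rfl⟩ : ∃ a : ℝ, s = ((n : ℝ) - a) / 2 := ⟨n - 2 * s, by ring⟩
  have hsimp : (n : ℝ) - 2 * (((n : ℝ) - a) / 2) = a := by ring
  rw [hsimp]
  have ha : 0 < a := by linarith
  have han : a < n := by linarith
  have hna : 0 < (n : ℝ) - a := by linarith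
  have : Nonempty (Fin n) := ⟨⟨0, hn0⟩⟩
  set E := EuclideanSpace ℝ (Fin n)
  have hdim : Module.finrank ℝ E = n := by simp [E]
  set V : ℝ := (n : ℝ) * (volume : Measure E).real (Metric.ball 0 1) with hV
  have hV0 : 0 ≤ V := by positivity
  refine ⟨V * 2 ^ a / (n - a) + 3 ^ a * V * (2 + 1 / a) + 1, by positivity, fun y => ?_⟩
  set R := ‖y‖ with hRdef
  have hR : 0 ≤ R := norm_nonneg y
  set T := 1 + R with hT
  have hT0 : 0 < T := by positivity
  obtain ⟨hi1, he1⟩ := aux_near n hn0 a han (T / 2) (by positivity)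
  obtain ⟨hi2, he2⟩ := aux_far n hn0 a ha R hR
  set k : ℝ → ℝ := (Iic (T / 2)).indicator (fun t => t ^ (-a)) with hk
  set g : ℝ → ℝ := fun t => (max (1 + R) (1 + t)) ^ (-a) * (1 + t) ^ (-(n : ℝ)) with hg
  have hk1 : Integrable (fun z : E => k ‖z‖) := by
    rw [integrable_fun_norm_addHaar, hdim]; exact hi1
  have hg1 : Integrable (fun z : E => g ‖z‖) := by
    rw [integrable_fun_norm_addHaar, hdim]; exact hi2
  have hk2 : ∫ z : E, k ‖z‖ = V * ((T / 2) ^ ((n : ℝ) - a) / ((n : ℝ) - a)) := by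
    rw [integral_fun_norm_addHaar, hdim, he1, hV]; simp [mul_assoc]
  have hg2 : ∫ z : E, g ‖z‖ ≤ V * (T ^ (-a) * (Real.log T + 1 / a)) := by
    rw [integral_fun_norm_addHaar, hdim, hV, nsmul_eq_mul, smul_eq_mul, ← mul_assoc]
    gcongr
  have hk1' : Integrable (fun z : E => k ‖y - z‖) := hk1.comp_sub_left y
  have hk2' : ∫ z : E, k ‖y - z‖ = ∫ z : E, k ‖z‖ :=
    integral_sub_left_eq_self (fun z : E => k ‖z‖) volume y
  have hk0 : ∀ t, 0 ≤ t → 0 ≤ k t := fun t ht => by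
    simp only [hk, indicator]; split_ifs <;> positivity
  have hg0 : ∀ t, 0 ≤ t → 0 ≤ g t := fun t ht => by
    simp only [hg]; positivity
  have hpt : ∀ z : E, ‖y - z‖ ^ (-a) * (1 + ‖z‖) ^ (-(n : ℝ)) ≤
      (T / 2) ^ (-(n : ℝ)) * k ‖y - z‖ + 3 ^ a * g ‖z‖ := by
    intro z
    have hz := norm_nonneg z
    have htri : R ≤ ‖y - z‖ + ‖z‖ := by
      have := norm_add_le (y - z) z; simpa using this
    have htri2 : ‖z‖ ≤ ‖y - z‖ + R := by
      have := norm_sub_le y (y - z); simp at this; linarith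
    by_cases h : ‖y - z‖ ≤ T / 2
    · have h1 : (1 + ‖z‖) ^ (-(n : ℝ)) ≤ (T / 2) ^ (-(n : ℝ)) :=
        Real.rpow_le_rpow_of_nonpos (by positivity) (by linarith) (by simp)
      have h2 : k ‖y - z‖ = ‖y - z‖ ^ (-a) := by simp [hk, h]
      rw [h2, mul_comm]
      have := hg0 ‖z‖ hz
      have h3 : 0 ≤ 3 ^ a * g ‖z‖ := by positivity
      have h4 : (1 + ‖z‖) ^ (-(n : ℝ)) * ‖y - z‖ ^ (-a)
        ≤ (T / 2) ^ (-(n : ℝ)) * ‖y - z‖ ^ (-a) := by gcongr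
      linarith
    · push Not at h
      have h0 : 0 < max (1 + R) (1 + ‖z‖) := by positivity
      have h1 : max (1 + R) (1 + ‖z‖) / 3 ≤ ‖y - z‖ := by
        have : max (1 + R) (1 + ‖z‖) ≤ 3 * ‖y - z‖ := max_le (by linarith) (by linarith)
        linarith
      have h2 : ‖y - z‖ ^ (-a) ≤ 3 ^ a * (max (1 + R) (1 + ‖z‖)) ^ (-a) := by
        refine (Real.rpow_le_rpow_of_nonpos (by positivity) h1 (by linarith)).trans_eq ?_
        rw [Real.div_rpow h0.le (by norm_num), Real.rpow_neg (by norm_num : (0 : ℝ) ≤ 3)]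
        field_simp
      have h3 := hk0 ‖y - z‖ (norm_nonneg _)
      have h4 : 0 ≤ (T / 2) ^ (-(n : ℝ)) * k ‖y - z‖ := by positivity
      have h5 : ‖y - z‖ ^ (-a) * (1 + ‖z‖) ^ (-(n : ℝ)) ≤
          (3 ^ a * (max (1 + R) (1 + ‖z‖)) ^ (-a)) * (1 + ‖z‖) ^ (-(n : ℝ)) := by gcongr
      simp only [hg]
      linarith
  have hmono : ∫ z : E, ‖y - z‖ ^ (-a) * (1 + ‖z‖) ^ (-(n : ℝ)) ≤
      ∫ z : E, ((T / 2) ^ (-(n : ℝ)) * k ‖y - z‖ + 3 ^ a * g ‖z‖) := by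
    refine integral_mono_of_nonneg (Filter.Eventually.of_forall fun z => ?_)
      ((hk1'.const_mul _).add (hg1.const_mul _)) (Filter.Eventually.of_forall hpt)
    simp only [Pi.zero_apply]; positivity
  rw [integral_add (hk1'.const_mul _) (hg1.const_mul _), integral_const_mul,
    integral_const_mul, hk2', hk2] at hmono
  have hA : (T / 2) ^ (-(n : ℝ)) * (V * ((T / 2) ^ ((n : ℝ) - a) / ((n : ℝ) - a)))
      = V * 2 ^ a / (n - a) * T ^ (-a) := by
    have : (T / 2) ^ (-(n : ℝ)) * (T / 2) ^ ((n : ℝ) - a) = 2 ^ a * T ^ (-a) := by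
      rw [← Real.rpow_add (by positivity)]
      have : -(n : ℝ) + (n - a) = -a := by ring
      rw [this, Real.div_rpow hT0.le (by norm_num), Real.rpow_neg (by norm_num : (0 : ℝ) ≤ 2)]
      field_simp
    calc _ = V / (n - a) * ((T / 2) ^ (-(n : ℝ)) * (T / 2) ^ ((n : ℝ) - a)) := by ring
      _ = _ := by rw [this]; ring
  rw [hA] at hmono
  set L := max 1 (Real.log R) with hL
  have hL1 : 1 ≤ L := le_max_left _ _
  have hlog : Real.log T + 1 / a ≤ (2 + 1 / a) * L := by
    have h1 := aux_log R hR
    have h2 : 1 / a ≤ 1 / a * L := le_mul_of_one_le_right (by positivity) hL1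
    linarith
  have hP : 0 < T ^ (-a) := by positivity
  have hB : 3 ^ a * ∫ z : E, g ‖z‖ ≤ 3 ^ a * (V * (T ^ (-a) * ((2 + 1 / a) * L))) := by
    gcongr
    exact hg2.trans (by gcongr)
  have hC : V * 2 ^ a / (n - a) * T ^ (-a) ≤ V * 2 ^ a / (n - a) * T ^ (-a) * L :=
    le_mul_of_one_le_right (by positivity) hL1
  have hD : 0 ≤ L * T ^ (-a) := by positivity
  calc _ ≤ _ := hmono
    _ ≤ V * 2 ^ a / (n - a) * T ^ (-a) * L
        + 3 ^ a * (V * (T ^ (-a) * ((2 + 1 / a) * L))) + L * T ^ (-a) := by linarith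
    _ = _ := by ring
end

section
/- For every θ > k there exists a constant C = C(θ, k, n) > 1, independent of m and l, such that for all i and all y ∈ B_i ∩ Ω_i: (1+|y−X^i|)^{−θ} ≤ Σ_{j=1}^{(m+1)^k} (1+|y−X^j|)^{−θ} ≤ C (1+|y−X^i|)^{−θ}. -/
/-- `X` enumerates the lattice points `{d·q : q ∈ ([0,m+1)^k × {0}) ∩ ℤ^n}` (with spacing `d = λl`). -/
def latticeEnum (n k m : ℕ) (d : ℝ)
    (X : Fin ((m + 1) ^ k) → EuclideanSpace ℝ (Fin n)) : Prop :=
  Function.Injective X ∧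
  (∀ i, ∃ q : Fin n → ℤ,
      (∀ j : Fin n, (j : ℕ) < k → 0 ≤ q j ∧ q j ≤ (m : ℤ)) ∧
      (∀ j : Fin n, k ≤ (j : ℕ) → q j = 0) ∧
      (∀ j : Fin n, X i j = d * (q j : ℝ))) ∧
  (∀ q : Fin n → ℤ,
      (∀ j : Fin n, (j : ℕ) < k → 0 ≤ q j ∧ q j ≤ (m : ℤ)) →
      (∀ j : Fin n, k ≤ (j : ℕ) → q j = 0) →
      ∃ i, ∀ j : Fin n, X i j = d * (q j : ℝ))

open Module in
lemma aux_summable0 (k : ℕ) (θ : ℝ) (hθ : (k : ℝ) < θ) :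
    Summable fun v : Fin k → ℤ => ‖v‖ ^ (-θ) := by
  let b := Pi.basisFun ℝ (Fin k)
  let L := Submodule.span ℤ (Set.range b)
  have hr : finrank ℤ L = k := by
    rw [ZLattice.rank ℝ L]; simp
  have h := ZLattice.summable_norm_rpow L (-θ) (by rw [hr]; linarith)
  let f : (Fin k → ℤ) → L := fun v => ⟨fun i => (v i : ℝ), by
    rw [b.mem_span_iff_repr_mem ℤ]
    intro i
    exact ⟨v i, by simp [b]⟩⟩
  have hf : Function.Injective f := by
    intro v w hvw
    have h1 := congrArg Subtype.val hvw
    funext i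
    have h2 : ((v i : ℤ) : ℝ) = ((w i : ℤ) : ℝ) := congrFun h1 i
    exact_mod_cast h2
  have h3 := h.comp_injective hf
  refine h3.congr ?_
  intro v
  have : ‖f v‖ = ‖v‖ := by
    change ‖(fun i => (v i : ℝ))‖ = ‖v‖
    have h4 : ∀ i, ‖((v i : ℤ) : ℝ)‖₊ = ‖v i‖₊ := fun i => NNReal.eq (Int.norm_cast_real (v i))
    simp [Pi.norm_def, h4]
  change ‖f v‖ ^ (-θ) = _
  rw [this]

lemma aux_summable (k : ℕ) (θ : ℝ) (hθ : (k : ℝ) < θ) :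
    Summable fun v : Fin k → ℤ => (1 + ‖v‖) ^ (-θ) := by
  have h0 : 0 < θ := lt_of_le_of_lt (Nat.cast_nonneg k) hθ
  refine Summable.of_norm_bounded_eventually (aux_summable0 k θ hθ) ?_
  refine (Set.finite_singleton (0 : Fin k → ℤ)).subset ?_
  intro v hv
  by_contra hne
  apply hv
  have hpos : 0 < ‖v‖ := norm_pos_iff.mpr (by simpa using hne)
  change ‖(1 + ‖v‖) ^ (-θ)‖ ≤ ‖v‖ ^ (-θ)
  rw [Real.norm_of_nonneg (by positivity)]
  exact Real.rpow_le_rpow_of_nonpos hpos (by linarith) (by linarith)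

theorem stmt_3 (n k : ℕ) (s β θ : ℝ) (hn0 : 0 < n) (hs0 : 0 < s) (hs1 : s < 1)
    (hn : 2 * s + 2 < (n : ℝ)) (hk1 : 1 ≤ k) (hk2 : (k : ℝ) < ((n : ℝ) - 2 * s) / 2)
    (hβ1 : (n : ℝ) - 2 * s < β) (hβ2 : β < (n : ℝ)) (hθ : (k : ℝ) < θ) :
    ∃ C > (1 : ℝ), ∀ m l : ℕ, 1 ≤ m → 1 ≤ l →
      ∀ lam : ℝ, lam = (l : ℝ) ^ (((n : ℝ) - 2 * s) / (β - (n : ℝ) + 2 * s)) →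
      ∀ X : Fin ((m + 1) ^ k) → EuclideanSpace ℝ (Fin n), latticeEnum n k m (lam * l) X →
      ∀ i, ∀ y : EuclideanSpace ℝ (Fin n),
        ‖y - X i‖ < lam * l → (∀ j, ‖y - X i‖ ≤ ‖y - X j‖) →
        (1 + ‖y - X i‖) ^ (-θ) ≤ (∑ j, (1 + ‖y - X j‖) ^ (-θ)) ∧
        (∑ j, (1 + ‖y - X j‖) ^ (-θ)) ≤ C * (1 + ‖y - X i‖) ^ (-θ) := by
  have hθ0 : 0 < θ := lt_of_le_of_lt (Nat.cast_nonneg k) hθ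
  have hkn : k ≤ n := by
    have h1 : (k : ℝ) ≤ n := by linarith
    exact_mod_cast h1
  have hS := aux_summable k θ hθ
  set S := ∑' v : Fin k → ℤ, (1 + ‖v‖) ^ (-θ) with hSdef
  have hS0 : 0 ≤ S := tsum_nonneg fun v => by positivity
  refine ⟨5 ^ θ * S + 2, by have : 0 ≤ (5 : ℝ) ^ θ * S := by positivity
                            linarith, ?_⟩
  intro m l hm hl lam hlam X hX i y hy hmin
  have hl1 : (1 : ℝ) ≤ l := by exact_mod_cast hl
  have hlam1 : 1 ≤ lam := by
    rw [hlam]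
    exact Real.one_le_rpow hl1 (div_nonneg (by linarith) (by linarith))
  set d := lam * l with hd
  have hd1 : 1 ≤ d := one_le_mul_of_one_le_of_one_le hlam1 hl1
  obtain ⟨hinj, hq, -⟩ := hX
  choose q hq1 hq2 hq3 using hq
  set r := ‖y - X i‖ with hr
  have hr0 : 0 ≤ r := norm_nonneg _
  refine ⟨Finset.single_le_sum (f := fun j => (1 + ‖y - X j‖) ^ (-θ))
    (fun j _ => by positivity) (Finset.mem_univ i), ?_⟩
  let g : Fin ((m + 1) ^ k) → (Fin k → ℤ) :=
    fun j t => q j (Fin.castLE hkn t) - q i (Fin.castLE hkn t)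
  have hg : Function.Injective g := by
    intro a b hab
    apply hinj
    ext t
    rw [hq3, hq3]
    by_cases ht : (t : ℕ) < k
    · have h1 := congrFun hab ⟨t, ht⟩
      simp only [g, sub_left_inj] at h1
      have h2 : Fin.castLE hkn ⟨t, ht⟩ = t := rfl
      rw [h2] at h1
      rw [h1]
    · rw [hq2 a t (by omega), hq2 b t (by omega)]
  have hdist : ∀ j, d * ‖g j‖ ≤ ‖X j - X i‖ := by
    intro j
    have h1 : ‖g j‖ ≤ ‖X j - X i‖ / d := by
      rw [pi_norm_le_iff_of_nonneg (by positivity)]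
      intro t
      rw [le_div_iff₀ (by linarith)]
      have h2 := PiLp.norm_apply_le (X j - X i) (Fin.castLE hkn t)
      have h3 : (X j - X i) (Fin.castLE hkn t) = d * ((g j t : ℤ) : ℝ) := by
        simp [hq3, g]; ring
      rw [h3, norm_mul, Real.norm_of_nonneg (by linarith : 0 ≤ d), Int.norm_cast_real] at h2
      linarith
    rw [le_div_iff₀ (by linarith)] at h1
    linarith
  have hterm : ∀ j, (1 + ‖y - X j‖) ^ (-θ) ≤ 5 ^ θ * (1 + r) ^ (-θ) * (1 + ‖g j‖) ^ (-θ) := by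
    intro j
    have h1 := hdist j
    have h2 : ‖X j - X i‖ ≤ ‖y - X j‖ + r := by
      have := norm_sub_le (y - X i) (y - X j)
      rw [sub_sub_sub_cancel_left] at this
      linarith
    have h3 := hmin j
    have hg0 : 0 ≤ ‖g j‖ := norm_nonneg _
    have h4 : (1 + r) * (1 + ‖g j‖) / 5 ≤ 1 + ‖y - X j‖ := by
      have h5 : r * ‖g j‖ ≤ d * ‖g j‖ := by gcongr
      have h6 : 1 * ‖g j‖ ≤ d * ‖g j‖ := by gcongr
      nlinarith
    have h7 := Real.rpow_le_rpow_of_nonpos (by positivity) h4 (by linarith : -θ ≤ 0)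
    refine h7.trans (le_of_eq ?_)
    rw [Real.div_rpow (by positivity) (by positivity), Real.mul_rpow (by positivity) (by positivity),
      Real.rpow_neg (by norm_num : (0 : ℝ) ≤ 5)]
    field_simp
  have hsum : ∑ j, (1 + ‖g j‖) ^ (-θ) ≤ S := by
    have h1 := hS.sum_le_tsum (Finset.univ.map ⟨g, hg⟩) (fun v _ => by positivity)
    rw [Finset.sum_map] at h1
    exact h1
  calc ∑ j, (1 + ‖y - X j‖) ^ (-θ)
      ≤ ∑ j, 5 ^ θ * (1 + r) ^ (-θ) * (1 + ‖g j‖) ^ (-θ) := Finset.sum_le_sum fun j _ => hterm j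
    _ = 5 ^ θ * (1 + r) ^ (-θ) * ∑ j, (1 + ‖g j‖) ^ (-θ) := by rw [Finset.mul_sum]
    _ ≤ 5 ^ θ * (1 + r) ^ (-θ) * S := by gcongr
    _ ≤ (5 ^ θ * S + 2) * (1 + r) ^ (-θ) := by
      have : 0 ≤ (1 + r) ^ (-θ) := by positivity
      nlinarith
end

section
/- For every θ > k there exists a constant C = C(θ, k, n) > 1, independent of m and l, such that for all i and all y ∈ B_i^c ∩ B_{i,m} ∩ Ω_i: 1/( C (1+|y−X^i|)^{θ−k} (λl)^k ) ≤ Σ_{j=1}^{(m+1)^k} (1+|y−X^j|)^{−θ} ≤ C/( (1+|y−X^i|)^{θ−k} (λl)^k ). -/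
theorem aux_tele (a d x : ℝ) (ha : 0 < a) (hd : 0 < d) (hx : 0 < x) :
    a * d * (x + d) ^ (-(a + 1)) ≤ x ^ (-a) - (x + d) ^ (-a) := by
  have hxd : 0 < x + d := by positivity
  have hu : 0 < x / (x + d) := by positivity
  have h1 : x ^ (-a) = (x + d) ^ (-a) * (x / (x + d)) ^ (-a) := by
    rw [← Real.mul_rpow hxd.le hu.le]
    congr 1
    field_simp
  have h2 : (x + d) ^ (-(a + 1)) = (x + d) ^ (-a) / (x + d) := by
    rw [show -(a + 1) = -a - 1 by ring, Real.rpow_sub_one hxd.ne']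
  have h3 : 1 + a * (d / (x + d)) ≤ (x / (x + d)) ^ (-a) := by
    rw [Real.rpow_def_of_pos hu]
    have e1 := Real.add_one_le_exp (Real.log (x / (x + d)) * -a)
    have e2 := Real.log_le_sub_one_of_pos hu
    have e3 : x / (x + d) - 1 = - (d / (x + d)) := by field_simp; ring
    rw [e3] at e2
    nlinarith
  have hp : 0 < (x + d) ^ (-a) := Real.rpow_pos_of_pos hxd _
  rw [h1, h2]
  have := mul_le_mul_of_nonneg_left h3 hp.le
  calc _ = (x + d) ^ (-a) * (1 + a * (d / (x + d))) - (x + d) ^ (-a) := by ring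
    _ ≤ _ := by linarith

theorem aux_range (a d r : ℝ) (ha : 0 < a) (hd : 0 < d) (hr : d ≤ r) (N : ℕ) :
    a * d * ∑ t ∈ Finset.range N, (r + d * ((t : ℝ) + 1)) ^ (-(a + 1))
      ≤ r ^ (-a) - (r + d * N) ^ (-a) := by
  induction N with
  | zero => simp
  | succ N ih =>
    rw [Finset.sum_range_succ, mul_add]
    have hr0 : 0 < r := hd.trans_le hr
    have hx : 0 < r + d * N := by positivity
    have := aux_tele a d (r + d * N) ha hd hx
    have e : r + d * N + d = r + d * ((N : ℝ) + 1) := by ring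
    rw [e] at this
    push_cast
    linarith

theorem aux_range' (a d r : ℝ) (ha : 0 < a) (hd : 0 < d) (hr : d ≤ r) (N : ℕ) :
    ∑ t ∈ Finset.range (N + 1), (r + d * (t : ℝ)) ^ (-(a + 1))
      ≤ (1 + 1 / a) * (r ^ (-a) / d) := by
  have hr0 : 0 < r := hd.trans_le hr
  rw [Finset.sum_range_succ']
  have h := aux_range a d r ha hd hr N
  have hp : 0 < (r + d * N) ^ (-a) := Real.rpow_pos_of_pos (by positivity) _
  have h1 : ∑ t ∈ Finset.range N, (r + d * ((t : ℝ) + 1)) ^ (-(a + 1)) ≤ 1 / a * (r ^ (-a) / d) := by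
    have : 1 / a * (r ^ (-a) / d) = r ^ (-a) / (a * d) := by field_simp
    rw [this, le_div_iff₀ (by positivity)]
    linarith
  have h2 : (r + d * ((0 : ℕ) : ℝ)) ^ (-(a + 1)) ≤ r ^ (-a) / d := by
    rw [show -(a + 1) = -a - 1 by ring, Nat.cast_zero, mul_zero, add_zero,
      Real.rpow_sub_one hr0.ne']
    have := Real.rpow_pos_of_pos hr0 (-a)
    gcongr
  push_cast at h2 ⊢
  linarith

theorem aux_int (a d r : ℝ) (ha : 0 < a) (hd : 0 < d) (hr : d ≤ r) (N : ℕ) :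
    ∑ t ∈ Finset.Icc (-(N : ℤ)) N, (r + d * |(t : ℝ)|) ^ (-(a + 1))
      ≤ 2 * (1 + 1 / a) * (r ^ (-a) / d) := by
  classical
  have hr0 : 0 < r := hd.trans_le hr
  set f : ℤ → ℝ := fun t => (r + d * |(t : ℝ)|) ^ (-(a + 1)) with hf
  have hf0 : ∀ t, 0 ≤ f t := fun t => Real.rpow_nonneg (by positivity) _
  set A := (Finset.range (N + 1)).image (fun t : ℕ => (t : ℤ)) with hA
  set B := (Finset.range (N + 1)).image (fun t : ℕ => -(t : ℤ)) with hB
  have hsub : Finset.Icc (-(N : ℤ)) N ⊆ A ∪ B := by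
    intro t ht
    simp only [Finset.mem_Icc] at ht
    simp only [hA, hB, Finset.mem_union, Finset.mem_image, Finset.mem_range]
    rcases le_total 0 t with h | h
    · left; exact ⟨t.toNat, by omega, by omega⟩
    · right; exact ⟨(-t).toNat, by omega, by omega⟩
  have h1 : ∑ t ∈ A, f t = ∑ t ∈ Finset.range (N + 1), (r + d * (t : ℝ)) ^ (-(a + 1)) := by
    rw [hA, Finset.sum_image (by intro x _ y _ h; simpa using h)]
    simp [hf]
  have h2 : ∑ t ∈ B, f t = ∑ t ∈ Finset.range (N + 1), (r + d * (t : ℝ)) ^ (-(a + 1)) := by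
    rw [hB, Finset.sum_image (by intro x _ y _ h; simpa using h)]
    simp [hf]
  have h3 := Finset.sum_union_inter (s₁ := A) (s₂ := B) (f := f)
  have h4 : 0 ≤ ∑ t ∈ A ∩ B, f t := Finset.sum_nonneg fun t _ => hf0 t
  have h5 := Finset.sum_le_sum_of_subset_of_nonneg hsub (fun t _ _ => hf0 t)
  have h6 := aux_range' a d r ha hd hr N
  linarith

theorem aux_upper (n k m : ℕ) (d r θ : ℝ) (hk1 : 1 ≤ k) (hkn : k ≤ n) (hθ : (k : ℝ) < θ)
    (hd : 0 < d) (hr : d ≤ r)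
    (X : Fin ((m + 1) ^ k) → EuclideanSpace ℝ (Fin n)) (hX : latticeEnum n k m d X)
    (i : Fin ((m + 1) ^ k)) (y : EuclideanSpace ℝ (Fin n)) (hri : r = ‖y - X i‖)
    (hmin : ∀ j, ‖y - X i‖ ≤ ‖y - X j‖) :
    (∑ j, (1 + ‖y - X j‖) ^ (-θ)) ≤
      3 ^ θ * (2 * (1 + 1 / (θ / k - 1))) ^ k * (r ^ (-(θ - k)) / d ^ k) := by
  classical
  obtain ⟨hinj, hq, -⟩ := hX
  choose q hq1 hq2 hq3 using hq
  have hr0 : 0 < r := hd.trans_le hr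
  have hk0 : (0 : ℝ) < k := by exact_mod_cast hk1
  set a := θ / k - 1 with ha_def
  have ha : 0 < a := by
    have : 1 < θ / k := by rwa [lt_div_iff₀ hk0, one_mul]
    linarith
  have hθa : θ = (a + 1) * k := by rw [ha_def]; field_simp; ring
  let p : Fin ((m + 1) ^ k) → (Fin k → ℤ) := fun j c => q j (Fin.castLE hkn c) - q i (Fin.castLE hkn c)
  have hpinj : Function.Injective p := by
    intro j j' h
    apply hinj
    ext c
    rw [hq3, hq3]
    by_cases hc : (c : ℕ) < k
    · have := congrFun h ⟨c, hc⟩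
      have h' : q j c - q i c = q j' c - q i c := this
      have h'' : q j c = q j' c := by linarith
      rw [h'']
    · rw [hq2 j c (by omega), hq2 j' c (by omega)]
  let g : ℤ → ℝ := fun t => (r + d * |(t : ℝ)|) ^ (-(a + 1))
  have hg0 : ∀ t, 0 ≤ g t := fun t => Real.rpow_nonneg (by positivity) _
  have key : ∀ j, (1 + ‖y - X j‖) ^ (-θ) ≤ 3 ^ θ * ∏ c, g (p j c) := by
    intro j
    have hD : r ≤ ‖y - X j‖ := hri ▸ hmin j
    have hD0 : 0 < ‖y - X j‖ := hr0.trans_le hD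
    set D := ‖y - X j‖ with hDdef
    have hc : ∀ c, D ^ (-(a + 1)) ≤ 3 ^ (a + 1) * g (p j c) := by
      intro c
      have h1 : d * |((p j c : ℤ) : ℝ)| ≤ ‖X j - X i‖ := by
        have := PiLp.norm_apply_le (X j - X i) (Fin.castLE hkn c)
        rw [PiLp.sub_apply, hq3, hq3, ← mul_sub, norm_mul, Real.norm_eq_abs, abs_of_pos hd,
          Real.norm_eq_abs] at this
        simpa [p] using this
      have h2 : ‖X j - X i‖ ≤ ‖y - X i‖ + ‖y - X j‖ := by
        have : X j - X i = (y - X i) - (y - X j) := by abel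
        rw [this]; exact norm_sub_le _ _
      have h3 : (r + d * |((p j c : ℤ) : ℝ)|) / 3 ≤ D := by
        rw [← hri] at h2; linarith
      have hpos : 0 < r + d * |((p j c : ℤ) : ℝ)| := by positivity
      calc D ^ (-(a + 1)) ≤ ((r + d * |((p j c : ℤ) : ℝ)|) / 3) ^ (-(a + 1)) :=
            Real.rpow_le_rpow_of_nonpos (by positivity) h3 (by linarith)
        _ = 3 ^ (a + 1) * g (p j c) := by
            rw [Real.div_rpow hpos.le (by norm_num), Real.rpow_neg (by norm_num : (0:ℝ) ≤ 3),
              div_inv_eq_mul, mul_comm]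
    calc (1 + D) ^ (-θ) ≤ D ^ (-θ) :=
          Real.rpow_le_rpow_of_nonpos hD0 (by linarith) (by linarith)
      _ = ∏ c : Fin k, D ^ (-(a + 1)) := by
          rw [Finset.prod_const, Finset.card_univ, Fintype.card_fin, ← Real.rpow_mul_natCast hD0.le,
            hθa]
          congr 1; ring
      _ ≤ ∏ c : Fin k, (3 ^ (a + 1) * g (p j c)) :=
          Finset.prod_le_prod (fun _ _ => Real.rpow_nonneg hD0.le _) (fun c _ => hc c)
      _ = 3 ^ θ * ∏ c, g (p j c) := by
          rw [Finset.prod_mul_distrib, Finset.prod_const, Finset.card_univ, Fintype.card_fin,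
            ← Real.rpow_mul_natCast (by norm_num), ← hθa]
  have hsum : ∑ j, ∏ c, g (p j c) ≤
      ∑ P ∈ Fintype.piFinset (fun _ : Fin k => Finset.Icc (-(m : ℤ)) m), ∏ c, g (P c) := by
    rw [← Finset.sum_image (s := Finset.univ) (g := p) (f := fun P => ∏ c, g (P c))
      (fun _ _ _ _ h => hpinj h)]
    apply Finset.sum_le_sum_of_subset_of_nonneg
    · intro P hP
      obtain ⟨j, -, rfl⟩ := Finset.mem_image.1 hP
      rw [Fintype.mem_piFinset]
      intro c
      have h1 := hq1 j (Fin.castLE hkn c) c.2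
      have h2 := hq1 i (Fin.castLE hkn c) c.2
      simp only [Finset.mem_Icc, p]
      omega
    · intro P _ _
      exact Finset.prod_nonneg fun c _ => hg0 _
  rw [← Finset.prod_univ_sum] at hsum
  have hI := aux_int a d r ha hd hr m
  have hS0 : 0 ≤ ∑ t ∈ Finset.Icc (-(m : ℤ)) m, g t := Finset.sum_nonneg fun t _ => hg0 t
  rw [Finset.prod_const, Finset.card_univ, Fintype.card_fin] at hsum
  have hpow := pow_le_pow_left₀ hS0 hI k
  have h3 : (0 : ℝ) ≤ 3 ^ θ := by positivity
  calc _ ≤ ∑ j, 3 ^ θ * ∏ c, g (p j c) := Finset.sum_le_sum fun j _ => key j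
    _ = 3 ^ θ * ∑ j, ∏ c, g (p j c) := by rw [Finset.mul_sum]
    _ ≤ 3 ^ θ * (2 * (1 + 1 / a) * (r ^ (-a) / d)) ^ k :=
        mul_le_mul_of_nonneg_left (hsum.trans hpow) h3
    _ = _ := by
        rw [mul_pow, div_pow, ← Real.rpow_mul_natCast hr0.le, mul_assoc]
        have : -a * k = -(θ - k) := by rw [hθa]; ring
        rw [this]

theorem aux_lower (n k m : ℕ) (d r θ : ℝ) (hkn : k ≤ n) (hθ : (k : ℝ) < θ)
    (hd : 1 ≤ d) (hr : d ≤ r) (hrm : r < (m : ℝ) / 4 * d)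
    (X : Fin ((m + 1) ^ k) → EuclideanSpace ℝ (Fin n)) (hX : latticeEnum n k m d X)
    (i : Fin ((m + 1) ^ k)) (y : EuclideanSpace ℝ (Fin n)) (hri : r = ‖y - X i‖) :
    (r / d) ^ k * ((1 + n) * (1 + r)) ^ (-θ) ≤ ∑ j, (1 + ‖y - X j‖) ^ (-θ) := by
  classical
  obtain ⟨hinj, hq, hsurj⟩ := hX
  obtain ⟨qi, hqi1, hqi2, hqi3⟩ := hq i
  have hd0 : 0 < d := by linarith
  have hr0 : 0 < r := by linarith
  have hθ0 : 0 < θ := lt_of_le_of_lt (Nat.cast_nonneg k) hθ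
  obtain ⟨R, hR⟩ : ∃ R, R = ⌊r / d⌋₊ := ⟨_, rfl⟩
  have hR1 : (R : ℝ) ≤ r / d := hR ▸ Nat.floor_le (by positivity)
  have hR2 : r / d < R + 1 := hR ▸ Nat.lt_floor_add_one _
  have hRm : 2 * R ≤ m := by
    have : r / d < m / 4 := by rwa [div_lt_iff₀ hd0]
    have h : (2 * R : ℝ) ≤ m := by linarith [(Nat.cast_nonneg m : (0:ℝ) ≤ m)]
    exact_mod_cast h
  let st : Fin n → ℤ := fun c => if (R : ℤ) ≤ qi c then qi c - R else qi c
  have hst : ∀ (T : Fin k → Fin (R + 1)), ∃ j, ∀ c : Fin n, X j c =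
      d * (((if h : (c : ℕ) < k then st c + (T ⟨c, h⟩ : ℕ) else 0 : ℤ)) : ℝ) := by
    intro T
    apply hsurj
    · intro c hc
      have h1 := hqi1 c hc
      have h2 := (T ⟨c, hc⟩).2
      simp only [dif_pos hc, st]
      split_ifs <;> omega
    · intro c hc
      simp [not_lt.2 hc]
  choose φ hφ using hst
  have hφinj : Function.Injective φ := by
    intro T T' h
    ext c
    have h1 := hφ T (Fin.castLE hkn c)
    have h2 := hφ T' (Fin.castLE hkn c)
    rw [h, h2] at h1
    have h3 := mul_left_cancel₀ hd0.ne' h1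
    have h4 := Int.cast_injective h3
    simp at h4
    exact h4.symm ▸ rfl
  have hdist : ∀ T, ‖y - X (φ T)‖ ≤ (1 + n) * r := by
    intro T
    have h1 : ∀ c, (X i - X (φ T)) c ^ 2 ≤ r ^ 2 := by
      intro c
      rw [PiLp.sub_apply, hφ, hqi3, ← mul_sub]
      have hb : |qi c - (if h : (c : ℕ) < k then st c + (T ⟨c, h⟩ : ℕ) else 0 : ℤ)| ≤ R := by
        by_cases hc : (c : ℕ) < k
        · have h2 := (T ⟨c, hc⟩).2
          simp only [dif_pos hc, st]
          rw [abs_le]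
          split_ifs <;> omega
        · simp [hc, hqi2 c (by omega)]
      have hb' : |(qi c : ℝ) - ((if h : (c : ℕ) < k then st c + (T ⟨c, h⟩ : ℕ) else 0 : ℤ) : ℝ)| ≤ R := by
        exact_mod_cast hb
      have : |d * ((qi c : ℝ) - ((if h : (c : ℕ) < k then st c + (T ⟨c, h⟩ : ℕ) else 0 : ℤ) : ℝ))| ≤ r := by
        rw [abs_mul, abs_of_pos hd0]
        calc _ ≤ d * (r / d) := by gcongr; exact hb'.trans hR1
          _ = r := by field_simp
      exact sq_le_sq' (by linarith [(abs_le.1 this).1]) (abs_le.1 this).2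
    have h2 : ‖X i - X (φ T)‖ ≤ n * r := by
      have h3 : ‖X i - X (φ T)‖ ^ 2 ≤ (n * r) ^ 2 := by
        rw [EuclideanSpace.real_norm_sq_eq]
        calc _ ≤ ∑ c : Fin n, r ^ 2 := Finset.sum_le_sum fun c _ => h1 c
          _ = n * r ^ 2 := by simp
          _ ≤ n ^ 2 * r ^ 2 := by
            have : (n : ℝ) ≤ (n : ℝ) ^ 2 := by
              exact_mod_cast Nat.le_self_pow (by norm_num) n
            gcongr
          _ = _ := by ring
      exact le_of_sq_le_sq h3 (by positivity)
    calc ‖y - X (φ T)‖ = ‖(y - X i) + (X i - X (φ T))‖ := by congr 1; abel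
      _ ≤ r + n * r := by rw [hri] at h2 ⊢; exact (norm_add_le _ _).trans (by linarith)
      _ = _ := by ring
  have hterm : ∀ T, ((1 + n) * (1 + r)) ^ (-θ) ≤ (1 + ‖y - X (φ T)‖) ^ (-θ) := by
    intro T
    apply Real.rpow_le_rpow_of_nonpos (by positivity) _ (by linarith)
    have := hdist T
    have hn : (0 : ℝ) ≤ n := Nat.cast_nonneg n
    nlinarith
  calc (r / d) ^ k * ((1 + n) * (1 + r)) ^ (-θ)
      ≤ ((R : ℝ) + 1) ^ k * ((1 + n) * (1 + r)) ^ (-θ) := by gcongr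
    _ = ∑ T : Fin k → Fin (R + 1), ((1 + n) * (1 + r)) ^ (-θ) := by simp
    _ ≤ ∑ T : Fin k → Fin (R + 1), (1 + ‖y - X (φ T)‖) ^ (-θ) :=
        Finset.sum_le_sum fun T _ => hterm T
    _ = ∑ j ∈ Finset.univ.image φ, (1 + ‖y - X j‖) ^ (-θ) := by
        rw [Finset.sum_image (fun _ _ _ _ h => hφinj h)]
    _ ≤ _ := Finset.sum_le_sum_of_subset_of_nonneg (Finset.subset_univ _)
        (fun _ _ _ => by positivity)

theorem stmt_4 (n k : ℕ) (s β θ : ℝ) (hn0 : 0 < n) (hs0 : 0 < s) (hs1 : s < 1)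
    (hn : 2 * s + 2 < (n : ℝ)) (hk1 : 1 ≤ k) (hk2 : (k : ℝ) < ((n : ℝ) - 2 * s) / 2)
    (hβ1 : (n : ℝ) - 2 * s < β) (hβ2 : β < (n : ℝ)) (hθ : (k : ℝ) < θ) :
    ∃ C > (1 : ℝ), ∀ m l : ℕ, 1 ≤ m → 1 ≤ l →
      ∀ lam : ℝ, lam = (l : ℝ) ^ (((n : ℝ) - 2 * s) / (β - (n : ℝ) + 2 * s)) →
      ∀ X : Fin ((m + 1) ^ k) → EuclideanSpace ℝ (Fin n), latticeEnum n k m (lam * l) X →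
      ∀ i, ∀ y : EuclideanSpace ℝ (Fin n),
        lam * l ≤ ‖y - X i‖ → ‖y - X i‖ < max ((m : ℝ) / 4) 1 * (lam * l) →
        (∀ j, ‖y - X i‖ ≤ ‖y - X j‖) →
        1 / (C * (1 + ‖y - X i‖) ^ (θ - (k : ℝ)) * (lam * l) ^ k) ≤
          (∑ j, (1 + ‖y - X j‖) ^ (-θ)) ∧
        (∑ j, (1 + ‖y - X j‖) ^ (-θ)) ≤
          C / ((1 + ‖y - X i‖) ^ (θ - (k : ℝ)) * (lam * l) ^ k) := by
  have hkn : k ≤ n := by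
    have : (k : ℝ) < n := by linarith [(Nat.cast_nonneg k : (0:ℝ) ≤ k)]
    exact_mod_cast this.le
  have hk0 : (0 : ℝ) < k := by exact_mod_cast hk1
  have hθ0 : 0 < θ := hk0.trans hθ
  have ha : 0 < θ / k - 1 := by
    have : 1 < θ / k := by rwa [lt_div_iff₀ hk0, one_mul]
    linarith
  obtain ⟨A, hA⟩ : ∃ A : ℝ, A = 2 ^ k * (1 + n) ^ θ := ⟨_, rfl⟩
  obtain ⟨B, hB⟩ : ∃ B : ℝ, B = 3 ^ θ * (2 * (1 + 1 / (θ / k - 1))) ^ k := ⟨_, rfl⟩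
  have hA0 : 0 < A := by rw [hA]; positivity
  have hB0 : 0 < B := by rw [hB]; positivity
  have h2p : (0 : ℝ) < 2 ^ (θ - k) := by positivity
  refine ⟨1 + A + B * 2 ^ (θ - k), by nlinarith [mul_pos hB0 h2p], ?_⟩
  intro m l hm hl lam hlam X hX i y h1 h2 hmin
  have hl1 : (1 : ℝ) ≤ l := by exact_mod_cast hl
  have hlam1 : 1 ≤ lam := by
    rw [hlam]
    apply Real.one_le_rpow hl1
    apply div_nonneg <;> linarith
  obtain ⟨d, hd⟩ : ∃ d, d = lam * l := ⟨_, rfl⟩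
  rw [← hd] at h1 h2 hX ⊢
  have hd1 : 1 ≤ d := by rw [hd]; nlinarith
  have hd0 : 0 < d := by linarith
  obtain ⟨r, hr⟩ : ∃ r, r = ‖y - X i‖ := ⟨_, rfl⟩
  have hup := aux_upper n k m d r θ hk1 hkn hθ hd0 (hr ▸ h1) X hX i y hr hmin
  have hrm : r < (m : ℝ) / 4 * d := by
    rw [← hr] at h1 h2
    rcases max_cases ((m : ℝ) / 4) 1 with h | h
    · rwa [h.1] at h2
    · rw [h.1] at h2; linarith
  have hlow := aux_lower n k m d r θ hkn hθ hd1 (hr ▸ h1) hrm X hX i y hr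
  rw [← hr] at h1 ⊢
  have hr1 : 1 ≤ r := hd1.trans h1
  have hr0 : 0 < r := by linarith
  have hP : 0 < (1 + r) ^ (θ - (k : ℝ)) := by positivity
  have hdk : 0 < d ^ k := by positivity
  constructor
  · refine le_trans ?_ hlow
    have e1 : ((1 + (n : ℝ)) * (1 + r)) ^ (-θ)
        = 1 / ((1 + n) ^ θ * ((1 + r) ^ (θ - (k : ℝ)) * (1 + r) ^ k)) := by
      rw [Real.rpow_neg (by positivity), Real.mul_rpow (by positivity) (by positivity),
        ← Real.rpow_add_natCast (by positivity), one_div]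
      congr 3; ring
    have e2 : (1 + r) ^ k ≤ 2 ^ k * r ^ k := by
      rw [← mul_pow]; gcongr; linarith
    have hQ : 0 < (1 + r) ^ k := by positivity
    have hN : 0 < (1 + (n : ℝ)) ^ θ := by positivity
    have hrk : 0 < r ^ k := by positivity
    calc 1 / ((1 + A + B * 2 ^ (θ - (k : ℝ))) * (1 + r) ^ (θ - (k : ℝ)) * d ^ k)
        ≤ 1 / (A * (1 + r) ^ (θ - (k : ℝ)) * d ^ k) := by
          gcongr; nlinarith [mul_pos hB0 h2p]
      _ = r ^ k / d ^ k * (1 / ((1 + n) ^ θ * ((1 + r) ^ (θ - (k : ℝ)) * (2 ^ k * r ^ k)))) := by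
          rw [hA]; field_simp
      _ ≤ r ^ k / d ^ k * (1 / ((1 + n) ^ θ * ((1 + r) ^ (θ - (k : ℝ)) * (1 + r) ^ k))) := by
          gcongr
      _ = _ := by rw [e1, div_pow]
  · refine hup.trans ?_
    rw [← hB]
    have e1 : r ^ (-(θ - (k : ℝ))) ≤ 2 ^ (θ - (k : ℝ)) / (1 + r) ^ (θ - (k : ℝ)) := by
      calc r ^ (-(θ - (k : ℝ))) ≤ ((1 + r) / 2) ^ (-(θ - (k : ℝ))) :=
            Real.rpow_le_rpow_of_nonpos (by positivity) (by linarith) (by linarith)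
        _ = _ := by
          rw [Real.rpow_neg (by positivity), Real.div_rpow (by positivity) (by norm_num), inv_div]
    calc B * (r ^ (-(θ - (k : ℝ))) / d ^ k)
        ≤ B * (2 ^ (θ - (k : ℝ)) / (1 + r) ^ (θ - (k : ℝ)) / d ^ k) := by gcongr
      _ = (B * 2 ^ (θ - (k : ℝ))) / ((1 + r) ^ (θ - (k : ℝ)) * d ^ k) := by field_simp
      _ ≤ _ := by
        gcongr; linarith
end

section
/- For every pair of constants C' > 0 and c > 0 there exists l_0 such that for every integer l > l_0, every m, every choice of points P^i with |P^i − X^i| < 1/2 and Λ_i ∈ [C_1, C_2], and every function φ : ℝ^n → ℝ with ‖φ‖_* ≤ C' λ^{−((n+2s)/2 − τ)}, one has |φ(y)| ≤ c · W_m(y) for all y ∈ ∪_{h} (Ω_h ∩ B_h). -/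
lemma sum_aux (k : ℕ) (p : ℝ) (hp : (k:ℝ) < p) :
    Summable (fun z : Fin k → ℤ => ‖(fun j => (z j : ℝ))‖ ^ (-p)) := by
  let b := Pi.basisFun ℝ (Fin k)
  let L := Submodule.span ℤ (Set.range b)
  have h := ZLattice.summable_norm_rpow L (-p) (by
    rw [ZLattice.rank ℝ L]; simp; exact hp)
  let f : (Fin k → ℤ) → L := fun z => ⟨fun j => (z j : ℝ), by
    rw [Module.Basis.mem_span_iff_repr_mem]
    intro j
    exact ⟨z j, by simp [b]⟩⟩
  have hf : Function.Injective f := by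
    intro z w hzw
    have := congrArg Subtype.val hzw
    funext j
    have h2 := congrFun this j
    simpa [f] using h2
  have := h.comp_injective hf
  exact this

/-- lattice sum -/
lemma lat_aux (n k m : ℕ) (d : ℝ) (hd : 0 < d) (p : ℝ) (hp0 : 0 < p) (hp : (k:ℝ) < p)
    (X : Fin ((m + 1) ^ k) → EuclideanSpace ℝ (Fin n))
    (hinj : Function.Injective X)
    (hX : ∀ i, ∃ q : Fin n → ℤ,
      (∀ j : Fin n, (j : ℕ) < k → 0 ≤ q j ∧ q j ≤ (m : ℤ)) ∧
      (∀ j : Fin n, k ≤ (j : ℕ) → q j = 0) ∧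
      (∀ j : Fin n, X i j = d * (q j : ℝ))) (hkn : k ≤ n) (h : Fin ((m + 1) ^ k))
    (y : EuclideanSpace ℝ (Fin n)) (hy : ∀ j, ‖y - X h‖ ≤ ‖y - X j‖) (hyd : 1 + ‖y - X h‖ ≤ 2 * d) :
    ∑ i, (1 + ‖y - X i‖) ^ (-p) ≤
      (1 + 4 ^ p * ∑' z : Fin k → ℤ, ‖(fun j => (z j : ℝ))‖ ^ (-p)) * (1 + ‖y - X h‖) ^ (-p) := by
  have hS := sum_aux k p hp
  choose q hq0 hq1 hq2 using hX
  let g : Fin ((m + 1) ^ k) → Fin k → ℤ := fun i j => q i (Fin.castLE hkn j) - q h (Fin.castLE hkn j)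
  have hg : Function.Injective g := by
    intro i i' hii
    apply hinj
    ext j
    rw [hq2, hq2]
    by_cases hj : (j:ℕ) < k
    · have := congrFun hii ⟨j, hj⟩
      have e : Fin.castLE hkn ⟨j, hj⟩ = j := by ext; simp
      simp only [g, e] at this
      have : q i j = q i' j := by linarith
      rw [this]
    · rw [hq1 i j (by omega), hq1 i' j (by omega)]
  have hnorm : ∀ i, d * ‖(fun j => (g i j : ℝ))‖ ≤ ‖X i - X h‖ := by
    intro i
    rw [← le_div_iff₀' hd, pi_norm_le_iff_of_nonneg (by positivity)]
    intro j
    rw [le_div_iff₀' hd]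
    have := PiLp.norm_apply_le (X i - X h) (Fin.castLE hkn j)
    refine le_trans (le_of_eq ?_) this
    have e : (X i - X h) (Fin.castLE hkn j) = d * (g i j : ℝ) := by
      simp only [PiLp.sub_apply, hq2, g]; push_cast; ring
    rw [e, norm_mul, Real.norm_of_nonneg hd.le]
  set r := 1 + ‖y - X h‖ with hr
  have hrpos : 0 < r := by positivity
  have hterm : ∀ i, i ≠ h → (1 + ‖y - X i‖) ^ (-p) ≤
      4 ^ p * ‖(fun j => (g i j : ℝ))‖ ^ (-p) * r ^ (-p) := by
    intro i hi
    have hpos : 0 < ‖(fun j => (g i j : ℝ))‖ := by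
      rw [norm_pos_iff]
      intro h0
      apply hi
      apply hg
      funext j
      have := congrFun h0 j
      simp at this
      rw [this]; simp [g]
    have h1 : ‖X i - X h‖ ≤ 2 * ‖y - X i‖ := by
      have e : X i - X h = (y - X h) - (y - X i) := by abel
      have := norm_sub_le (y - X h) (y - X i)
      rw [e]; linarith [hy i]
    set t := ‖(fun j => (g i j : ℝ))‖
    have h2 : t * r / 4 ≤ 1 + ‖y - X i‖ := by
      have := hnorm i
      nlinarith
    calc (1 + ‖y - X i‖) ^ (-p) ≤ (t * r / 4) ^ (-p) :=
          Real.rpow_le_rpow_of_nonpos (by positivity) h2 (by linarith)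
      _ = _ := by
          rw [Real.div_rpow (by positivity) (by norm_num), Real.mul_rpow hpos.le hrpos.le,
            Real.rpow_neg (by norm_num : (0:ℝ) ≤ 4)]
          field_simp
  have hall : ∀ i, (1 + ‖y - X i‖) ^ (-p) ≤
      (if i = h then r ^ (-p) else 0) + 4 ^ p * ‖(fun j => (g i j : ℝ))‖ ^ (-p) * r ^ (-p) := by
    intro i
    by_cases hi : i = h
    · subst hi
      simp only [if_true]
      have : 0 ≤ 4 ^ p * ‖(fun j => (g i j : ℝ))‖ ^ (-p) * r ^ (-p) := by positivity
      linarith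
    · simp only [hi, if_false, zero_add]; exact hterm i hi
  have hsum : ∑ i, ‖(fun j => (g i j : ℝ))‖ ^ (-p) ≤
      ∑' z : Fin k → ℤ, ‖(fun j => (z j : ℝ))‖ ^ (-p) := by
    rw [← tsum_fintype (L := .unconditional _)]
    exact tsum_comp_le_tsum_of_inj hS (fun z => by positivity) hg
  calc _ ≤ ∑ i, ((if i = h then r ^ (-p) else 0) +
        4 ^ p * ‖(fun j => (g i j : ℝ))‖ ^ (-p) * r ^ (-p)) := Finset.sum_le_sum fun i _ => hall i
    _ = (1 + 4 ^ p * ∑ i, ‖(fun j => (g i j : ℝ))‖ ^ (-p)) * r ^ (-p) := by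
        rw [Finset.sum_add_distrib, ← Finset.sum_mul, ← Finset.mul_sum]
        simp; ring
    _ ≤ _ := by gcongr


set_option maxHeartbeats 1000000 in
theorem stmt_6 (n k : ℕ) (s β τ C₀ C₁ C₂ : ℝ) (hn0 : 0 < n) (hs0 : 0 < s) (hs1 : s < 1)
    (hn : 2 * s + 2 < (n : ℝ)) (hk1 : 1 ≤ k) (hk2 : (k : ℝ) < ((n : ℝ) - 2 * s) / 2)
    (hβ1 : (n : ℝ) - 2 * s < β) (hβ2 : β < (n : ℝ))
    (hτ1 : (k : ℝ) < τ) (hτ2 : τ < ((n : ℝ) - 2 * s) / 2)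
    (hC₀ : 0 < C₀) (hC₁ : 0 < C₁) (hC₁₂ : C₁ < C₂)
    (C' c : ℝ) (hC' : 0 < C') (hc : 0 < c) :
    ∃ l₀ : ℕ, ∀ l : ℕ, l₀ < l → ∀ m : ℕ, 1 ≤ m →
      ∀ lam : ℝ, lam = (l : ℝ) ^ (((n : ℝ) - 2 * s) / (β - (n : ℝ) + 2 * s)) →
      ∀ X : Fin ((m + 1) ^ k) → EuclideanSpace ℝ (Fin n), latticeEnum n k m (lam * l) X →
      ∀ P : Fin ((m + 1) ^ k) → EuclideanSpace ℝ (Fin n), (∀ i, ‖P i - X i‖ < 1 / 2) →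
      ∀ Λ : Fin ((m + 1) ^ k) → ℝ, (∀ i, Λ i ∈ Set.Icc C₁ C₂) →
      ∀ φ : EuclideanSpace ℝ (Fin n) → ℝ,
      (∀ y, |φ y| ≤ C' * lam ^ (-(((n : ℝ) + 2 * s) / 2 - τ)) *
          (min (⨅ i, ((1 + ‖y - X i‖) / lam) ^ (τ - s)) 1 *
            ∑ i, (1 + ‖y - X i‖) ^ (-(((n : ℝ) - 2 * s) / 2 + τ)))) →
      ∀ y : EuclideanSpace ℝ (Fin n),
        (∃ h, (∀ j, ‖y - X h‖ ≤ ‖y - X j‖) ∧ ‖y - X h‖ < lam * l) →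
        |φ y| ≤ c * ∑ i, C₀ * (Λ i / (1 + Λ i ^ 2 * ‖y - P i‖ ^ 2)) ^ (((n : ℝ) - 2 * s) / 2) := by
  set a : ℝ := ((n:ℝ) - 2 * s) / 2 with ha
  have hkpos : (1:ℝ) ≤ k := by exact_mod_cast hk1
  have ha0 : 0 < a := by linarith
  have hkn : k ≤ n := by
    have : (k:ℝ) ≤ n := by linarith
    exact_mod_cast this
  set p : ℝ := a + τ with hp
  have hp0 : 0 < p := by linarith
  have hpk : (k:ℝ) < p := by linarith
  set K : ℝ := 1 + 4 ^ p * ∑' z : Fin k → ℤ, ‖(fun j => (z j : ℝ))‖ ^ (-p) with hK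
  have hK0 : 0 < K := by
    have : 0 ≤ ∑' z : Fin k → ℤ, ‖(fun j => (z j : ℝ))‖ ^ (-p) :=
      tsum_nonneg fun z => by positivity
    positivity
  have hC₂ : 0 < C₂ := by linarith
  set D : ℝ := (C₁ / (1 + C₂ ^ 2)) ^ a with hD
  have hD0 : 0 < D := by positivity
  have hlim : Filter.Tendsto (fun l : ℕ => C' * K * 2 ^ (a - τ) * (l:ℝ) ^ (-p)) Filter.atTop
      (nhds 0) := by
    have := ((tendsto_rpow_neg_atTop hp0).comp tendsto_natCast_atTop_atTop).const_mul
      (C' * K * 2 ^ (a - τ))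
    simpa using this
  obtain ⟨l₀, hl₀⟩ := Filter.eventually_atTop.1
    (hlim.eventually (gt_mem_nhds (show 0 < c * C₀ * D by positivity)))
  refine ⟨l₀, fun l hl m hm lam hlam X hX P hP Λ hΛ φ hφ y ⟨h, hy, hyd⟩ => ?_⟩
  have hl1 : (1:ℝ) ≤ l := by exact_mod_cast (by omega : 1 ≤ l)
  have hl0 : (0:ℝ) < l := by linarith
  have hδ : 0 < β - (n:ℝ) + 2 * s := by linarith
  have hlam1 : 1 ≤ lam := by
    rw [hlam]; exact Real.one_le_rpow hl1 (div_nonneg (by linarith) hδ.le)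
  have hlam0 : 0 < lam := by linarith
  have hd1 : 1 ≤ lam * l := by nlinarith
  have hsmall := hl₀ l hl.le
  have hlat := lat_aux n k m (lam * l) (by linarith) p hp0 hpk X hX.1 hX.2.1 hkn h y hy
    (by linarith)
  rw [← hK] at hlat
  set r := 1 + ‖y - X h‖ with hr
  have hr1 : 1 ≤ r := by
    have := norm_nonneg (y - X h)
    linarith
  have hr0 : 0 < r := by linarith
  have hr2 : r ≤ 2 * (lam * l) := by linarith
  -- lower bound for W
  have hterm : ∀ i, 0 ≤ C₀ * (Λ i / (1 + Λ i ^ 2 * ‖y - P i‖ ^ 2)) ^ a := by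
    intro i
    have := (hΛ i).1
    have : 0 < Λ i := by linarith
    positivity
  have hW : C₀ * (D * r ^ (-(2 * a))) ≤
      ∑ i, C₀ * (Λ i / (1 + Λ i ^ 2 * ‖y - P i‖ ^ 2)) ^ a := by
    refine le_trans ?_ (Finset.single_le_sum (fun i _ => hterm i) (Finset.mem_univ h))
    gcongr
    have hL1 := (hΛ h).1
    have hL2 := (hΛ h).2
    have hLp : 0 < Λ h := by linarith
    have ht : ‖y - P h‖ ≤ r := by
      have e : y - P h = (y - X h) - (P h - X h) := by abel
      have := norm_sub_le (y - X h) (P h - X h)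
      rw [e]; linarith [hP h]
    have e : D * r ^ (-(2 * a)) = (C₁ / ((1 + C₂ ^ 2) * r ^ 2)) ^ a := by
      rw [← div_div, Real.div_rpow (by positivity) (by positivity), Real.rpow_neg hr0.le,
        Real.rpow_mul hr0.le, div_eq_mul_inv, hD]
      norm_num
    rw [e]
    apply Real.rpow_le_rpow (by positivity) _ ha0.le
    apply div_le_div₀ hLp.le hL1 (by positivity)
    have h1 : Λ h ^ 2 * ‖y - P h‖ ^ 2 ≤ C₂ ^ 2 * r ^ 2 := by gcongr
    nlinarith
  have hphi : |φ y| ≤ C' * lam ^ (-(a + 2 * s - τ)) * (K * r ^ (-p)) := by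
    refine (hφ y).trans ?_
    have e : ((n:ℝ) + 2 * s) / 2 - τ = a + 2 * s - τ := by rw [ha]; ring
    rw [e]
    have hsn : 0 ≤ ∑ i, (1 + ‖y - X i‖) ^ (-p) := Finset.sum_nonneg fun i _ => by positivity
    refine mul_le_mul_of_nonneg_left ?_ (by positivity)
    refine le_trans ?_ hlat
    calc _ ≤ 1 * ∑ i, (1 + ‖y - X i‖) ^ (-p) := by
          apply mul_le_mul_of_nonneg_right (min_le_right _ _) hsn
      _ = _ := one_mul _
  have hlam2 : lam ^ (-(2 * s)) ≤ (l:ℝ) ^ (-(2 * a)) := by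
    rw [hlam, ← Real.rpow_mul hl0.le]
    apply Real.rpow_le_rpow_of_exponent_le hl1
    have e : (n:ℝ) - 2 * s = 2 * a := by rw [ha]; ring
    rw [e, div_mul_eq_mul_div, div_le_iff₀ hδ]
    have h3 : 2 * a * (β - (n:ℝ) + 2 * s) ≤ 2 * a * (2 * s) :=
      mul_le_mul_of_nonneg_left (by linarith) (by linarith)
    linarith only [h3]
  have hkey : lam ^ (-(a + 2 * s - τ)) * r ^ (a - τ) ≤ 2 ^ (a - τ) * (l:ℝ) ^ (-p) := by
    calc lam ^ (-(a + 2 * s - τ)) * r ^ (a - τ)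
        ≤ lam ^ (-(a + 2 * s - τ)) * (2 * (lam * l)) ^ (a - τ) := by
          gcongr
      _ = 2 ^ (a - τ) * (lam ^ (-(2 * s)) * (l:ℝ) ^ (a - τ)) := by
          rw [Real.mul_rpow (by norm_num) (by positivity), Real.mul_rpow hlam0.le hl0.le,
            show -(2 * s) = -(a + 2 * s - τ) + (a - τ) by ring, Real.rpow_add hlam0]
          ring
      _ ≤ 2 ^ (a - τ) * ((l:ℝ) ^ (-(2 * a)) * (l:ℝ) ^ (a - τ)) := by gcongr
      _ = _ := by rw [← Real.rpow_add hl0]; congr 2; rw [hp]; ring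
  have hrp : r ^ (-p) = r ^ (a - τ) * r ^ (-(2 * a)) := by
    rw [← Real.rpow_add hr0]; congr 1; rw [hp]; ring
  calc |φ y| ≤ C' * lam ^ (-(a + 2 * s - τ)) * (K * r ^ (-p)) := hphi
    _ = C' * K * (lam ^ (-(a + 2 * s - τ)) * r ^ (a - τ)) * r ^ (-(2 * a)) := by rw [hrp]; ring
    _ ≤ C' * K * (2 ^ (a - τ) * (l:ℝ) ^ (-p)) * r ^ (-(2 * a)) := by gcongr
    _ ≤ c * C₀ * D * r ^ (-(2 * a)) := by
        refine mul_le_mul_of_nonneg_right ?_ (by positivity)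
        rw [← mul_assoc]; exact hsmall.le
    _ = c * (C₀ * (D * r ^ (-(2 * a)))) := by ring
    _ ≤ _ := by gcongr
end

section
/- There exist a small constant θ > 0 and a constant C > 0, both depending only on n, s, k, τ (in particular independent of m, l and of the choice of P^i, Λ_i), such that for all x ∈ ℝ^n: ∫_{ℝ^n} |x−y|^{−(n−2s)} W_m(y)^{4s/(n−2s)} γ(y) Σ_{h} (1+|y−X^h|)^{−((n−2s)/2+τ)} dy ≤ C γ(x) Σ_{h} (1+|x−X^h|)^{−((n−2s)/2+τ+θ)} + C (λl)^{−4sk/(n−2s)} γ(x) Σ_{h} (1+|x−X^h|)^{−((n−2s)/2+τ)}, where all sums run over h = 1,…,(m+1)^k. -/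
section helpers
open MeasureTheory Set Metric
set_option linter.unusedSectionVars false


section layers
variable {E : Type*} [NormedAddCommGroup E] [MeasurableSpace E] [BorelSpace E]

/-- termwise integration of a dyadic majorant -/
lemma dyadic_int (μ : Measure E) (S : Set E) (f : E → ℝ) (B : ℕ → Set E) (hB : ∀ j, MeasurableSet (B j))
    (hS : MeasurableSet S)
    (c v : ℕ → ℝ) (hc : ∀ j, 0 ≤ c j) (hv : ∀ j, μ (B j) ≤ ENNReal.ofReal (v j))
    (K q : ℝ) (hK : 0 ≤ K) (hq0 : 0 ≤ q) (hq1 : q < 1) (hcv : ∀ j, c j * v j ≤ K * q ^ j)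
    (hf : ∀ y ∈ S, f y ≤ 0 ∨ ∃ j, y ∈ B j ∧ f y ≤ c j) :
    ∫⁻ y in S, ENNReal.ofReal (f y) ∂μ ≤ ENNReal.ofReal (K * (1 - q)⁻¹) := by
  have h1 : ∫⁻ y in S, ENNReal.ofReal (f y) ∂μ
      ≤ ∫⁻ y in S, ∑' j, (B j).indicator (fun _ => ENNReal.ofReal (c j)) y ∂μ := by
    refine setLIntegral_mono' hS fun y hy => ?_
    rcases hf y hy with h | ⟨j, hj, h⟩
    · rw [ENNReal.ofReal_of_nonpos h]; exact zero_le
    · refine le_trans ?_ (ENNReal.le_tsum j)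
      rw [indicator_of_mem hj]
      exact ENNReal.ofReal_le_ofReal h
  refine h1.trans ((lintegral_mono_set (subset_univ S)).trans ?_)
  rw [setLIntegral_univ, lintegral_tsum (fun j => (measurable_const.indicator (hB j)).aemeasurable)]
  have h2 : ∀ j, ∫⁻ y, (B j).indicator (fun _ => ENNReal.ofReal (c j)) y ∂μ
      ≤ ENNReal.ofReal (K * q ^ j) := by
    intro j
    rw [lintegral_indicator (hB j), setLIntegral_const]
    calc _ ≤ ENNReal.ofReal (c j) * ENNReal.ofReal (v j) := by gcongr; exact hv j
      _ = ENNReal.ofReal (c j * v j) := (ENNReal.ofReal_mul (hc j)).symm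
      _ ≤ _ := ENNReal.ofReal_le_ofReal (hcv j)
  refine (ENNReal.tsum_le_tsum h2).trans ?_
  rw [← ENNReal.ofReal_tsum_of_nonneg (fun j => by positivity)
    ((summable_geometric_of_lt_one hq0 hq1).mul_left K), tsum_mul_left,
    tsum_geometric_of_lt_one hq0 hq1]

lemma layer_outer (α b : ℝ) (hα : 0 ≤ α) (hab : α < b) : ∃ C : ℝ, 0 < C ∧
    ∀ (μ : Measure E) (z : E) (M R : ℝ), 0 ≤ M → 0 < R →
      (∀ ρ, R ≤ ρ → μ (ball z ρ) ≤ ENNReal.ofReal (M * ρ ^ α)) →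
      ∫⁻ y in (ball z R)ᶜ, ENNReal.ofReal (‖z - y‖ ^ (-b)) ∂μ
        ≤ ENNReal.ofReal (C * M * R ^ (α - b)) := by
  have hq1 : (2:ℝ) ^ (α - b) < 1 := Real.rpow_lt_one_of_one_lt_of_neg (by norm_num) (by linarith)
  refine ⟨2 ^ α * (1 - (2:ℝ) ^ (α - b))⁻¹,
    mul_pos (by positivity) (inv_pos.2 (by linarith)), ?_⟩
  intro μ z M R hM hR hμ
  have := dyadic_int μ (ball z R)ᶜ (fun y => ‖z - y‖ ^ (-b)) (fun j => ball z (2 ^ (j+1) * R))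
    (fun j => measurableSet_ball) measurableSet_ball.compl
    (fun j => (2 ^ j * R) ^ (-b)) (fun j => M * (2 ^ (j+1) * R) ^ α)
    (fun j => by positivity)
    (fun j => hμ _ (le_mul_of_one_le_left hR.le (one_le_pow₀ (by norm_num))))
    (M * 2 ^ α * R ^ (α - b)) (2 ^ (α - b)) (by positivity) (by positivity) hq1 ?_ ?_
  · refine this.trans (le_of_eq ?_)
    congr 1; ring
  · intro j
    apply le_of_eq
    rw [Real.mul_rpow (by positivity) hR.le, Real.mul_rpow (by positivity) hR.le, pow_succ,
      Real.mul_rpow (by positivity) (by norm_num), ← Real.rpow_natCast, ← Real.rpow_natCast,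
      ← Real.rpow_mul (by norm_num), ← Real.rpow_mul (by norm_num), ← Real.rpow_mul (by norm_num),
      sub_eq_add_neg, Real.rpow_add hR, add_mul, Real.rpow_add (by norm_num)]
    ring_nf
  · intro y hy
    right
    have hy' : R ≤ ‖z - y‖ := by
      simpa [dist_eq_norm, norm_sub_rev] using hy
    obtain ⟨j, hj1, hj2⟩ := exists_nat_pow_near (x := ‖z - y‖ / R) (y := 2)
      ((one_le_div hR).2 hy') (by norm_num)
    rw [le_div_iff₀ hR] at hj1
    rw [div_lt_iff₀ hR] at hj2
    refine ⟨j, ?_, ?_⟩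
    · rw [mem_ball, dist_comm, dist_eq_norm]; exact hj2
    · exact Real.rpow_le_rpow_of_nonpos (by positivity) hj1 (by linarith)

lemma layer_inner (α b : ℝ) (hb : 0 < b) (hab : b < α) : ∃ C : ℝ, 0 < C ∧
    ∀ (μ : Measure E) (z : E) (M R : ℝ), 0 ≤ M → 0 < R →
      (∀ ρ, 0 < ρ → μ (ball z ρ) ≤ ENNReal.ofReal (M * ρ ^ α)) →
      ∫⁻ y in ball z R, ENNReal.ofReal (‖z - y‖ ^ (-b)) ∂μ
        ≤ ENNReal.ofReal (C * M * R ^ (α - b)) := by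
  have hq1 : (2⁻¹:ℝ) ^ (α - b) < 1 := Real.rpow_lt_one (by norm_num) (by norm_num) (by linarith)
  refine ⟨2 ^ α * 2 ^ b * (1 - (2⁻¹:ℝ) ^ (α - b))⁻¹,
    mul_pos (by positivity) (inv_pos.2 (by linarith)), ?_⟩
  intro μ z M R hM hR hμ
  have := dyadic_int μ (ball z R) (fun y => ‖z - y‖ ^ (-b)) (fun j => ball z (2⁻¹ ^ j * R * 2))
    (fun j => measurableSet_ball) measurableSet_ball
    (fun j => (2⁻¹ ^ j * R * 2⁻¹) ^ (-b)) (fun j => M * (2⁻¹ ^ j * R * 2) ^ α)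
    (fun j => by positivity)
    (fun j => hμ _ (by positivity))
    (M * 2 ^ α * 2 ^ b * R ^ (α - b)) (2⁻¹ ^ (α - b)) (by positivity) (by positivity) hq1 ?_ ?_
  · refine this.trans (le_of_eq ?_)
    congr 1; ring
  · intro j
    apply le_of_eq
    have hj0 : (0:ℝ) ≤ 2⁻¹ ^ j * R := by positivity
    rw [Real.mul_rpow hj0 (by norm_num), Real.mul_rpow hj0 (by norm_num),
      Real.mul_rpow (by positivity) hR.le, Real.mul_rpow (by positivity) hR.le,
      ← Real.rpow_natCast, ← Real.rpow_natCast,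
      ← Real.rpow_mul (by norm_num), ← Real.rpow_mul (by norm_num), ← Real.rpow_mul (by norm_num),
      sub_eq_add_neg, Real.rpow_add hR, add_mul, Real.rpow_add (by norm_num),
      Real.inv_rpow (by norm_num) (-b), Real.rpow_neg (by norm_num : (0:ℝ) ≤ 2) b, inv_inv]
    ring_nf
  · intro y hy
    have hy' : ‖z - y‖ < R := by
      simpa [dist_eq_norm, norm_sub_rev] using hy
    rcases (norm_nonneg (z - y)).eq_or_lt with h0 | h0
    · left
      show ‖z - y‖ ^ (-b) ≤ 0
      rw [← h0, Real.zero_rpow (by linarith)]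
    right
    obtain ⟨j, hj1, hj2⟩ := exists_nat_pow_near_of_lt_one (x := ‖z - y‖ / R) (y := 2⁻¹)
      (by positivity) ((div_le_one hR).2 hy'.le) (by norm_num) (by norm_num)
    rw [lt_div_iff₀ hR] at hj1
    rw [div_le_iff₀ hR] at hj2
    refine ⟨j, ?_, ?_⟩
    · rw [mem_ball, dist_comm, dist_eq_norm]
      have : 0 < (2⁻¹:ℝ)^j * R := by positivity
      linarith
    · refine Real.rpow_le_rpow_of_nonpos (by positivity) ?_ (by linarith)
      rw [pow_succ] at hj1; linarith

lemma ae_ne_of_ball (μ : Measure E) (z : E) (M α : ℝ) (hα : 0 < α)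
    (hμ : ∀ ρ, 0 < ρ → μ (ball z ρ) ≤ ENNReal.ofReal (M * ρ ^ α)) : ∀ᵐ y ∂μ, y ≠ z := by
  have : μ {z} = 0 := by
    apply le_antisymm _ zero_le
    have ht : Filter.Tendsto (fun ρ : ℝ => ENNReal.ofReal (M * ρ ^ α)) (nhdsWithin 0 (Ioi 0)) (nhds 0) := by
      have h : Filter.Tendsto (fun ρ : ℝ => ENNReal.ofReal (M * ρ ^ α)) (nhds 0)
          (nhds (ENNReal.ofReal (M * 0 ^ α))) := by
        apply ENNReal.tendsto_ofReal
        exact ((Real.continuousAt_rpow_const 0 α (Or.inr hα.le)).tendsto).const_mul M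
      rw [Real.zero_rpow hα.ne', mul_zero, ENNReal.ofReal_zero] at h
      exact h.mono_left nhdsWithin_le_nhds
    refine ge_of_tendsto ht ?_
    filter_upwards [self_mem_nhdsWithin] with ρ hρ
    refine (measure_mono ?_).trans (hμ ρ hρ)
    simpa using hρ
  rw [ae_iff]; simpa using this

/-- generic convolution estimate -/
lemma conv_generic (ν N σ a : ℝ) (hσ : 0 < σ) (ha : 0 < a) (haN : a + σ < N) (hN : N < ν) :
    ∃ C : ℝ, 0 < C ∧ ∀ (μ : Measure E) (x X : E) (M d : ℝ), 0 ≤ M → 1 ≤ d →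
      (∀ z ρ, 0 < ρ → μ (ball z ρ) ≤ ENNReal.ofReal (M * ρ ^ (N - σ))) →
      (∀ z ρ, 0 < ρ → μ (ball z ρ) ≤ ENNReal.ofReal (M * d ^ (-(ν - N + σ)) * ρ ^ ν)) →
      ∫⁻ y, ENNReal.ofReal (‖x - y‖ ^ (-N) * (d + ‖y - X‖) ^ (-a)) ∂μ
        ≤ ENNReal.ofReal (C * M * (d + ‖x - X‖) ^ (-a)) := by
  obtain ⟨C1, hC1, h1⟩ := layer_inner (E := E) ν N (by linarith) hN
  obtain ⟨C2, hC2, h2⟩ := layer_outer (E := E) (N - σ) N (by linarith) (by linarith)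
  obtain ⟨C3, hC3, h3⟩ := layer_inner (E := E) (N - σ) a ha (by linarith)
  refine ⟨2 ^ a * (C1 + C2) + 2 ^ N * C3 * 2 ^ a, by positivity, ?_⟩
  intro μ x X M d hM hd hμ1 hμ2
  have hd0 : 0 < d := by linarith
  -- step I
  have hI : ∫⁻ y, ENNReal.ofReal (‖x - y‖ ^ (-N)) ∂μ ≤ ENNReal.ofReal ((C1 + C2) * M) := by
    rw [← lintegral_add_compl _ (measurableSet_ball (x := x) (ε := d))]
    have e1 := h1 μ x (M * d ^ (-(ν - N + σ))) d (by positivity) hd0 (hμ2 x)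
    have e2 := h2 μ x M d hM hd0 (fun ρ hρ => hμ1 x ρ (by linarith))
    refine (add_le_add e1 e2).trans ?_
    rw [← ENNReal.ofReal_add (by positivity) (by positivity)]
    apply ENNReal.ofReal_le_ofReal
    have k1 : d ^ (-(ν - N + σ)) * d ^ (ν - N) ≤ 1 := by
      rw [← Real.rpow_add hd0]
      exact Real.rpow_le_one_of_one_le_of_nonpos hd (by linarith)
    have k2 : d ^ (N - σ - N) ≤ 1 := Real.rpow_le_one_of_one_le_of_nonpos hd (by linarith)
    calc _ = C1 * M * (d ^ (-(ν - N + σ)) * d ^ (ν - N)) + C2 * M * d ^ (N - σ - N) := by ring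
      _ ≤ C1 * M * 1 + C2 * M * 1 := by gcongr
      _ = _ := by ring
  set R := ‖x - X‖ with hRdef
  have hR0 : 0 ≤ R := norm_nonneg _
  set D := d + R with hD
  have hD0 : 0 < D := by positivity
  -- step II
  have hA : ∀ S : Set E, MeasurableSet S → (∀ y ∈ S, D / 2 ≤ d + ‖y - X‖) →
      ∫⁻ y in S, ENNReal.ofReal (‖x - y‖ ^ (-N) * (d + ‖y - X‖) ^ (-a)) ∂μ ≤
        ENNReal.ofReal (2 ^ a * (C1 + C2) * M * D ^ (-a)) := by
    intro S hS hy
    have : ∫⁻ y in S, ENNReal.ofReal (‖x - y‖ ^ (-N) * (d + ‖y - X‖) ^ (-a)) ∂μ ≤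
        ∫⁻ y in S, ENNReal.ofReal (2 ^ a * D ^ (-a)) * ENNReal.ofReal (‖x - y‖ ^ (-N)) ∂μ := by
      refine setLIntegral_mono' hS fun y hyS => ?_
      rw [← ENNReal.ofReal_mul (by positivity), mul_comm (‖x - y‖ ^ (-N))]
      apply ENNReal.ofReal_le_ofReal
      gcongr
      calc _ ≤ (D / 2) ^ (-a) := Real.rpow_le_rpow_of_nonpos (by positivity) (hy y hyS) (by linarith)
        _ = _ := by
          rw [Real.div_rpow hD0.le (by norm_num), Real.rpow_neg (by norm_num : (0:ℝ) ≤ 2), div_inv_eq_mul, mul_comm]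
    refine this.trans ?_
    rw [lintegral_const_mul' _ _ ENNReal.ofReal_ne_top]
    refine (mul_le_mul_right ((setLIntegral_le_lintegral _ _).trans hI) _).trans ?_
    rw [← ENNReal.ofReal_mul (by positivity)]
    apply ENNReal.ofReal_le_ofReal
    apply le_of_eq; ring
  rcases lt_or_ge R d with hRd | hRd
  · rw [← setLIntegral_univ]
    refine (hA univ MeasurableSet.univ (fun y _ => ?_)).trans ?_
    · have := norm_nonneg (y - X); linarith
    · apply ENNReal.ofReal_le_ofReal
      have : 0 ≤ 2 ^ N * C3 * 2 ^ a * M * D ^ (-a) := by positivity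
      linarith
  · have hRpos : 0 < R := by linarith
    rw [← lintegral_add_compl _ (measurableSet_ball (x := X) (ε := R / 2))]
    have e1 := hA (ball X (R/2))ᶜ measurableSet_ball.compl (fun y hy => by
      have : R / 2 ≤ ‖y - X‖ := by simpa [dist_eq_norm] using hy
      linarith)
    have e2 : ∫⁻ y in ball X (R/2), ENNReal.ofReal (‖x - y‖ ^ (-N) * (d + ‖y - X‖) ^ (-a)) ∂μ ≤
        ENNReal.ofReal (2 ^ N * C3 * 2 ^ a * M * D ^ (-a)) := by
      have hae := ae_ne_of_ball μ X M (N - σ) (by linarith) (hμ1 X)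
      have : ∫⁻ y in ball X (R/2), ENNReal.ofReal (‖x - y‖ ^ (-N) * (d + ‖y - X‖) ^ (-a)) ∂μ ≤
        ∫⁻ y in ball X (R/2), ENNReal.ofReal ((R/2) ^ (-N)) * ENNReal.ofReal (‖X - y‖ ^ (-a)) ∂μ := by
        refine setLIntegral_mono_ae' measurableSet_ball ?_
        filter_upwards [hae] with y hy hyS
        rw [← ENNReal.ofReal_mul (by positivity)]
        apply ENNReal.ofReal_le_ofReal
        have hy0 : 0 < ‖X - y‖ := norm_pos_iff.2 (sub_ne_zero.2 (Ne.symm hy))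
        have hyR : ‖y - X‖ < R / 2 := by simpa [dist_eq_norm] using hyS
        have htri : R ≤ ‖x - y‖ + ‖y - X‖ := by
          rw [hRdef]; exact norm_sub_le_norm_sub_add_norm_sub x y X
        gcongr ?_ * ?_
        · exact Real.rpow_le_rpow_of_nonpos (by positivity) (by linarith) (by linarith)
        · rw [norm_sub_rev y X]
          exact Real.rpow_le_rpow_of_nonpos hy0 (by linarith) (by linarith)
      refine this.trans ?_
      rw [lintegral_const_mul' _ _ ENNReal.ofReal_ne_top]
      refine (mul_le_mul_right (h3 μ X M (R/2) hM (by positivity) (hμ1 X)) _).trans ?_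
      rw [← ENNReal.ofReal_mul (by positivity)]
      apply ENNReal.ofReal_le_ofReal
      have k1 : (R/2) ^ (-N) * (R/2) ^ (N - σ - a) ≤ 2 ^ N * 2 ^ a * D ^ (-a) := by
        rw [← Real.rpow_add (by positivity)]
        have : -N + (N - σ - a) = -σ + -a := by ring
        rw [this, Real.rpow_add (by positivity)]
        have h4 : (R/2) ^ (-σ) ≤ 2 ^ σ := by
          rw [Real.div_rpow hR0 (by norm_num), Real.rpow_neg (by norm_num : (0:ℝ) ≤ 2), div_inv_eq_mul]
          exact mul_le_of_le_one_left (by positivity)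
            (Real.rpow_le_one_of_one_le_of_nonpos (by linarith) (by linarith))
        have h5 : (R/2) ^ (-a) ≤ 2 ^ (2 * a) * D ^ (-a) := by
          calc _ ≤ (D / 4) ^ (-a) := Real.rpow_le_rpow_of_nonpos (by positivity) (by linarith) (by linarith)
            _ = _ := by
              rw [Real.div_rpow hD0.le (by norm_num), Real.rpow_neg (by norm_num : (0:ℝ) ≤ 4), div_inv_eq_mul, mul_comm,
                Real.rpow_mul (by norm_num)]; norm_num
        calc _ ≤ (2:ℝ) ^ σ * (2 ^ (2 * a) * D ^ (-a)) := by gcongr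
          _ = 2 ^ (σ + 2 * a) * D ^ (-a) := by rw [Real.rpow_add (by norm_num)]; ring
          _ ≤ 2 ^ (N + a) * D ^ (-a) := by
            refine mul_le_mul_of_nonneg_right ?_ (by positivity)
            exact Real.rpow_le_rpow_of_exponent_le (by norm_num) (by linarith)
          _ = _ := by rw [Real.rpow_add (by norm_num)]
      calc _ = C3 * M * ((R/2) ^ (-N) * (R/2) ^ (N - σ - a)) := by ring
        _ ≤ C3 * M * (2 ^ N * 2 ^ a * D ^ (-a)) := by gcongr
        _ = _ := by ring
    refine (add_le_add e2 e1).trans ?_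
    rw [← ENNReal.ofReal_add (by positivity) (by positivity)]
    apply ENNReal.ofReal_le_ofReal
    apply le_of_eq; ring

lemma ball_singular [NormedSpace ℝ E] [FiniteDimensional ℝ E] (μ : Measure E) [μ.IsAddHaarMeasure]
    (c : ℝ) (hc : 0 < c) (hcn : c < Module.finrank ℝ E) :
    ∃ C : ℝ, 0 < C ∧ ∀ (X z : E) (ρ : ℝ), 0 < ρ →
      ∫⁻ y in ball z ρ, ENNReal.ofReal (‖X - y‖ ^ (-c)) ∂μ
        ≤ ENNReal.ofReal (C * ρ ^ ((Module.finrank ℝ E : ℝ) - c)) := by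
  obtain ⟨C1, hC1, h1⟩ := layer_inner (E := E) (Module.finrank ℝ E) c hc hcn
  set V := (μ (ball (0:E) 1)).toReal with hV
  have hVb : ∀ (z : E) (ρ : ℝ), 0 < ρ →
      μ (ball z ρ) ≤ ENNReal.ofReal (V * ρ ^ (Module.finrank ℝ E : ℝ)) := by
    intro z ρ hρ
    rw [Measure.addHaar_ball_of_pos _ _ hρ, Real.rpow_natCast, mul_comm V,
      ENNReal.ofReal_mul (by positivity), hV, ENNReal.ofReal_toReal measure_ball_lt_top.ne]
  have hV0 : 0 ≤ V := ENNReal.toReal_nonneg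
  refine ⟨C1 * V + V + 1, by positivity, ?_⟩
  intro X z ρ hρ
  have e1 := h1 μ X V ρ hV0 hρ (hVb X)
  have e2 : ∫⁻ y in ball z ρ ∩ (ball X ρ)ᶜ, ENNReal.ofReal (‖X - y‖ ^ (-c)) ∂μ ≤
      ENNReal.ofReal (V * ρ ^ ((Module.finrank ℝ E : ℝ) - c)) := by
    have : ∫⁻ y in ball z ρ ∩ (ball X ρ)ᶜ, ENNReal.ofReal (‖X - y‖ ^ (-c)) ∂μ ≤
        ∫⁻ y in ball z ρ ∩ (ball X ρ)ᶜ, ENNReal.ofReal (ρ ^ (-c)) ∂μ := by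
      refine setLIntegral_mono' (measurableSet_ball.inter measurableSet_ball.compl) fun y hy => ?_
      apply ENNReal.ofReal_le_ofReal
      have : ρ ≤ ‖X - y‖ := by
        have := hy.2
        rw [norm_sub_rev]
        simpa [dist_eq_norm] using this
      exact Real.rpow_le_rpow_of_nonpos hρ this (by linarith)
    refine this.trans ?_
    rw [setLIntegral_const]
    refine (mul_le_mul_right ((measure_mono inter_subset_left).trans (hVb z ρ hρ)) _).trans ?_
    rw [← ENNReal.ofReal_mul (by positivity)]
    apply ENNReal.ofReal_le_ofReal
    rw [sub_eq_add_neg, Real.rpow_add hρ]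
    apply le_of_eq; ring
  have e3 : ∫⁻ y in ball z ρ, ENNReal.ofReal (‖X - y‖ ^ (-c)) ∂μ ≤ 
      ∫⁻ y in ball X ρ ∪ (ball z ρ ∩ (ball X ρ)ᶜ), ENNReal.ofReal (‖X - y‖ ^ (-c)) ∂μ := by
    apply lintegral_mono_set
    intro y hy
    by_cases h : y ∈ ball X ρ
    · exact Or.inl h
    · exact Or.inr ⟨hy, h⟩
  refine e3.trans ((lintegral_union_le _ _ _).trans ((add_le_add e1 e2).trans ?_))
  rw [← ENNReal.ofReal_add (by positivity) (by positivity)]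
  apply ENNReal.ofReal_le_ofReal
  have : 0 ≤ ρ ^ ((Module.finrank ℝ E : ℝ) - c) := by positivity
  linarith

end layers


section densities
variable {n : ℕ}

lemma conv_density (s σ a : ℝ) (hs : 0 < s) (hσ : 0 < σ) (ha : 0 < a) (haN : a + σ < (n:ℝ) - 2 * s)
    (M : ℝ) (hM : 0 ≤ M) :
    ∃ C : ℝ, 0 < C ∧ ∀ (w : EuclideanSpace ℝ (Fin n) → ℝ) (x X : EuclideanSpace ℝ (Fin n)) (d : ℝ),
      1 ≤ d → Measurable w → (∀ y, 0 ≤ w y) → (∀ y, w y ≤ d ^ (-(2 * s + σ))) →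
      (∀ z ρ, 0 < ρ → ∫⁻ y in ball z ρ, ENNReal.ofReal (w y) ≤
        ENNReal.ofReal (M * ρ ^ ((n:ℝ) - 2 * s - σ))) →
      ∫⁻ y, ENNReal.ofReal (‖x - y‖ ^ (-((n:ℝ) - 2 * s)) * (w y * (d + ‖y - X‖) ^ (-a)))
        ≤ ENNReal.ofReal (C * (d + ‖x - X‖) ^ (-a)) := by
  have hn : 0 < n := by
    have : (0:ℝ) < n := by linarith
    exact_mod_cast this
  obtain ⟨C, hC, h⟩ := conv_generic (E := EuclideanSpace ℝ (Fin n)) (n:ℝ) ((n:ℝ) - 2 * s) σ a hσ ha haN (by linarith)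
  set V := (volume (ball (0:EuclideanSpace ℝ (Fin n)) 1)).toReal with hV
  have hV0 : 0 ≤ V := ENNReal.toReal_nonneg
  have hVb : ∀ (z : EuclideanSpace ℝ (Fin n)) (ρ : ℝ), 0 < ρ →
      volume (ball z ρ) = ENNReal.ofReal (V * ρ ^ (n : ℝ)) := by
    intro z ρ hρ
    rw [Measure.addHaar_ball_of_pos _ _ hρ, Real.rpow_natCast, mul_comm V,
      ENNReal.ofReal_mul (by positivity), hV, ENNReal.ofReal_toReal measure_ball_lt_top.ne]
    simp
  refine ⟨C * (M + V) + 1, by positivity, ?_⟩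
  intro w x X d hd hw hw0 hwd hwM
  have hd0 : 0 < d := by linarith
  have key := h (volume.withDensity (fun y => ENNReal.ofReal (w y))) x X (M + V) d (by positivity) hd ?_ ?_
  · rw [lintegral_withDensity_eq_lintegral_mul _ hw.ennreal_ofReal (by fun_prop)] at key
    refine le_trans (le_of_eq ?_) (key.trans ?_)
    · congr 1; ext y
      rw [Pi.mul_apply, ← ENNReal.ofReal_mul (hw0 y)]
      congr 1; ring
    · apply ENNReal.ofReal_le_ofReal
      have : 0 ≤ (d + ‖x - X‖) ^ (-a) := by positivity
      linarith
  · intro z ρ hρ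
    rw [withDensity_apply _ measurableSet_ball]
    refine (hwM z ρ hρ).trans (ENNReal.ofReal_le_ofReal ?_)
    gcongr; linarith
  · intro z ρ hρ
    rw [withDensity_apply _ measurableSet_ball]
    have : ∫⁻ y in ball z ρ, ENNReal.ofReal (w y) ≤ ∫⁻ y in ball z ρ, ENNReal.ofReal (d ^ (-(2 * s + σ))) :=
      lintegral_mono fun y => ENNReal.ofReal_le_ofReal (hwd y)
    refine this.trans ?_
    rw [setLIntegral_const, hVb z ρ hρ, ← ENNReal.ofReal_mul (by positivity)]
    apply ENNReal.ofReal_le_ofReal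
    have e : -((n:ℝ) - (n - 2 * s) + σ) = -(2 * s + σ) := by ring
    rw [e]
    have : 0 ≤ M * (d ^ (-(2 * s + σ)) * ρ ^ (n:ℝ)) := by positivity
    linarith

lemma conv_point (s σ a : ℝ) (hs : 0 < s) (hσ : 0 < σ) (ha : 0 < a) (haN : a + σ < (n:ℝ) - 2 * s) :
    ∃ C : ℝ, 0 < C ∧ ∀ (x X : EuclideanSpace ℝ (Fin n)),
      ∫⁻ y, ENNReal.ofReal (‖x - y‖ ^ (-((n:ℝ) - 2 * s)) *
          ((1 + ‖y - X‖) ^ (-(2 * s + σ)) * (1 + ‖y - X‖) ^ (-a)))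
        ≤ ENNReal.ofReal (C * (1 + ‖x - X‖) ^ (-a)) := by
  have hn : 0 < n := by
    have : (0:ℝ) < n := by linarith
    exact_mod_cast this
  have : Nonempty (Fin n) := ⟨⟨0, hn⟩⟩
  obtain ⟨M, hM, h⟩ := ball_singular (volume : Measure (EuclideanSpace ℝ (Fin n))) (2 * s + σ)
    (by linarith) (by simp; linarith)
  obtain ⟨C, hC, h'⟩ := conv_density (n := n) s σ a hs hσ ha haN M hM.le
  refine ⟨C, hC, fun x X => ?_⟩
  refine h' (fun y => (1 + ‖y - X‖) ^ (-(2 * s + σ))) x X 1 le_rfl (by fun_prop)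
    (fun y => by positivity) (fun y => ?_) ?_
  · rw [Real.one_rpow]
    exact Real.rpow_le_one_of_one_le_of_nonpos (by linarith [norm_nonneg (y - X)]) (by linarith)
  · intro z ρ hρ
    have e : (n:ℝ) - 2 * s - σ = (Module.finrank ℝ (EuclideanSpace ℝ (Fin n)) : ℝ) - (2 * s + σ) := by
      simp; ring
    rw [e]
    refine le_trans ?_ (h X z ρ hρ)
    refine setLIntegral_mono_ae' measurableSet_ball ?_
    have hae : ∀ᵐ y : EuclideanSpace ℝ (Fin n), y ≠ X := by
      rw [ae_iff]; simp
    filter_upwards [hae] with y hy _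
    apply ENNReal.ofReal_le_ofReal
    have hy0 : 0 < ‖X - y‖ := norm_pos_iff.2 (sub_ne_zero.2 (Ne.symm hy))
    rw [norm_sub_rev y X]
    exact Real.rpow_le_rpow_of_nonpos hy0 (by linarith) (by linarith)

lemma line_bound (e : ℝ) (he0 : 0 ≤ e) (he : e < 1) : ∃ C : ℝ, 0 < C ∧ ∀ (d c ρ : ℝ), 0 < d → 0 < ρ →
    ∫⁻ t in ball c ρ, ENNReal.ofReal ((d + |t|) ^ (-e)) ≤ ENNReal.ofReal (C * ρ ^ (1 - e)) := by
  rcases he0.eq_or_lt with rfl | he0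
  · refine ⟨2, by norm_num, fun d c ρ hd hρ => ?_⟩
    simp [Real.volume_ball]
  obtain ⟨M, hM, h⟩ := ball_singular (volume : Measure ℝ) e he0 (by simpa using he)
  refine ⟨M, hM, fun d c ρ hd hρ => ?_⟩
  have := h 0 c ρ hρ
  simp only [Module.finrank_self, Nat.cast_one] at this
  refine le_trans ?_ this
  refine setLIntegral_mono_ae' measurableSet_ball ?_
  have hae : ∀ᵐ y : ℝ, y ≠ 0 := by
    rw [ae_iff]; simp
  filter_upwards [hae] with y hy _
  apply ENNReal.ofReal_le_ofReal
  rw [zero_sub, norm_neg, Real.norm_eq_abs]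
  exact Real.rpow_le_rpow_of_nonpos (abs_pos.2 hy) (by linarith) (by linarith)

lemma lintegral_box (f : Fin n → ℝ → ℝ) (hf : ∀ m, Measurable (f m)) (hf0 : ∀ m t, 0 ≤ f m t)
    (b : Fin n → ℝ) (hb0 : ∀ m, 0 ≤ b m) (hb : ∀ m, ∫⁻ t, ENNReal.ofReal (f m t) ≤ ENNReal.ofReal (b m)) :
    ∫⁻ y : EuclideanSpace ℝ (Fin n), ENNReal.ofReal (∏ m, f m (y m)) ≤ ENNReal.ofReal (∏ m, b m) := by
  have hInt : ∀ m, Integrable (f m) := by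
    intro m
    refine ⟨(hf m).aestronglyMeasurable, ?_⟩
    rw [hasFiniteIntegral_iff_ofReal (Filter.Eventually.of_forall (hf0 m))]
    exact (hb m).trans_lt ENNReal.ofReal_lt_top
  have hmeas : Measurable (fun y : Fin n → ℝ => ∏ m, f m (y m)) :=
    Finset.measurable_prod _ fun m _ => (hf m).comp (measurable_pi_apply m)
  have e1 := (PiLp.volume_preserving_ofLp (Fin n)).lintegral_comp
    (f := fun y : Fin n → ℝ => ENNReal.ofReal (∏ m, f m (y m))) hmeas.ennreal_ofReal
  refine (le_of_eq e1).trans ?_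
  have hI : Integrable (fun y : Fin n → ℝ => ∏ m, f m (y m)) := by
    exact Integrable.fintype_prod hInt
  rw [← ofReal_integral_eq_lintegral_ofReal hI
    (Filter.Eventually.of_forall fun y => Finset.prod_nonneg fun m _ => hf0 m _)]
  apply ENNReal.ofReal_le_ofReal
  rw [integral_fintype_prod_volume_eq_prod]
  refine Finset.prod_le_prod (fun m _ => integral_nonneg (hf0 m)) fun m _ => ?_
  have := hb m
  rw [← ofReal_integral_eq_lintegral_ofReal (hInt m) (Filter.Eventually.of_forall (hf0 m))] at this
  exact (ENNReal.ofReal_le_ofReal_iff (hb0 m)).1 this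

lemma plane_ball (i j : Fin n) (hij : i ≠ j) (e : ℝ) (he0 : 0 ≤ e) (he : e < 1) :
    ∃ C : ℝ, 0 < C ∧ ∀ (d : ℝ) (z : EuclideanSpace ℝ (Fin n)) (ρ : ℝ), 0 < d → 0 < ρ →
      ∫⁻ y in ball z ρ, ENNReal.ofReal ((d + |y i|) ^ (-e) * (d + |y j|) ^ (-e))
        ≤ ENNReal.ofReal (C * ρ ^ ((n:ℝ) - 2 * e)) := by
  set ε : Fin n → ℝ := fun m => (if m = i then e else 0) + (if m = j then e else 0) with hε
  have hεs : ∑ m, ε m = 2 * e := by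
    simp [hε, Finset.sum_add_distrib]; ring
  have hε01 : ∀ m, 0 ≤ ε m ∧ ε m < 1 := by
    intro m
    simp only [hε]
    split_ifs with h1 h2 h2
    · exact absurd (h1.symm.trans h2) hij
    all_goals constructor <;> linarith
  choose C hC hCb using fun m => line_bound (ε m) (hε01 m).1 (hε01 m).2
  refine ⟨∏ m, C m, Finset.prod_pos fun m _ => hC m, ?_⟩
  intro d z ρ hd hρ
  set f : Fin n → ℝ → ℝ := fun m => (ball (z m) ρ).indicator (fun t => (d + |t|) ^ (-ε m)) with hf
  have hb := lintegral_box f (fun m => Measurable.indicator (by fun_prop) measurableSet_ball)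
    (fun m t => indicator_nonneg (fun t _ => by positivity) t) (fun m => C m * ρ ^ (1 - ε m))
    (fun m => by have := hC m; positivity) ?_
  · have hprod : ∏ m, C m * ρ ^ (1 - ε m) = (∏ m, C m) * ρ ^ ((n:ℝ) - 2 * e) := by
      rw [Finset.prod_mul_distrib, ← Real.rpow_sum_of_pos hρ, Finset.sum_sub_distrib, hεs]
      simp
    rw [hprod] at hb
    refine le_trans ?_ hb
    rw [← lintegral_indicator measurableSet_ball]
    refine lintegral_mono fun y => ?_
    by_cases hy : y ∈ ball z ρ
    · rw [indicator_of_mem hy]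
      apply ENNReal.ofReal_le_ofReal
      apply le_of_eq
      have hm : ∀ m, f m (y m) = (d + |y m|) ^ (-(if m = i then e else 0)) *
          (d + |y m|) ^ (-(if m = j then e else 0)) := by
        intro m
        have : y m ∈ ball (z m) ρ := by
          rw [mem_ball, dist_eq_norm] at hy ⊢
          exact (PiLp.norm_apply_le (y - z) m).trans_lt hy
        simp only [hf]
        rw [indicator_of_mem this, ← Real.rpow_add (by positivity)]
        simp only [hε]; congr 1; ring
      simp_rw [hm]
      rw [Finset.prod_mul_distrib, Finset.prod_eq_single i, Finset.prod_eq_single j]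
      · simp
      · intro b _ hb; simp [hb]
      · simp
      · intro b _ hb; simp [hb]
      · simp
    · rw [indicator_of_notMem hy]; exact zero_le
  · intro m
    refine le_trans (le_of_eq ?_) (hCb m d (z m) ρ hd hρ)
    rw [← lintegral_indicator measurableSet_ball]
    congr 1; ext t
    simp only [hf]
    by_cases ht : t ∈ ball (z m) ρ
    · rw [indicator_of_mem ht, indicator_of_mem ht]
    · rw [indicator_of_notMem ht, indicator_of_notMem ht, ENNReal.ofReal_zero]

lemma conv_plane (s σ a : ℝ) (hs : 0 < s) (hσ : 0 < σ) (hs1 : 2 * s + σ < 2) (ha : 0 < a)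
    (haN : a + σ < (n:ℝ) - 2 * s) (i j : Fin n) (hij : i ≠ j) :
    ∃ C : ℝ, 0 < C ∧ ∀ (x X : EuclideanSpace ℝ (Fin n)) (d : ℝ), 1 ≤ d →
      ∫⁻ y, ENNReal.ofReal (‖x - y‖ ^ (-((n:ℝ) - 2 * s)) *
          (((d + |y i|) ^ (-(s + σ / 2)) * (d + |y j|) ^ (-(s + σ / 2))) * (d + ‖y - X‖) ^ (-a)))
        ≤ ENNReal.ofReal (C * (d + ‖x - X‖) ^ (-a)) := by
  obtain ⟨M, hM, h⟩ := plane_ball i j hij (s + σ / 2) (by linarith) (by linarith)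
  obtain ⟨C, hC, h'⟩ := conv_density (n := n) s σ a hs hσ ha haN M hM.le
  refine ⟨C, hC, fun x X d hd => ?_⟩
  have hd0 : 0 < d := by linarith
  refine h' (fun y => (d + |y i|) ^ (-(s + σ / 2)) * (d + |y j|) ^ (-(s + σ / 2))) x X d hd
    (by fun_prop) (fun y => by positivity) (fun y => ?_) ?_
  · have e : -(2 * s + σ) = -(s + σ/2) + -(s + σ/2) := by ring
    rw [e, Real.rpow_add hd0]
    gcongr ?_ * ?_
    · exact Real.rpow_le_rpow_of_nonpos hd0 (by linarith [abs_nonneg (y i)]) (by linarith)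
    · exact Real.rpow_le_rpow_of_nonpos hd0 (by linarith [abs_nonneg (y j)]) (by linarith)
  · intro z ρ hρ
    have := h d z ρ hd0 hρ
    have e : (n:ℝ) - 2 * s - σ = (n:ℝ) - 2 * (s + σ/2) := by ring
    rw [e]; exact this

end densities


section lattice
variable {n k : ℕ}

lemma lat_sep {m : ℕ} {d : ℝ} (hd : 0 < d) {X : Fin ((m + 1) ^ k) → EuclideanSpace ℝ (Fin n)}
    (hX : latticeEnum n k m d X) (i j : Fin ((m + 1) ^ k)) (hij : i ≠ j) : d ≤ ‖X i - X j‖ := by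
  obtain ⟨hinj, hq, -⟩ := hX
  choose q hq1 hq2 hq3 using hq
  have hne : q i ≠ q j := by
    intro h
    apply hij; apply hinj
    ext c
    rw [hq3, hq3, h]
  obtain ⟨c, hc⟩ := Function.ne_iff.1 hne
  refine le_trans ?_ (PiLp.norm_apply_le (X i - X j) c)
  have h1 : (1:ℝ) ≤ |((q i c - q j c : ℤ) : ℝ)| := by
    rw [← Int.cast_abs]
    exact_mod_cast Int.one_le_abs (sub_ne_zero.2 hc)
  have : (X i - X j) c = d * ((q i c - q j c : ℤ) : ℝ) := by
    rw [PiLp.sub_apply, hq3, hq3]; push_cast; ring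
  rw [this, Real.norm_eq_abs, abs_mul, abs_of_pos hd]
  nlinarith

lemma lat_count (hkn : k ≤ n) {m : ℕ} {d : ℝ} (hd : 0 < d)
    {X : Fin ((m + 1) ^ k) → EuclideanSpace ℝ (Fin n)}
    (hX : latticeEnum n k m d X) (i : Fin ((m + 1) ^ k)) (ρ : ℝ) (hρ : d ≤ ρ) :
    ((Finset.univ.filter (fun j => ‖X i - X j‖ < ρ)).card : ℝ) ≤ (3 * ρ / d) ^ k := by
  obtain ⟨hinj, hq, -⟩ := hX
  choose q hq1 hq2 hq3 using hq
  set K : ℕ := ⌊ρ / d⌋₊ with hK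
  have hρd : 1 ≤ ρ / d := (one_le_div hd).2 hρ
  have hcard : (Finset.univ.filter (fun j => ‖X i - X j‖ < ρ)).card ≤
      (Fintype.piFinset (fun c : Fin k => Finset.Icc (q i (Fin.castLE hkn c) - K) (q i (Fin.castLE hkn c) + K))).card := by
    apply Finset.card_le_card_of_injOn (fun j c => q j (Fin.castLE hkn c))
    · intro j hj
      simp only [Finset.coe_filter, Finset.mem_univ, true_and, mem_ofPred_eq] at hj
      simp only [Finset.mem_coe, Fintype.mem_piFinset, Finset.mem_Icc]
      intro c
      have h1 := (PiLp.norm_apply_le (X i - X j) (Fin.castLE hkn c)).trans_lt hj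
      have : (X i - X j) (Fin.castLE hkn c) = d * ((q i (Fin.castLE hkn c) - q j (Fin.castLE hkn c) : ℤ) : ℝ) := by
        rw [PiLp.sub_apply, hq3, hq3]; push_cast; ring
      rw [this, Real.norm_eq_abs, abs_mul, abs_of_pos hd, ← Int.cast_abs, ← lt_div_iff₀' hd] at h1
      have h2 : |q i (Fin.castLE hkn c) - q j (Fin.castLE hkn c)| ≤ (K:ℤ) := by
        rw [hK, Int.natCast_floor_eq_floor (by positivity)]
        exact Int.le_floor.2 h1.le
      rw [abs_le] at h2
      constructor <;> linarith
    · intro j1 _ j2 _ h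
      apply hinj
      ext c
      rw [hq3, hq3]
      by_cases hc : (c:ℕ) < k
      · have := congrFun h ⟨c, hc⟩
        have e : Fin.castLE hkn ⟨c, hc⟩ = c := rfl
        simp only [e] at this
        rw [this]
      · rw [hq2 j1 c (by omega), hq2 j2 c (by omega)]
  have hc2 : (Fintype.piFinset (fun c : Fin k => Finset.Icc (q i (Fin.castLE hkn c) - K) (q i (Fin.castLE hkn c) + K))).card = (2 * K + 1) ^ k := by
    rw [Fintype.card_piFinset]
    have : ∀ c : Fin k, (Finset.Icc (q i (Fin.castLE hkn c) - K) (q i (Fin.castLE hkn c) + K)).card = 2 * K + 1 := by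
      intro c; rw [Int.card_Icc]; omega
    simp [this]
  rw [hc2] at hcard
  have : ((Finset.univ.filter (fun j => ‖X i - X j‖ < ρ)).card : ℝ) ≤ (2 * K + 1) ^ k := by
    exact_mod_cast hcard
  refine this.trans ?_
  have hKle : (K:ℝ) ≤ ρ / d := Nat.floor_le (by positivity)
  have e : 3 * ρ / d = 3 * (ρ / d) := by ring
  rw [e]
  gcongr; linarith

lemma lat_sum (hkn : k ≤ n) (b : ℝ) (hb : (k:ℝ) < b) : ∃ C : ℝ, 0 < C ∧ ∀ (m : ℕ) (d : ℝ), 0 < d →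
    ∀ X : Fin ((m + 1) ^ k) → EuclideanSpace ℝ (Fin n), latticeEnum n k m d X →
    ∀ (i : Fin ((m + 1) ^ k)) (t : ℝ), d ≤ t →
      ∑ j, (t + ‖X i - X j‖) ^ (-b) ≤ C * (d ^ (-(k:ℝ)) * t ^ ((k:ℝ) - b)) := by
  obtain ⟨C, hC, h⟩ := layer_outer (E := EuclideanSpace ℝ (Fin n)) (k:ℝ) b (by positivity) hb
  refine ⟨3 ^ k + C * 3 ^ k, by positivity, ?_⟩
  intro m d hd X hX i t ht
  have ht0 : 0 < t := by linarith
  have hb0 : 0 < b := lt_of_le_of_lt (by positivity) hb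
  set M : ℝ := 3 ^ k * d ^ (-(k:ℝ)) with hM
  have hcnt : ∀ ρ, d ≤ ρ → ((Finset.univ.filter (fun j => ‖X i - X j‖ < ρ)).card : ℝ) ≤ M * ρ ^ (k:ℝ) := by
    intro ρ hρ
    refine (lat_count hkn hd hX i ρ hρ).trans (le_of_eq ?_)
    rw [hM, Real.rpow_neg hd.le, Real.rpow_natCast, Real.rpow_natCast, div_pow, mul_pow]
    field_simp
  have hmeas := h (∑ j, Measure.dirac (X j)) (X i) M t (by positivity) ht0 ?_
  · rw [← lintegral_indicator measurableSet_ball.compl, lintegral_finsetSum_measure] at hmeas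
    simp_rw [lintegral_dirac] at hmeas
    have hout : ∑ j ∈ Finset.univ.filter (fun j => ¬ ‖X i - X j‖ < t), ‖X i - X j‖ ^ (-b) ≤ C * M * t ^ ((k:ℝ) - b) := by
      rw [← ENNReal.ofReal_le_ofReal_iff (by positivity), ENNReal.ofReal_sum_of_nonneg (fun j _ => by positivity)]
      refine le_trans (le_of_eq ?_) hmeas
      rw [Finset.sum_filter]
      refine Finset.sum_congr rfl fun j _ => ?_
      simp only [indicator, mem_compl_iff, mem_ball, dist_eq_norm, norm_sub_rev (X j) (X i)]
    have hin : ∑ j ∈ Finset.univ.filter (fun j => ‖X i - X j‖ < t), t ^ (-b) ≤ M * t ^ ((k:ℝ) - b) := by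
      rw [Finset.sum_const, nsmul_eq_mul, sub_eq_add_neg, Real.rpow_add ht0, ← mul_assoc]
      gcongr
      exact hcnt t ht
    calc ∑ j, (t + ‖X i - X j‖) ^ (-b)
        = ∑ j ∈ Finset.univ.filter (fun j => ‖X i - X j‖ < t), (t + ‖X i - X j‖) ^ (-b) +
          ∑ j ∈ Finset.univ.filter (fun j => ¬ ‖X i - X j‖ < t), (t + ‖X i - X j‖) ^ (-b) :=
          (Finset.sum_filter_add_sum_filter_not _ _ _).symm
      _ ≤ ∑ j ∈ Finset.univ.filter (fun j => ‖X i - X j‖ < t), t ^ (-b) +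
          ∑ j ∈ Finset.univ.filter (fun j => ¬ ‖X i - X j‖ < t), ‖X i - X j‖ ^ (-b) := by
          refine add_le_add (Finset.sum_le_sum fun j hj => ?_) (Finset.sum_le_sum fun j hj => ?_)
          · exact Real.rpow_le_rpow_of_nonpos ht0 (by linarith [norm_nonneg (X i - X j)]) (by linarith)
          · simp only [Finset.mem_filter, Finset.mem_univ, true_and, not_lt] at hj
            exact Real.rpow_le_rpow_of_nonpos (by linarith) (by linarith) (by linarith)
      _ ≤ M * t ^ ((k:ℝ) - b) + C * M * t ^ ((k:ℝ) - b) := add_le_add hin hout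
      _ = _ := by rw [hM]; ring
  · intro ρ hρ
    rw [Measure.finsetSum_apply]
    refine le_trans (le_of_eq ?_) (ENNReal.ofReal_le_ofReal (hcnt ρ (ht.trans hρ)))
    rw [ENNReal.ofReal_natCast, Finset.card_filter]
    push_cast
    refine Finset.sum_congr rfl fun j _ => ?_
    rw [Measure.dirac_apply' _ measurableSet_ball]
    simp only [indicator, mem_ball, dist_eq_norm, norm_sub_rev (X j) (X i), Pi.one_apply]
    
/-- sum over the non-nearest points -/
lemma lat_sum_ne (hkn : k ≤ n) (b : ℝ) (hb : (k:ℝ) < b) : ∃ C : ℝ, 0 < C ∧ ∀ (m : ℕ) (d : ℝ), 0 < d →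
    ∀ X : Fin ((m + 1) ^ k) → EuclideanSpace ℝ (Fin n), latticeEnum n k m d X →
    ∀ (y : EuclideanSpace ℝ (Fin n)) (i : Fin ((m + 1) ^ k)), (∀ j, ‖y - X i‖ ≤ ‖y - X j‖) →
      ∑ j, (1 + ‖y - X j‖) ^ (-b) ≤ (1 + ‖y - X i‖) ^ (-b) +
        C * (d ^ (-(k:ℝ)) * (d + ‖y - X i‖) ^ ((k:ℝ) - b)) := by
  obtain ⟨C, hC, h⟩ := lat_sum hkn b hb
  refine ⟨5 ^ b * C, by positivity, ?_⟩
  intro m d hd X hX y i hi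
  have hb0 : 0 < b := lt_of_le_of_lt (by positivity) hb
  rw [← Finset.add_sum_erase _ _ (Finset.mem_univ i)]
  gcongr
  have key := h m d hd X hX i (d + ‖y - X i‖) (by linarith [norm_nonneg (y - X i)])
  calc ∑ j ∈ Finset.univ.erase i, (1 + ‖y - X j‖) ^ (-b)
      ≤ ∑ j ∈ Finset.univ.erase i, 5 ^ b * (d + ‖y - X i‖ + ‖X i - X j‖) ^ (-b) := by
        refine Finset.sum_le_sum fun j hj => ?_
        have hji : i ≠ j := (Finset.ne_of_mem_erase hj).symm
        have hsep := lat_sep hd hX i j hji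
        have htri : ‖X i - X j‖ ≤ ‖y - X i‖ + ‖y - X j‖ := by
          rw [norm_sub_rev y (X i)]; exact norm_sub_le_norm_sub_add_norm_sub _ _ _
        have hij := hi j
        calc _ ≤ ((d + ‖y - X i‖ + ‖X i - X j‖) / 5) ^ (-b) :=
              Real.rpow_le_rpow_of_nonpos (by positivity) (by linarith) (by linarith)
          _ = _ := by
            rw [Real.div_rpow (by positivity) (by norm_num), Real.rpow_neg (by norm_num : (0:ℝ) ≤ 5), div_inv_eq_mul, mul_comm]
    _ ≤ ∑ j, 5 ^ b * (d + ‖y - X i‖ + ‖X i - X j‖) ^ (-b) :=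
        Finset.sum_le_sum_of_subset_of_nonneg (Finset.subset_univ _) (fun j _ _ => by positivity)
    _ = 5 ^ b * ∑ j, (d + ‖y - X i‖ + ‖X i - X j‖) ^ (-b) := by rw [Finset.mul_sum]
    _ ≤ 5 ^ b * (C * (d ^ (-(k:ℝ)) * (d + ‖y - X i‖) ^ ((k:ℝ) - b))) := by gcongr
    _ = _ := by ring

end lattice


section assembly
variable {n k : ℕ}

lemma rpow_anti_scale {x y c a : ℝ} (hx : 0 < x) (hc : 0 < c) (h : x ≤ c * y) (ha : 0 ≤ a) :
    y ^ (-a) ≤ c ^ a * x ^ (-a) := by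
  have hxc : x / c ≤ y := by rw [div_le_iff₀ hc]; linarith
  calc y ^ (-a) ≤ (x / c) ^ (-a) := Real.rpow_le_rpow_of_nonpos (by positivity) hxc (by linarith)
    _ = _ := by
      rw [Real.div_rpow hx.le hc.le, Real.rpow_neg hc.le, div_inv_eq_mul, mul_comm]

lemma rpow_anti {x y a : ℝ} (hx : 0 < x) (h : x ≤ y) (ha : 0 ≤ a) : y ^ (-a) ≤ x ^ (-a) :=
  Real.rpow_le_rpow_of_nonpos hx h (by linarith)

lemma add_rpow_le_two {u v p : ℝ} (hu : 0 ≤ u) (hv : 0 ≤ v) (hp : 0 ≤ p) :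
    (u + v) ^ p ≤ 2 ^ p * (u ^ p + v ^ p) := by
  have hu' : 0 ≤ u ^ p := by positivity
  have hv' : 0 ≤ v ^ p := by positivity
  rcases le_total u v with h | h
  · calc (u + v) ^ p ≤ (2 * v) ^ p := by gcongr; linarith
      _ = 2 ^ p * v ^ p := Real.mul_rpow (by norm_num) hv
      _ ≤ _ := by gcongr; linarith
  · calc (u + v) ^ p ≤ (2 * u) ^ p := by gcongr; linarith
      _ = 2 ^ p * u ^ p := Real.mul_rpow (by norm_num) hu
      _ ≤ _ := by gcongr; linarith

/-- the radial weight -/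
noncomputable def radW (lam κ t : ℝ) : ℝ := min (((1 + t) / lam) ^ κ) 1

lemma radW_nonneg {lam κ t : ℝ} (hl : 0 < lam) (ht : 0 ≤ t) : 0 ≤ radW lam κ t :=
  le_min (by positivity) zero_le_one

lemma radW_le_one {lam κ t : ℝ} : radW lam κ t ≤ 1 := min_le_right _ _

lemma radW_lower {lam κ t b d : ℝ} (hl : 1 ≤ lam) (hd : lam ≤ d) (ht : 0 ≤ t) (hκ : 0 < κ) (hb : κ ≤ b) :
    (d + t) ^ (-b) ≤ radW lam κ t * (1 + t) ^ (-b) := by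
  have hl0 : 0 < lam := by linarith
  rcases le_total ((1 + t) / lam) 1 with h | h
  · have h1 : radW lam κ t = ((1 + t) / lam) ^ κ :=
      min_eq_left (Real.rpow_le_one (by positivity) h hκ.le)
    have h2 : ((1 + t) / lam) ^ b ≤ ((1 + t) / lam) ^ κ :=
      Real.rpow_le_rpow_of_exponent_ge (by positivity) h hb
    rw [h1]
    calc (d + t) ^ (-b) ≤ lam ^ (-b) := rpow_anti hl0 (by linarith) (by linarith)
      _ = ((1 + t) / lam) ^ b * (1 + t) ^ (-b) := by
        rw [Real.div_rpow (by positivity) hl0.le, Real.rpow_neg hl0.le, Real.rpow_neg (by positivity)]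
        have : (1 + t) ^ b ≠ 0 := by positivity
        field_simp
      _ ≤ _ := by gcongr
  · have h1 : radW lam κ t = 1 := min_eq_right (Real.one_le_rpow h hκ.le)
    rw [h1, one_mul]
    exact rpow_anti (by linarith) (by linarith) (by linarith)

lemma conv_radW (s σ b κ : ℝ) (hs : 0 < s) (hσ : 0 < σ) (hκ : 0 < κ) (hb : κ < b)
    (hbN : b + σ < (n:ℝ) - 2 * s) :
    ∃ C : ℝ, 0 < C ∧ ∀ (lam : ℝ) (x X : EuclideanSpace ℝ (Fin n)), 1 ≤ lam →
      ∫⁻ y, ENNReal.ofReal (‖x - y‖ ^ (-((n:ℝ) - 2 * s)) *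
          ((1 + ‖y - X‖) ^ (-(2 * s + σ)) * (radW lam κ ‖y - X‖ * (1 + ‖y - X‖) ^ (-b))))
        ≤ ENNReal.ofReal (C * (radW lam κ ‖x - X‖ * (1 + ‖x - X‖) ^ (-b))) := by
  obtain ⟨C1, hC1, h1⟩ := conv_point (n := n) s σ b hs hσ (by linarith) hbN
  obtain ⟨C2, hC2, h2⟩ := conv_point (n := n) s σ (b - κ) hs hσ (by linarith) (by linarith)
  refine ⟨C1 + C2, by positivity, ?_⟩
  intro lam x X hl
  have hl0 : 0 < lam := by linarith
  have hsplit : ∀ t : ℝ, 0 ≤ t → ((1 + t) / lam) ^ κ * (1 + t) ^ (-b) = lam ^ (-κ) * (1 + t) ^ (-(b - κ)) := by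
    intro t ht
    rw [Real.div_rpow (by positivity) hl0.le, Real.rpow_neg hl0.le, show -(b - κ) = κ + -b by ring,
      Real.rpow_add (by positivity)]
    field_simp
  rcases le_total (((1 + ‖x - X‖) / lam) ^ κ) 1 with h | h
  · have e : radW lam κ ‖x - X‖ = ((1 + ‖x - X‖) / lam) ^ κ := min_eq_left h
    rw [e, hsplit _ (norm_nonneg _)]
    calc _ ≤ ∫⁻ y, ENNReal.ofReal (lam ^ (-κ)) * ENNReal.ofReal (‖x - y‖ ^ (-((n:ℝ) - 2 * s)) *
          ((1 + ‖y - X‖) ^ (-(2 * s + σ)) * (1 + ‖y - X‖) ^ (-(b - κ)))) := by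
          refine lintegral_mono fun y => ?_
          rw [← ENNReal.ofReal_mul (by positivity)]
          apply ENNReal.ofReal_le_ofReal
          calc _ ≤ ‖x - y‖ ^ (-((n:ℝ) - 2 * s)) *
              ((1 + ‖y - X‖) ^ (-(2 * s + σ)) * (((1 + ‖y - X‖) / lam) ^ κ * (1 + ‖y - X‖) ^ (-b))) := by
                gcongr
                exact min_le_left _ _
            _ = _ := by rw [hsplit _ (norm_nonneg _)]; ring
      _ = ENNReal.ofReal (lam ^ (-κ)) * ∫⁻ y, ENNReal.ofReal (‖x - y‖ ^ (-((n:ℝ) - 2 * s)) *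
          ((1 + ‖y - X‖) ^ (-(2 * s + σ)) * (1 + ‖y - X‖) ^ (-(b - κ)))) :=
          lintegral_const_mul' _ _ ENNReal.ofReal_ne_top
      _ ≤ ENNReal.ofReal (lam ^ (-κ)) * ENNReal.ofReal (C2 * (1 + ‖x - X‖) ^ (-(b - κ))) := by
          gcongr; exact h2 x X
      _ ≤ _ := by
          rw [← ENNReal.ofReal_mul (by positivity)]
          apply ENNReal.ofReal_le_ofReal
          have : 0 ≤ C1 * (lam ^ (-κ) * (1 + ‖x - X‖) ^ (-(b - κ))) := by positivity
          linarith
  · have e : radW lam κ ‖x - X‖ = 1 := min_eq_right h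
    rw [e, one_mul]
    refine le_trans (lintegral_mono fun y => ?_) ((h1 x X).trans ?_)
    · apply ENNReal.ofReal_le_ofReal
      gcongr
      exact mul_le_of_le_one_left (by positivity) radW_le_one
    · apply ENNReal.ofReal_le_ofReal
      gcongr; linarith

lemma sum_radW (hkn : k ≤ n) (b κ : ℝ) (hb : (k:ℝ) < b) (hκ : 0 < κ) (hκb : κ ≤ b) :
    ∃ C : ℝ, 0 < C ∧ ∀ (m : ℕ) (d lam : ℝ), 1 ≤ lam → lam ≤ d →
    ∀ X : Fin ((m + 1) ^ k) → EuclideanSpace ℝ (Fin n), latticeEnum n k m d X →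
    ∀ (x : EuclideanSpace ℝ (Fin n)) (i : Fin ((m + 1) ^ k)), (∀ j, ‖x - X i‖ ≤ ‖x - X j‖) →
      ∑ j, radW lam κ ‖x - X j‖ * (1 + ‖x - X j‖) ^ (-b) ≤
        C * (radW lam κ ‖x - X i‖ * ∑ j, (1 + ‖x - X j‖) ^ (-b)) := by
  obtain ⟨C, hC, h⟩ := lat_sum_ne (n := n) hkn b hb
  refine ⟨1 + C * 2 ^ b, by positivity, ?_⟩
  intro m d lam hl hd X hX x i hi
  have hl0 : 0 < lam := by linarith
  have hd0 : 0 < d := by linarith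
  have hb0 : 0 < b := by linarith
  have hgi := radW_nonneg (κ := κ) hl0 (norm_nonneg (x - X i))
  have hS : 0 ≤ ∑ j, (1 + ‖x - X j‖) ^ (-b) := Finset.sum_nonneg fun j _ => by positivity
  rcases le_total lam (1 + ‖x - X i‖) with hc | hc
  · have e : radW lam κ ‖x - X i‖ = 1 := min_eq_right (Real.one_le_rpow ((one_le_div hl0).2 hc) hκ.le)
    rw [e, one_mul]
    calc _ ≤ ∑ j, (1 + ‖x - X j‖) ^ (-b) :=
          Finset.sum_le_sum fun j _ => mul_le_of_le_one_left (by positivity) radW_le_one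
      _ ≤ _ := le_mul_of_one_le_left hS (by
          have : 0 ≤ C * 2 ^ b := by positivity
          linarith)
  · have key := h m d hd0 X hX x i hi
    rw [← Finset.add_sum_erase _ _ (Finset.mem_univ i)] at key
    have hlow := radW_lower (κ := κ) (t := ‖x - X i‖) hl hd (norm_nonneg _) hκ hκb
    have h3 : d ^ (-(k:ℝ)) * (d + ‖x - X i‖) ^ ((k:ℝ) - b) ≤ 2 ^ b * (d + ‖x - X i‖) ^ (-b) := by
      calc _ ≤ d ^ (-(k:ℝ)) * d ^ (-(b - (k:ℝ))) := by
            rw [show (k:ℝ) - b = -(b - k) by ring]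
            refine mul_le_mul_of_nonneg_left ?_ (by positivity)
            exact rpow_anti hd0 (by linarith [norm_nonneg (x - X i)]) (by linarith)
        _ = d ^ (-b) := by rw [← Real.rpow_add hd0]; ring_nf
        _ ≤ _ := rpow_anti_scale (by positivity) (by norm_num) (by linarith) hb0.le
    have h4 : ∑ j ∈ Finset.univ.erase i, (1 + ‖x - X j‖) ^ (-b) ≤
        C * 2 ^ b * (radW lam κ ‖x - X i‖ * (1 + ‖x - X i‖) ^ (-b)) := by
      calc _ ≤ C * (d ^ (-(k:ℝ)) * (d + ‖x - X i‖) ^ ((k:ℝ) - b)) := by linarith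
        _ ≤ C * (2 ^ b * (d + ‖x - X i‖) ^ (-b)) := by gcongr
        _ ≤ C * (2 ^ b * (radW lam κ ‖x - X i‖ * (1 + ‖x - X i‖) ^ (-b))) := by gcongr
        _ = _ := by ring
    rw [← Finset.add_sum_erase _ _ (Finset.mem_univ i)]
    calc _ ≤ radW lam κ ‖x - X i‖ * (1 + ‖x - X i‖) ^ (-b) +
          ∑ j ∈ Finset.univ.erase i, (1 + ‖x - X j‖) ^ (-b) := by
          gcongr with j hj
          exact mul_le_of_le_one_left (by positivity) radW_le_one
      _ ≤ (1 + C * 2 ^ b) * (radW lam κ ‖x - X i‖ * (1 + ‖x - X i‖) ^ (-b)) := by linarith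
      _ ≤ _ := by
          gcongr
          exact Finset.single_le_sum (f := fun j => (1 + ‖x - X j‖) ^ (-b)) (fun j _ => by positivity) (Finset.mem_univ i)

lemma W_bound (s C₀ C₁ C₂ : ℝ) (hN : 0 < (n:ℝ) - 2 * s) (hs : 0 < s) (hkn : k ≤ n)
    (hkN : (k:ℝ) < (n:ℝ) - 2 * s)
    (hC₀ : 0 < C₀) (hC₁ : 0 < C₁) (hC₁₂ : C₁ < C₂) :
    ∃ A : ℝ, 0 < A ∧ ∀ (m : ℕ) (d : ℝ), 0 < d →
    ∀ X : Fin ((m + 1) ^ k) → EuclideanSpace ℝ (Fin n), latticeEnum n k m d X →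
    ∀ P : Fin ((m + 1) ^ k) → EuclideanSpace ℝ (Fin n), (∀ i, ‖P i - X i‖ < 1 / 2) →
    ∀ Λ : Fin ((m + 1) ^ k) → ℝ, (∀ i, Λ i ∈ Set.Icc C₁ C₂) →
    ∀ (y : EuclideanSpace ℝ (Fin n)) (i : Fin ((m + 1) ^ k)), (∀ j, ‖y - X i‖ ≤ ‖y - X j‖) →
    (∑ i, C₀ * (Λ i / (1 + Λ i ^ 2 * ‖y - P i‖ ^ 2)) ^ (((n : ℝ) - 2 * s) / 2)) ^ (4 * s / ((n : ℝ) - 2 * s))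
      ≤ A * ((1 + ‖y - X i‖) ^ (-(4 * s)) + d ^ (-(4 * s * k / ((n : ℝ) - 2 * s))) *
        (d + ‖y - X i‖) ^ (-(4 * s - 4 * s * k / ((n : ℝ) - 2 * s)))) := by
  obtain ⟨C, hC, h⟩ := lat_sum_ne (n := n) hkn ((n:ℝ) - 2 * s) hkN
  set N := (n:ℝ) - 2 * s with hNdef
  set p := 4 * s / N with hp
  have hp0 : 0 < p := by positivity
  have hC₂ : 0 < C₂ := by linarith
  set K := 9 * C₂ / 2 + 2 / C₁ with hK
  have hK0 : 0 < K := by positivity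
  refine ⟨(C₀ * K ^ (N / 2)) ^ p * 2 ^ p * (1 + C ^ p), by positivity, ?_⟩
  intro m d hd X hX P hP Λ hΛ y i hi
  have hterm : ∀ j, C₀ * (Λ j / (1 + Λ j ^ 2 * ‖y - P j‖ ^ 2)) ^ (N / 2) ≤
      C₀ * K ^ (N / 2) * (1 + ‖y - X j‖) ^ (-N) := by
    intro j
    obtain ⟨hΛ1, hΛ2⟩ := hΛ j
    have hΛ0 : 0 < Λ j := by linarith
    have hPj := hP j
    have htri : ‖y - X j‖ ≤ ‖y - P j‖ + ‖P j - X j‖ := norm_sub_le_norm_sub_add_norm_sub _ _ _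
    set u := ‖y - P j‖ with hu
    have hu0 : 0 ≤ u := norm_nonneg _
    set v := ‖y - X j‖ with hv
    have hv0 : 0 ≤ v := norm_nonneg _
    have hv2 : (1 + v) ^ 2 ≤ 9 / 2 + 2 * u ^ 2 := by
      have : 1 + v ≤ 3 / 2 + u := by linarith
      nlinarith [sq_nonneg (3 / 2 - u)]
    have h1 : Λ j / (1 + Λ j ^ 2 * u ^ 2) ≤ K / (1 + v) ^ 2 := by
      rw [div_le_div_iff₀ (by positivity) (by positivity)]
      have h2 : Λ j ≤ (Λ j) ^ 2 / C₁ := by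
        rw [le_div_iff₀ hC₁]; nlinarith
      have h3 : 0 ≤ (9 * C₂ / 2) * (Λ j ^ 2 * u ^ 2) := by positivity
      have h4 : 0 ≤ 2 / C₁ := by positivity
      calc Λ j * (1 + v) ^ 2 ≤ Λ j * (9 / 2 + 2 * u ^ 2) := by gcongr
        _ = 9 / 2 * Λ j + 2 * u ^ 2 * Λ j := by ring
        _ ≤ 9 / 2 * C₂ + 2 * u ^ 2 * ((Λ j) ^ 2 / C₁) := by gcongr
        _ ≤ (9 * C₂ / 2 + 2 / C₁) * (1 + Λ j ^ 2 * u ^ 2) := by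
          have : 2 * u ^ 2 * ((Λ j) ^ 2 / C₁) = 2 / C₁ * (Λ j ^ 2 * u ^ 2) := by ring
          rw [this]; linarith
    have h5 : (K / (1 + v) ^ 2) ^ (N / 2) = K ^ (N / 2) * (1 + v) ^ (-N) := by
      rw [Real.div_rpow hK0.le (by positivity), Real.rpow_neg (by positivity), div_eq_mul_inv,
        ← Real.rpow_natCast, ← Real.rpow_mul (by positivity)]
      congr 3; push_cast; ring
    rw [mul_assoc, ← h5]
    gcongr
  have hW : ∑ j, C₀ * (Λ j / (1 + Λ j ^ 2 * ‖y - P j‖ ^ 2)) ^ (N / 2) ≤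
      C₀ * K ^ (N / 2) * ((1 + ‖y - X i‖) ^ (-N) + C * (d ^ (-(k:ℝ)) * (d + ‖y - X i‖) ^ ((k:ℝ) - N))) := by
    refine (Finset.sum_le_sum fun j _ => hterm j).trans ?_
    rw [← Finset.mul_sum]
    gcongr
    exact h m d hd X hX y i hi
  have hW0 : 0 ≤ ∑ j, C₀ * (Λ j / (1 + Λ j ^ 2 * ‖y - P j‖ ^ 2)) ^ (N / 2) := by
    refine Finset.sum_nonneg fun j _ => ?_
    have : 0 < Λ j := lt_of_lt_of_le hC₁ (hΛ j).1
    positivity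
  set r := ‖y - X i‖ with hr
  have hr0 : 0 ≤ r := norm_nonneg _
  have hdr : 0 < d + r := by positivity
  have hpN : N * p = 4 * s := by rw [hp]; field_simp
  have e1 : ((1 + r) ^ (-N)) ^ p = (1 + r) ^ (-(4 * s)) := by
    rw [← Real.rpow_mul (by positivity)]; congr 1; rw [← hpN]; ring
  have e2 : (d ^ (-(k:ℝ))) ^ p = d ^ (-(4 * s * k / N)) := by
    rw [← Real.rpow_mul hd.le]; congr 1; rw [hp]; ring
  have e3 : ((d + r) ^ ((k:ℝ) - N)) ^ p = (d + r) ^ (-(4 * s - 4 * s * k / N)) := by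
    rw [← Real.rpow_mul hdr.le]; congr 1
    rw [sub_mul, hpN, hp]; ring
  calc _ ≤ (C₀ * K ^ (N / 2) * ((1 + r) ^ (-N) + C * (d ^ (-(k:ℝ)) * (d + r) ^ ((k:ℝ) - N)))) ^ p := by
        gcongr
    _ = (C₀ * K ^ (N / 2)) ^ p * ((1 + r) ^ (-N) + C * (d ^ (-(k:ℝ)) * (d + r) ^ ((k:ℝ) - N))) ^ p :=
        Real.mul_rpow (by positivity) (by positivity)
    _ ≤ (C₀ * K ^ (N / 2)) ^ p * (2 ^ p * (((1 + r) ^ (-N)) ^ p + (C * (d ^ (-(k:ℝ)) * (d + r) ^ ((k:ℝ) - N))) ^ p)) := by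
        gcongr
        exact add_rpow_le_two (by positivity) (by positivity) hp0.le
    _ = (C₀ * K ^ (N / 2)) ^ p * 2 ^ p * ((1 + r) ^ (-(4 * s)) +
        C ^ p * (d ^ (-(4 * s * k / N)) * (d + r) ^ (-(4 * s - 4 * s * k / N)))) := by
        rw [Real.mul_rpow hC.le (by positivity), Real.mul_rpow (x := d ^ (-(k:ℝ))) (y := (d + r) ^ ((k:ℝ) - N)) (by positivity) (by positivity), e1, e2, e3]
        ring
    _ ≤ (C₀ * K ^ (N / 2)) ^ p * 2 ^ p * ((1 + C ^ p) * ((1 + r) ^ (-(4 * s)) +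
        (d ^ (-(4 * s * k / N)) * (d + r) ^ (-(4 * s - 4 * s * k / N))))) := by
        have q1 : 0 ≤ (1 + r) ^ (-(4 * s)) := by positivity
        have q2 : 0 ≤ d ^ (-(4 * s * k / N)) * (d + r) ^ (-(4 * s - 4 * s * k / N)) := by positivity
        have q3 : 0 ≤ C ^ p := by positivity
        gcongr
        nlinarith [mul_nonneg q3 q1]
    _ = _ := by ring

end assembly


section final
variable {n k : ℕ}

lemma radW_mono {lam κ t u : ℝ} (hl : 0 < lam) (ht : 0 ≤ t) (h : t ≤ u) (hκ : 0 ≤ κ) :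
    radW lam κ t ≤ radW lam κ u := by
  unfold radW
  gcongr

lemma claim_two (s σ a κ : ℝ) (hs : 0 < s) (hσ : 0 < σ) (ha : 0 < a) (hκ : 0 < κ)
    (d lam r q u v : ℝ) (hl : 1 ≤ lam) (hd : lam ≤ d) (hr : 0 ≤ r) (hrq : r ≤ q)
    (hu : 0 ≤ u) (hv : 0 ≤ v) (hur : u ≤ r) (hvr : v ≤ r) :
    (d + r) ^ (-(2 * s + σ)) * (radW lam κ r * (1 + q) ^ (-a)) ≤
      (2 ^ (2 * s + σ) + 2 ^ a) * ((1 + q) ^ (-(2 * s + σ)) * (radW lam κ q * (1 + q) ^ (-a)) +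
        ((d + u) ^ (-(s + σ / 2)) * (d + v) ^ (-(s + σ / 2))) * (d + q) ^ (-a)) := by
  have hl0 : 0 < lam := by linarith
  have hd1 : 1 ≤ d := by linarith
  have hq : 0 ≤ q := by linarith
  have hd0 : 0 < d := by linarith
  have g1 := radW_mono hl0 hr hrq hκ.le
  have g0 := radW_nonneg (κ := κ) hl0 hr
  have g0' := radW_nonneg (κ := κ) hl0 hq
  have p1 : 0 ≤ (1 + q) ^ (-(2 * s + σ)) * (radW lam κ q * (1 + q) ^ (-a)) := by positivity
  have p2 : 0 ≤ ((d + u) ^ (-(s + σ / 2)) * (d + v) ^ (-(s + σ / 2))) * (d + q) ^ (-a) := by positivity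
  have c1 : (0:ℝ) ≤ 2 ^ (2 * s + σ) := by positivity
  have c2 : (0:ℝ) ≤ 2 ^ a := by positivity
  rcases lt_or_ge q d with h | h
  · have z : (d + r) ^ (-(2 * s + σ)) ≤ 2 ^ (2 * s + σ) * (1 + q) ^ (-(2 * s + σ)) :=
      rpow_anti_scale (by positivity) (by norm_num) (by linarith) (by linarith)
    calc _ ≤ (2 ^ (2 * s + σ) * (1 + q) ^ (-(2 * s + σ))) * (radW lam κ q * (1 + q) ^ (-a)) := by gcongr
      _ = 2 ^ (2 * s + σ) * ((1 + q) ^ (-(2 * s + σ)) * (radW lam κ q * (1 + q) ^ (-a))) := by ring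
      _ ≤ _ := by
        have := mul_nonneg c2 p1
        have := mul_nonneg c1 p2
        have := mul_nonneg c2 p2
        linarith
  · have z : (d + r) ^ (-(2 * s + σ)) ≤ (d + u) ^ (-(s + σ / 2)) * (d + v) ^ (-(s + σ / 2)) := by
      rw [show -(2 * s + σ) = -(s + σ / 2) + -(s + σ / 2) by ring, Real.rpow_add (by positivity)]
      exact mul_le_mul (rpow_anti (by positivity) (by linarith) (by linarith))
        (rpow_anti (by positivity) (by linarith) (by linarith)) (by positivity) (by positivity)
    have y1 : (1 + q) ^ (-a) ≤ 2 ^ a * (d + q) ^ (-a) :=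
      rpow_anti_scale (by positivity) (by norm_num) (by linarith) ha.le
    calc _ ≤ ((d + u) ^ (-(s + σ / 2)) * (d + v) ^ (-(s + σ / 2))) * (1 * (2 ^ a * (d + q) ^ (-a))) := by
          gcongr
          exact radW_le_one
      _ = 2 ^ a * (((d + u) ^ (-(s + σ / 2)) * (d + v) ^ (-(s + σ / 2))) * (d + q) ^ (-a)) := by ring
      _ ≤ _ := by
        have := mul_nonneg c2 p1
        have := mul_nonneg c1 p2
        have := mul_nonneg c1 p1
        linarith

lemma majorant (hkn : k ≤ n) (s σ a κ δ : ℝ) (hs : 0 < s) (hσ : 0 < σ) (hσs : σ ≤ s) (hδ0 : 0 ≤ δ)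
    (hδ : δ + σ ≤ 2 * s) (hka : (k:ℝ) < a) (hκ : 0 < κ) :
    ∃ C : ℝ, 0 < C ∧ ∀ (m : ℕ) (d lam : ℝ), 1 ≤ lam → lam ≤ d →
    ∀ X : Fin ((m + 1) ^ k) → EuclideanSpace ℝ (Fin n), latticeEnum n k m d X →
    ∀ (i0 j0 : Fin n), (∀ h, X h i0 = 0) → (∀ h, X h j0 = 0) →
    ∀ (y : EuclideanSpace ℝ (Fin n)) (i : Fin ((m + 1) ^ k)), (∀ j, ‖y - X i‖ ≤ ‖y - X j‖) →
    ((1 + ‖y - X i‖) ^ (-(4 * s)) + d ^ (-δ) * (d + ‖y - X i‖) ^ (-(4 * s - δ))) *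
      (radW lam κ ‖y - X i‖ * ∑ h, (1 + ‖y - X h‖) ^ (-a)) ≤
    ∑ h, (C * ((1 + ‖y - X h‖) ^ (-(2 * s + σ)) * (radW lam κ ‖y - X h‖ * (1 + ‖y - X h‖) ^ (-(a + σ)))) +
      C * d ^ (-δ) * ((1 + ‖y - X h‖) ^ (-(2 * s + σ)) * (radW lam κ ‖y - X h‖ * (1 + ‖y - X h‖) ^ (-a)) +
        ((d + |y i0|) ^ (-(s + σ / 2)) * (d + |y j0|) ^ (-(s + σ / 2))) * (d + ‖y - X h‖) ^ (-a))) := by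
  obtain ⟨C, hC, hlat⟩ := lat_sum_ne (n := n) hkn a hka
  have hk0 : (0:ℝ) ≤ k := by positivity
  have ha0 : 0 < a := by linarith
  set B := (2 ^ (2 * s + σ) + 2 ^ a : ℝ) with hB
  have hB0 : 0 < B := by positivity
  set D := (1 + C * 2 ^ a) + (1 + 2 ^ (4 * s)) * B with hD
  have hD0 : 0 < D := by positivity
  refine ⟨D, hD0, ?_⟩
  intro m d lam hl hd X hX i0 j0 hi0 hj0 y i hi
  have hl0 : 0 < lam := by linarith
  have hd1 : 1 ≤ d := by linarith
  have hd0 : 0 < d := by linarith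
  set r := ‖y - X i‖ with hr
  have hr0 : 0 ≤ r := norm_nonneg _
  have hcoord : ∀ j : Fin n, (∀ h, X h j = 0) → |y j| ≤ r := by
    intro j hj
    have := PiLp.norm_apply_le (y - X i) j
    simpa [hj i] using this
  have hu := hcoord i0 hi0
  have hv := hcoord j0 hj0
  set g := radW lam κ r with hg
  have hg0 : 0 ≤ g := radW_nonneg hl0 hr0
  set S := ∑ h, (1 + ‖y - X h‖) ^ (-a) with hS
  have hS0 : 0 ≤ S := Finset.sum_nonneg fun _ _ => by positivity
  set T1 : Fin ((m + 1) ^ k) → ℝ := fun h =>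
    (1 + ‖y - X h‖) ^ (-(2 * s + σ)) * (radW lam κ ‖y - X h‖ * (1 + ‖y - X h‖) ^ (-(a + σ))) with hT1
  set T2 : Fin ((m + 1) ^ k) → ℝ := fun h =>
    (1 + ‖y - X h‖) ^ (-(2 * s + σ)) * (radW lam κ ‖y - X h‖ * (1 + ‖y - X h‖) ^ (-a)) +
        ((d + |y i0|) ^ (-(s + σ / 2)) * (d + |y j0|) ^ (-(s + σ / 2))) * (d + ‖y - X h‖) ^ (-a) with hT2
  have hT1n : ∀ h, 0 ≤ T1 h := fun h => by
    have := radW_nonneg (κ := κ) hl0 (norm_nonneg (y - X h))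
    simp only [hT1]; positivity
  have hT2n : ∀ h, 0 ≤ T2 h := fun h => by
    have := radW_nonneg (κ := κ) hl0 (norm_nonneg (y - X h))
    simp only [hT2]; positivity
  have hsum : ∑ h, (D * T1 h + D * d ^ (-δ) * T2 h) = D * ∑ h, T1 h + D * (d ^ (-δ) * ∑ h, T2 h) := by
    rw [Finset.sum_add_distrib, Finset.mul_sum, Finset.mul_sum, Finset.mul_sum]
    simp only [mul_assoc]
  have hsm1 : 0 ≤ ∑ h, T1 h := Finset.sum_nonneg fun h _ => hT1n h
  have hsm2 : 0 ≤ ∑ h, T2 h := Finset.sum_nonneg fun h _ => hT2n h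
  have hdδ : 0 ≤ d ^ (-δ) := by positivity
  change _ ≤ ∑ h, (D * T1 h + D * d ^ (-δ) * T2 h)
  rw [hsum]
  -- the second claim summed
  have c2 : (d + r) ^ (-(2 * s + σ)) * (g * S) ≤ B * ∑ h, T2 h := by
    rw [hS, Finset.mul_sum, Finset.mul_sum, Finset.mul_sum]
    refine Finset.sum_le_sum fun h _ => ?_
    exact claim_two s σ a κ hs hσ ha0 hκ d lam r ‖y - X h‖ |y i0| |y j0| hl hd hr0 (hi h)
      (abs_nonneg _) (abs_nonneg _) hu hv
  have key := hlat m d hd0 X hX y i hi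
  have hTi : T1 i ≤ ∑ h, T1 h := Finset.single_le_sum (fun h _ => hT1n h) (Finset.mem_univ i)
  have hT1i : T1 i = (1 + r) ^ (-(2 * s + σ)) * (g * (1 + r) ^ (-(a + σ))) := rfl
  rw [← hS, ← hr] at key
  generalize hQ1 : ∑ h, T1 h = Q1 at *
  generalize hQ2 : ∑ h, T2 h = Q2 at *
  generalize T1 i = t1i at *
  clear hlat hsum hT1n hT2n hcoord hi hi0 hj0 hX hQ1 hQ2 hT1 hT2
  clear_value S T1 T2
  clear hS
  clear_value g
  clear hg
  clear_value r
  clear hr T1 T2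
  have z1 : (d + r) ^ (-(4 * s - δ)) ≤ (d + r) ^ (-(2 * s + σ)) :=
    Real.rpow_le_rpow_of_exponent_le (by linarith) (by linarith)
  have hgS : 0 ≤ g * S := by positivity
  have second : d ^ (-δ) * (d + r) ^ (-(4 * s - δ)) * (g * S) ≤ B * (d ^ (-δ) * Q2) := by
    calc _ ≤ d ^ (-δ) * (d + r) ^ (-(2 * s + σ)) * (g * S) := by gcongr
      _ = d ^ (-δ) * ((d + r) ^ (-(2 * s + σ)) * (g * S)) := by ring
      _ ≤ d ^ (-δ) * (B * Q2) := by gcongr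
      _ = _ := by ring
  have first : (1 + r) ^ (-(4 * s)) * (g * S) ≤ (1 + C * 2 ^ a) * Q1 +
      2 ^ (4 * s) * B * (d ^ (-δ) * Q2) := by
    rcases le_total r d with hc | hc
    · have h3 : d ^ (-(k:ℝ)) * (d + r) ^ ((k:ℝ) - a) ≤ 2 ^ a * (1 + r) ^ (-a) := by
        calc _ ≤ d ^ (-(k:ℝ)) * d ^ (-(a - (k:ℝ))) := by
              rw [show (k:ℝ) - a = -(a - k) by ring]
              refine mul_le_mul_of_nonneg_left ?_ (by positivity)
              exact rpow_anti hd0 (by linarith) (by linarith)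
          _ = d ^ (-a) := by rw [← Real.rpow_add hd0]; ring_nf
          _ ≤ _ := rpow_anti_scale (by positivity) (by norm_num) (by linarith) ha0.le
      have hSle : S ≤ (1 + C * 2 ^ a) * (1 + r) ^ (-a) := by
        calc S ≤ (1 + r) ^ (-a) + C * (d ^ (-(k:ℝ)) * (d + r) ^ ((k:ℝ) - a)) := key
          _ ≤ (1 + r) ^ (-a) + C * (2 ^ a * (1 + r) ^ (-a)) := by gcongr
          _ = _ := by ring
      have e : (1 + r) ^ (-(4 * s)) * (1 + r) ^ (-a) ≤ (1 + r) ^ (-(2 * s + σ)) * (1 + r) ^ (-(a + σ)) := by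
        rw [← Real.rpow_add (by positivity), ← Real.rpow_add (by positivity)]
        exact Real.rpow_le_rpow_of_exponent_le (by linarith) (by linarith)
      calc _ ≤ (1 + r) ^ (-(4 * s)) * (g * ((1 + C * 2 ^ a) * (1 + r) ^ (-a))) := by gcongr
        _ = (1 + C * 2 ^ a) * g * ((1 + r) ^ (-(4 * s)) * (1 + r) ^ (-a)) := by ring
        _ ≤ (1 + C * 2 ^ a) * g * ((1 + r) ^ (-(2 * s + σ)) * (1 + r) ^ (-(a + σ))) := by gcongr
        _ = (1 + C * 2 ^ a) * t1i := by rw [hT1i]; ring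
        _ ≤ (1 + C * 2 ^ a) * Q1 := by gcongr
        _ ≤ _ := le_add_of_nonneg_right (by positivity)
    · have e : (1 + r) ^ (-(4 * s)) ≤ 2 ^ (4 * s) * (d ^ (-δ) * (d + r) ^ (-(2 * s + σ))) := by
        calc _ ≤ 2 ^ (4 * s) * (d + r) ^ (-(4 * s)) :=
              rpow_anti_scale (by positivity) (by norm_num) (by linarith) (by linarith)
          _ = 2 ^ (4 * s) * ((d + r) ^ (-δ) * (d + r) ^ (-(4 * s - δ))) := by
              rw [← Real.rpow_add (by positivity)]; ring_nf
          _ ≤ _ := by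
              refine mul_le_mul_of_nonneg_left (mul_le_mul ?_ z1 (by positivity) hdδ) (by positivity)
              exact rpow_anti hd0 (by linarith) hδ0
      calc _ ≤ 2 ^ (4 * s) * (d ^ (-δ) * (d + r) ^ (-(2 * s + σ))) * (g * S) := by gcongr
        _ = 2 ^ (4 * s) * d ^ (-δ) * ((d + r) ^ (-(2 * s + σ)) * (g * S)) := by ring
        _ ≤ 2 ^ (4 * s) * d ^ (-δ) * (B * Q2) := by gcongr
        _ = 2 ^ (4 * s) * B * (d ^ (-δ) * Q2) := by ring
        _ ≤ _ := le_add_of_nonneg_left (by positivity)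
  have hE : 0 ≤ d ^ (-δ) * Q2 := by positivity
  have t1 : 0 ≤ (1 + 2 ^ (4 * s)) * B * Q1 := by positivity
  have t2 : 0 ≤ (1 + C * 2 ^ a) * (d ^ (-δ) * Q2) := by positivity
  rw [add_mul, hD]
  linarith

end final


section final
variable {n k : ℕ}

lemma term_int (s σ a κ : ℝ) (hs : 0 < s) (hσ : 0 < σ) (hs1 : 2 * s + σ < 2) (hκ : 0 < κ) (hκa : κ < a)
    (haN : a + σ + σ < (n:ℝ) - 2 * s) (i0 j0 : Fin n) (hij : i0 ≠ j0) :
    ∃ C : ℝ, 0 < C ∧ ∀ (x X : EuclideanSpace ℝ (Fin n)) (d lam c₁ c₂ : ℝ), 1 ≤ lam → lam ≤ d →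
      0 ≤ c₁ → 0 ≤ c₂ →
      ∫⁻ y, ENNReal.ofReal (‖x - y‖ ^ (-((n:ℝ) - 2 * s)) *
        (c₁ * ((1 + ‖y - X‖) ^ (-(2 * s + σ)) * (radW lam κ ‖y - X‖ * (1 + ‖y - X‖) ^ (-(a + σ)))) +
        c₂ * ((1 + ‖y - X‖) ^ (-(2 * s + σ)) * (radW lam κ ‖y - X‖ * (1 + ‖y - X‖) ^ (-a)) +
        ((d + |y i0|) ^ (-(s + σ / 2)) * (d + |y j0|) ^ (-(s + σ / 2))) * (d + ‖y - X‖) ^ (-a)))) ≤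
      ENNReal.ofReal (C * c₁ * (radW lam κ ‖x - X‖ * (1 + ‖x - X‖) ^ (-(a + σ))) +
        C * c₂ * (radW lam κ ‖x - X‖ * (1 + ‖x - X‖) ^ (-a))) := by
  obtain ⟨C1, hC1, h1⟩ := conv_radW (n := n) s σ (a + σ) κ hs hσ hκ (by linarith) (by linarith)
  obtain ⟨C2, hC2, h2⟩ := conv_radW (n := n) s σ a κ hs hσ hκ hκa (by linarith)
  obtain ⟨C3, hC3, h3⟩ := conv_plane (n := n) s σ a hs hσ hs1 (by linarith) (by linarith) i0 j0 hij
  refine ⟨C1 + C2 + C3, by positivity, ?_⟩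
  intro x X d lam c₁ c₂ hl hd hc₁ hc₂
  have hl0 : 0 < lam := by linarith
  have hd0 : 0 < d := by linarith
  have hgn : ∀ y : EuclideanSpace ℝ (Fin n), 0 ≤ radW lam κ ‖y - X‖ := fun y =>
    radW_nonneg hl0 (norm_nonneg _)
  set f1 : EuclideanSpace ℝ (Fin n) → ℝ := fun y => ‖x - y‖ ^ (-((n:ℝ) - 2 * s)) *
    ((1 + ‖y - X‖) ^ (-(2 * s + σ)) * (radW lam κ ‖y - X‖ * (1 + ‖y - X‖) ^ (-(a + σ)))) with hf1
  set f2 : EuclideanSpace ℝ (Fin n) → ℝ := fun y => ‖x - y‖ ^ (-((n:ℝ) - 2 * s)) *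
    ((1 + ‖y - X‖) ^ (-(2 * s + σ)) * (radW lam κ ‖y - X‖ * (1 + ‖y - X‖) ^ (-a))) with hf2
  set f3 : EuclideanSpace ℝ (Fin n) → ℝ := fun y => ‖x - y‖ ^ (-((n:ℝ) - 2 * s)) *
    (((d + |y i0|) ^ (-(s + σ / 2)) * (d + |y j0|) ^ (-(s + σ / 2))) * (d + ‖y - X‖) ^ (-a)) with hf3
  have n1 : ∀ y, 0 ≤ f1 y := fun y => by have := hgn y; simp only [hf1]; positivity
  have n2 : ∀ y, 0 ≤ f2 y := fun y => by have := hgn y; simp only [hf2]; positivity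
  have n3 : ∀ y, 0 ≤ f3 y := fun y => by simp only [hf3]; positivity
  have m1 : Measurable f1 := by simp only [hf1, radW]; fun_prop
  have m2 : Measurable f2 := by simp only [hf2, radW]; fun_prop
  have hR1 := h1 lam x X hl
  have hR2 := h2 lam x X hl
  have hR3 := h3 x X d (by linarith)
  have hlow := radW_lower (κ := κ) (t := ‖x - X‖) (b := a) hl hd (norm_nonneg _) hκ hκa.le
  set R1 := radW lam κ ‖x - X‖ * (1 + ‖x - X‖) ^ (-(a + σ)) with hR1d
  set R2 := radW lam κ ‖x - X‖ * (1 + ‖x - X‖) ^ (-a) with hR2d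
  have r1 : 0 ≤ R1 := by have := hgn x; positivity
  have r2 : 0 ≤ R2 := by have := hgn x; positivity
  calc _ = ∫⁻ y, (ENNReal.ofReal c₁ * ENNReal.ofReal (f1 y) +
        (ENNReal.ofReal c₂ * ENNReal.ofReal (f2 y) + ENNReal.ofReal c₂ * ENNReal.ofReal (f3 y))) := by
        refine lintegral_congr fun y => ?_
        rw [← ENNReal.ofReal_mul hc₁, ← ENNReal.ofReal_mul hc₂, ← ENNReal.ofReal_mul hc₂,
          ← ENNReal.ofReal_add (mul_nonneg hc₂ (n2 y)) (mul_nonneg hc₂ (n3 y)),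
          ← ENNReal.ofReal_add (mul_nonneg hc₁ (n1 y))
            (add_nonneg (mul_nonneg hc₂ (n2 y)) (mul_nonneg hc₂ (n3 y)))]
        congr 1
        simp only [hf1, hf2, hf3]; ring
    _ = ENNReal.ofReal c₁ * (∫⁻ y, ENNReal.ofReal (f1 y)) +
        (ENNReal.ofReal c₂ * (∫⁻ y, ENNReal.ofReal (f2 y)) + ENNReal.ofReal c₂ * (∫⁻ y, ENNReal.ofReal (f3 y))) := by
        rw [lintegral_add_left (by fun_prop), lintegral_add_left (by fun_prop),
          lintegral_const_mul' _ _ ENNReal.ofReal_ne_top, lintegral_const_mul' _ _ ENNReal.ofReal_ne_top,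
          lintegral_const_mul' _ _ ENNReal.ofReal_ne_top]
    _ ≤ ENNReal.ofReal c₁ * ENNReal.ofReal (C1 * R1) +
        (ENNReal.ofReal c₂ * ENNReal.ofReal (C2 * R2) + ENNReal.ofReal c₂ * ENNReal.ofReal (C3 * R2)) := by
        have hR3' : (∫⁻ y, ENNReal.ofReal (f3 y)) ≤ ENNReal.ofReal (C3 * R2) :=
          hR3.trans (ENNReal.ofReal_le_ofReal (by gcongr))
        gcongr
    _ ≤ _ := by
        rw [← ENNReal.ofReal_mul hc₁, ← ENNReal.ofReal_mul hc₂, ← ENNReal.ofReal_mul hc₂,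
          ← ENNReal.ofReal_add (by positivity) (by positivity),
          ← ENNReal.ofReal_add (by positivity) (by positivity)]
        apply ENNReal.ofReal_le_ofReal
        have q1 : 0 ≤ C2 * c₁ * R1 := by positivity
        have q2 : 0 ≤ C3 * c₁ * R1 := by positivity
        have q3 : 0 ≤ C1 * c₂ * R2 := by positivity
        linarith

set_option maxHeartbeats 2000000 in
lemma final_bound (s τ C₀ C₁ C₂ : ℝ) (hs0 : 0 < s) (hs1 : s < 1)
    (hk1 : 1 ≤ k) (hk2 : (k : ℝ) < ((n : ℝ) - 2 * s) / 2)
    (hτ1 : (k : ℝ) < τ) (hτ2 : τ < ((n : ℝ) - 2 * s) / 2)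
    (hC₀ : 0 < C₀) (hC₁ : 0 < C₁) (hC₁₂ : C₁ < C₂) :
    ∃ θ > (0 : ℝ), ∃ C > (0 : ℝ), ∀ (m : ℕ) (lam d : ℝ), 1 ≤ lam → lam ≤ d →
      ∀ X : Fin ((m + 1) ^ k) → EuclideanSpace ℝ (Fin n), latticeEnum n k m d X →
      ∀ P : Fin ((m + 1) ^ k) → EuclideanSpace ℝ (Fin n), (∀ i, ‖P i - X i‖ < 1 / 2) →
      ∀ Λ : Fin ((m + 1) ^ k) → ℝ, (∀ i, Λ i ∈ Set.Icc C₁ C₂) →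
      ∀ γ W : EuclideanSpace ℝ (Fin n) → ℝ,
      (∀ y, γ y = min (⨅ i, ((1 + ‖y - X i‖) / lam) ^ (τ - s)) 1) →
      (∀ y, W y = ∑ i, C₀ * (Λ i / (1 + Λ i ^ 2 * ‖y - P i‖ ^ 2)) ^ (((n : ℝ) - 2 * s) / 2)) →
      ∀ x : EuclideanSpace ℝ (Fin n),
        (∫ y : EuclideanSpace ℝ (Fin n),
            ‖x - y‖ ^ (-((n : ℝ) - 2 * s)) * W y ^ (4 * s / ((n : ℝ) - 2 * s)) *
              (γ y * ∑ h, (1 + ‖y - X h‖) ^ (-(((n : ℝ) - 2 * s) / 2 + τ)))) ≤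
          C * (γ x * ∑ h, (1 + ‖x - X h‖) ^ (-(((n : ℝ) - 2 * s) / 2 + τ + θ))) +
            C * d ^ (-(4 * s * k / ((n : ℝ) - 2 * s))) *
              (γ x * ∑ h, (1 + ‖x - X h‖) ^ (-(((n : ℝ) - 2 * s) / 2 + τ))) := by
  have hkR : (1:ℝ) ≤ k := by exact_mod_cast hk1
  set N := (n:ℝ) - 2 * s with hN
  set a := N / 2 + τ with ha
  set κ := τ - s with hκd
  set δ := 4 * s * k / N with hδd
  have hN0 : 0 < N := by linarith
  have hκ : 0 < κ := by linarith
  have hδ0 : 0 ≤ δ := by positivity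
  have hδ2 : δ < 2 * s := by
    rw [hδd, div_lt_iff₀ hN0]; nlinarith
  have haN : a < N := by linarith
  have hknat : k + 2 ≤ n := by
    have : (2 * k : ℝ) < n := by linarith
    have h2 : 2 * k < n := by exact_mod_cast this
    omega
  have hkn : k ≤ n := by omega
  let i0 : Fin n := ⟨n - 1, by omega⟩
  let j0 : Fin n := ⟨n - 2, by omega⟩
  have hij : i0 ≠ j0 := by
    intro h
    have : n - 1 = n - 2 := congrArg Fin.val h
    omega
  obtain ⟨σ, hσ, hσ1, hσ2, hσ3, hσ4⟩ : ∃ σ : ℝ, 0 < σ ∧ σ ≤ s ∧ δ + σ ≤ 2 * s ∧ 2 * s + σ < 2 ∧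
      a + σ + σ < N := by
    have q1 : 0 < 2 * s - δ := by linarith
    have q2 : 0 < 1 - s := by linarith
    have q3 : 0 < (N - a) / 4 := by linarith
    refine ⟨min (min s (2 * s - δ)) (min (1 - s) ((N - a) / 4)), by positivity, ?_, ?_, ?_, ?_⟩
    · exact (min_le_left _ _).trans (min_le_left _ _)
    · have := (min_le_left (min s (2 * s - δ)) (min (1 - s) ((N - a) / 4))).trans (min_le_right _ _)
      linarith
    · have := (min_le_right (min s (2 * s - δ)) (min (1 - s) ((N - a) / 4))).trans (min_le_left _ _)
      linarith
    · have := (min_le_right (min s (2 * s - δ)) (min (1 - s) ((N - a) / 4))).trans (min_le_right _ _)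
      linarith
  obtain ⟨A, hA, hW⟩ := W_bound (n := n) (k := k) s C₀ C₁ C₂ hN0 hs0 hkn (by linarith) hC₀ hC₁ hC₁₂
  obtain ⟨M, hM, hmaj⟩ := majorant (n := n) (k := k) hkn s σ a κ δ hs0 hσ hσ1 hδ0 hσ2 (by linarith) hκ
  obtain ⟨T, hT, hterm⟩ := term_int (n := n) s σ a κ hs0 hσ hσ3 hκ (by linarith) hσ4 i0 j0 hij
  obtain ⟨S1, hS1, hsum1⟩ := sum_radW (n := n) (k := k) hkn (a + σ) κ (by linarith) hκ (by linarith)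
  obtain ⟨S2, hS2, hsum2⟩ := sum_radW (n := n) (k := k) hkn a κ (by linarith) hκ (by linarith)
  set Ct := T * (A * M) * (S1 + S2) with hCt
  have hCt0 : 0 < Ct := by positivity
  refine ⟨σ, hσ, Ct, hCt0, ?_⟩
  intro m lam d hl hd X hX P hP Λ hΛ γ W hγ hWd x
  have hl0 : 0 < lam := by linarith
  have hd0 : 0 < d := by linarith
  have hdδ : 0 ≤ d ^ (-δ) := by positivity
  haveI : Nonempty (Fin ((m + 1) ^ k)) := ⟨⟨0, by positivity⟩⟩
  have hzero : ∀ j : Fin n, k ≤ (j:ℕ) → ∀ h, X h j = 0 := by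
    intro j hj h
    obtain ⟨q, _, hq2, hq3⟩ := hX.2.1 h
    rw [hq3 j, hq2 j hj]; simp
  have hi0 := hzero i0 (by show k ≤ n - 1; omega)
  have hj0 := hzero j0 (by show k ≤ n - 2; omega)
  have hnear : ∀ y : EuclideanSpace ℝ (Fin n), ∃ i, ∀ j, ‖y - X i‖ ≤ ‖y - X j‖ := fun y =>
    Finite.exists_min fun j => ‖y - X j‖
  have hγe : ∀ (y : EuclideanSpace ℝ (Fin n)) i, (∀ j, ‖y - X i‖ ≤ ‖y - X j‖) → γ y = radW lam κ ‖y - X i‖ := by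
    intro y i hi
    rw [hγ y, radW]
    congr 1
    apply le_antisymm
    · exact ciInf_le (Set.finite_range _).bddBelow i
    · refine le_ciInf fun j => ?_
      have := hi j
      gcongr
  have hγ0 : ∀ y, 0 ≤ γ y := by
    intro y
    obtain ⟨i, hi⟩ := hnear y
    rw [hγe y i hi]; exact radW_nonneg hl0 (norm_nonneg _)
  have hW0 : ∀ y, 0 ≤ W y := by
    intro y
    rw [hWd y]
    refine Finset.sum_nonneg fun j _ => ?_
    have : 0 < Λ j := lt_of_lt_of_le hC₁ (hΛ j).1
    positivity
  have hSn : ∀ (b : ℝ) (y : EuclideanSpace ℝ (Fin n)), 0 ≤ ∑ h, (1 + ‖y - X h‖) ^ (-b) := fun b y =>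
    Finset.sum_nonneg fun _ _ => by positivity
  have hgx := hγ0 x
  have hR0 : 0 ≤ Ct * (γ x * ∑ h, (1 + ‖x - X h‖) ^ (-(a + σ))) + Ct * d ^ (-δ) *
              (γ x * ∑ h, (1 + ‖x - X h‖) ^ (-a)) := by
    have := hSn (a + σ) x
    have := hSn a x
    positivity
  have hF0 : ∀ y, 0 ≤ ‖x - y‖ ^ (-N) * W y ^ (4 * s / N) * (γ y * ∑ h, (1 + ‖y - X h‖) ^ (-a)) := by
    intro y
    have := hSn a y
    have := hγ0 y
    have := hW0 y
    positivity
  by_cases hInt : Integrable (fun y => ‖x - y‖ ^ (-N) * W y ^ (4 * s / N) *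
      (γ y * ∑ h, (1 + ‖y - X h‖) ^ (-a)))
  swap
  · rw [integral_undef hInt]; exact hR0
  rw [integral_eq_lintegral_of_nonneg_ae (Filter.Eventually.of_forall hF0) hInt.aestronglyMeasurable]
  apply ENNReal.toReal_le_of_le_ofReal hR0
  obtain ⟨i, hi⟩ := hnear x
  set G : Fin ((m + 1) ^ k) → EuclideanSpace ℝ (Fin n) → ℝ := fun h y =>
    ‖x - y‖ ^ (-N) *
        (A * M * ((1 + ‖y - X h‖) ^ (-(2 * s + σ)) * (radW lam κ ‖y - X h‖ * (1 + ‖y - X h‖) ^ (-(a + σ)))) +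
        A * M * d ^ (-δ) * ((1 + ‖y - X h‖) ^ (-(2 * s + σ)) * (radW lam κ ‖y - X h‖ * (1 + ‖y - X h‖) ^ (-a)) +
        ((d + |y i0|) ^ (-(s + σ / 2)) * (d + |y j0|) ^ (-(s + σ / 2))) * (d + ‖y - X h‖) ^ (-a))) with hG
  have hG0 : ∀ h y, 0 ≤ G h y := by
    intro h y
    have := radW_nonneg (κ := κ) hl0 (norm_nonneg (y - X h))
    simp only [hG]; positivity
  have hGm : ∀ h, Measurable (G h) := by
    intro h
    simp only [hG, radW]; fun_prop
  have hpt : ∀ y, ‖x - y‖ ^ (-N) * W y ^ (4 * s / N) * (γ y * ∑ h, (1 + ‖y - X h‖) ^ (-a)) ≤ ∑ h, G h y := by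
    intro y
    obtain ⟨j, hj⟩ := hnear y
    have w1 := hW m d hd0 X hX P hP Λ hΛ y j hj
    have w2 := hmaj m d lam hl hd X hX i0 j0 hi0 hj0 y j hj
    rw [← hWd y] at w1
    rw [← hγe y j hj] at w2
    have b1 := hSn a y
    have b2 := hγ0 y
    calc _ ≤ ‖x - y‖ ^ (-N) * (A * ((1 + ‖y - X j‖) ^ (-(4 * s)) + d ^ (-δ) *
        (d + ‖y - X j‖) ^ (-(4 * s - δ)))) * (γ y * ∑ h, (1 + ‖y - X h‖) ^ (-a)) := by gcongr
      _ = ‖x - y‖ ^ (-N) * (A * (((1 + ‖y - X j‖) ^ (-(4 * s)) + d ^ (-δ) *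
        (d + ‖y - X j‖) ^ (-(4 * s - δ))) * (γ y * ∑ h, (1 + ‖y - X h‖) ^ (-a)))) := by ring
      _ ≤ _ := mul_le_mul_of_nonneg_left (mul_le_mul_of_nonneg_left w2 hA.le) (by positivity)
      _ = _ := by
        rw [Finset.mul_sum, Finset.mul_sum]
        refine Finset.sum_congr rfl fun h _ => ?_
        simp only [hG]; ring
  have e1 := hsum1 m d lam hl hd X hX x i hi
  have e2 := hsum2 m d lam hl hd X hX x i hi
  rw [← hγe x i hi] at e1 e2
  calc _ ≤ ∫⁻ y, ∑ h, ENNReal.ofReal (G h y) := by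
        refine lintegral_mono fun y => ?_
        rw [← ENNReal.ofReal_sum_of_nonneg fun h _ => hG0 h y]
        exact ENNReal.ofReal_le_ofReal (hpt y)
    _ = ∑ h, ∫⁻ y, ENNReal.ofReal (G h y) :=
        lintegral_finsetSum _ fun h _ => (hGm h).ennreal_ofReal
    _ ≤ ∑ h, ENNReal.ofReal (T * (A * M) * (radW lam κ ‖x - X h‖ * (1 + ‖x - X h‖) ^ (-(a + σ))) +
        T * (A * M * d ^ (-δ)) * (radW lam κ ‖x - X h‖ * (1 + ‖x - X h‖) ^ (-a))) :=
        Finset.sum_le_sum fun h _ => hterm x (X h) d lam (A * M) (A * M * d ^ (-δ)) hl hd (by positivity) (by positivity)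
    _ ≤ _ := by
        have hg : ∀ h, 0 ≤ radW lam κ ‖x - X h‖ := fun h => radW_nonneg hl0 (norm_nonneg _)
        rw [← ENNReal.ofReal_sum_of_nonneg fun h _ => by have := hg h; positivity]
        apply ENNReal.ofReal_le_ofReal
        rw [Finset.sum_add_distrib, ← Finset.mul_sum, ← Finset.mul_sum]
        have b1 := mul_nonneg hgx (hSn a x)
        have b2 := mul_nonneg hgx (hSn (a + σ) x)
        set E1 := γ x * ∑ h, (1 + ‖x - X h‖) ^ (-(a + σ)) with hE1
        set E2 := γ x * ∑ h, (1 + ‖x - X h‖) ^ (-a) with hE2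
        refine add_le_add ?_ ?_
        · calc _ ≤ T * (A * M) * (S1 * E1) := by gcongr
            _ ≤ T * (A * M) * ((S1 + S2) * E1) := by gcongr; linarith
            _ = _ := by ring
        · calc _ ≤ T * (A * M * d ^ (-δ)) * (S2 * E2) := by gcongr
            _ ≤ T * (A * M * d ^ (-δ)) * ((S1 + S2) * E2) := by gcongr; linarith
            _ = _ := by ring

end final


end helpers

theorem stmt_7 (n k : ℕ) (s β τ C₀ C₁ C₂ : ℝ) (hn0 : 0 < n) (hs0 : 0 < s) (hs1 : s < 1)
    (hn : 2 * s + 2 < (n : ℝ)) (hk1 : 1 ≤ k) (hk2 : (k : ℝ) < ((n : ℝ) - 2 * s) / 2)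
    (hβ1 : (n : ℝ) - 2 * s < β) (hβ2 : β < (n : ℝ))
    (hτ1 : (k : ℝ) < τ) (hτ2 : τ < ((n : ℝ) - 2 * s) / 2)
    (hC₀ : 0 < C₀) (hC₁ : 0 < C₁) (hC₁₂ : C₁ < C₂) :
    ∃ θ > (0 : ℝ), ∃ C > (0 : ℝ), ∀ m l : ℕ, 1 ≤ m → 1 ≤ l →
      ∀ lam : ℝ, lam = (l : ℝ) ^ (((n : ℝ) - 2 * s) / (β - (n : ℝ) + 2 * s)) →
      ∀ X : Fin ((m + 1) ^ k) → EuclideanSpace ℝ (Fin n), latticeEnum n k m (lam * l) X →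
      ∀ P : Fin ((m + 1) ^ k) → EuclideanSpace ℝ (Fin n), (∀ i, ‖P i - X i‖ < 1 / 2) →
      ∀ Λ : Fin ((m + 1) ^ k) → ℝ, (∀ i, Λ i ∈ Set.Icc C₁ C₂) →
      ∀ γ W : EuclideanSpace ℝ (Fin n) → ℝ,
      (∀ y, γ y = min (⨅ i, ((1 + ‖y - X i‖) / lam) ^ (τ - s)) 1) →
      (∀ y, W y = ∑ i, C₀ * (Λ i / (1 + Λ i ^ 2 * ‖y - P i‖ ^ 2)) ^ (((n : ℝ) - 2 * s) / 2)) →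
      ∀ x : EuclideanSpace ℝ (Fin n),
        (∫ y : EuclideanSpace ℝ (Fin n),
            ‖x - y‖ ^ (-((n : ℝ) - 2 * s)) * W y ^ (4 * s / ((n : ℝ) - 2 * s)) *
              (γ y * ∑ h, (1 + ‖y - X h‖) ^ (-(((n : ℝ) - 2 * s) / 2 + τ)))) ≤
          C * (γ x * ∑ h, (1 + ‖x - X h‖) ^ (-(((n : ℝ) - 2 * s) / 2 + τ + θ))) +
            C * (lam * l) ^ (-(4 * s * k / ((n : ℝ) - 2 * s))) *
              (γ x * ∑ h, (1 + ‖x - X h‖) ^ (-(((n : ℝ) - 2 * s) / 2 + τ))) := by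
  obtain ⟨θ, hθ, C, hC, H⟩ := final_bound (n := n) (k := k) s τ C₀ C₁ C₂ hs0 hs1 hk1 hk2 hτ1 hτ2
    hC₀ hC₁ hC₁₂
  refine ⟨θ, hθ, C, hC, ?_⟩
  intro m l _ hl lam hlam X hX P hP Λ hΛ γ W hγ hW x
  have hl1 : (1:ℝ) ≤ l := by exact_mod_cast hl
  have hlam1 : 1 ≤ lam := by
    rw [hlam]
    refine Real.one_le_rpow hl1 (div_nonneg ?_ ?_) <;> linarith
  exact H m lam (lam * l) hlam1 (le_mul_of_one_le_right (by linarith) hl1) X hX P hP Λ hΛ γ W hγ hW x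
end
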